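/- Uniform Tits alternative: Let K be a field and Γ a finitely generated subgroup of GL_n(K) that is not virtually solvable. Then there exists N ∈ ℕ such that for every finite symmetric generating set Σ of Γ with 1 ∈ Σ, the ball Σ^N contains two independent elements. (Equivalently, the independence diameter d_Γ = sup over finite symmetric generating sets Σ with 1 ∈ Σ of the least n such that Σⁿ contains two independent elements is finite.) -/

import Mathlib

open Matrix Pointwise

section
open Matrix Pointwise
open Filter Topology

namespace UTA

section LimField
variable {k : Type*} [Field k]

def bddSub (U : Ultrafilter ℕ) (av : ℕ → AbsoluteValue k ℝ) : Subring (ℕ → k) where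
  carrier := {x | ∃ C : ℝ, ∀ᶠ i in (U : Filter ℕ), av i (x i) ≤ C}
  mul_mem' := by
    rintro a b ⟨C, hC⟩ ⟨D, hD⟩
    refine ⟨C * D, ?_⟩
    filter_upwards [hC, hD] with i h1 h2
    simp only [Pi.mul_apply, map_mul]
    exact mul_le_mul h1 h2 ((av i).nonneg _) (((av i).nonneg _).trans h1)
  one_mem' := ⟨1, by simp⟩
  add_mem' := by
    rintro a b ⟨C, hC⟩ ⟨D, hD⟩
    refine ⟨C + D, ?_⟩
    filter_upwards [hC, hD] with i h1 h2
    exact ((av i).add_le _ _).trans (add_le_add h1 h2)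
  zero_mem' := ⟨0, by simp⟩
  neg_mem' := by
    rintro a ⟨C, hC⟩
    exact ⟨C, by simpa using hC⟩

def infinI (U : Ultrafilter ℕ) (av : ℕ → AbsoluteValue k ℝ) : Ideal (bddSub U av) where
  carrier := {x | Tendsto (fun i => av i (x.1 i)) U (𝓝 0)}
  add_mem' := by
    intro a b ha hb
    have h := Filter.Tendsto.add ha hb
    rw [add_zero] at h
    exact squeeze_zero (fun i => (av i).nonneg _) (fun i => (av i).add_le _ _) h
  zero_mem' := by simp
  smul_mem' := by
    rintro ⟨c, C, hC⟩ ⟨x, _⟩ hx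
    have h := Filter.Tendsto.const_mul C hx
    rw [mul_zero] at h
    refine squeeze_zero' (Eventually.of_forall fun i => (av i).nonneg _) ?_ h
    filter_upwards [hC] with i h1
    simp only [smul_eq_mul, Subring.coe_mul, Pi.mul_apply, map_mul]
    exact mul_le_mul_of_nonneg_right h1 ((av i).nonneg _)

theorem tendsto_limUnder_of_bdd (U : Ultrafilter ℕ) (f : ℕ → ℝ) (C : ℝ)
    (h0 : ∀ i, 0 ≤ f i) (h : ∀ᶠ i in (U : Filter ℕ), f i ≤ C) :
    ∃ x, Tendsto f U (𝓝 x) := by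
  have hc : IsCompact (Set.Icc (0:ℝ) C) := isCompact_Icc
  obtain ⟨x, _, hx⟩ := hc.ultrafilter_le_nhds (U.map f) (by
    rw [le_principal_iff]
    show ∀ᶠ i in (U : Filter ℕ), f i ∈ Set.Icc (0:ℝ) C
    filter_upwards [h] with i hi using ⟨h0 i, hi⟩)
  exact ⟨x, hx⟩

theorem infinI_isMaximal (U : Ultrafilter ℕ) (av : ℕ → AbsoluteValue k ℝ) :
    (infinI U av).IsMaximal := by
  rw [Ideal.isMaximal_iff]
  constructor
  · intro h
    have h' : Tendsto (fun _ : ℕ => (1:ℝ)) U (𝓝 0) := by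
      have : Tendsto (fun i => av i ((1 : bddSub U av).1 i)) U (𝓝 0) := h
      simpa using this
    exact one_ne_zero (tendsto_nhds_unique tendsto_const_nhds h')
  · rintro J ⟨x, C, hC⟩ hJ hx hxJ
    obtain ⟨l, hl⟩ := tendsto_limUnder_of_bdd U (fun i => av i (x i)) C (fun i => (av i).nonneg _) hC
    have hl0 : l ≠ 0 := by
      rintro rfl
      exact hx hl
    have hlpos : 0 < l := lt_of_le_of_ne
      (ge_of_tendsto' hl (fun i => (av i).nonneg _)) (Ne.symm hl0)
    have hev : ∀ᶠ i in (U : Filter ℕ), l / 2 < av i (x i) :=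
      hl.eventually (lt_mem_nhds (by linarith))
    have hy : (fun i => (x i)⁻¹) ∈ bddSub U av := by
      refine ⟨(l/2)⁻¹, ?_⟩
      filter_upwards [hev] with i hi
      rw [map_inv₀]
      exact inv_anti₀ (by linarith) hi.le
    have h1 : (⟨fun i => (x i)⁻¹, hy⟩ : bddSub U av) * ⟨x, C, hC⟩ ∈ J := J.mul_mem_left _ hxJ
    have h2 : (1 : bddSub U av) - (⟨fun i => (x i)⁻¹, hy⟩ : bddSub U av) * ⟨x, C, hC⟩ ∈ J := by
      apply hJ
      show Tendsto _ _ _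
      refine tendsto_const_nhds.congr' ?_
      filter_upwards [hev] with i hi
      have : x i ≠ 0 := by
        intro h; rw [h, map_zero] at hi; linarith
      simp [this]
    simpa using J.add_mem h2 h1

def LimF (U : Ultrafilter ℕ) (av : ℕ → AbsoluteValue k ℝ) : Type _ := bddSub U av ⧸ infinI U av

noncomputable def limFieldAux (U : Ultrafilter ℕ) (av : ℕ → AbsoluteValue k ℝ) : Field (LimF U av) :=
  haveI := infinI_isMaximal U av
  Ideal.Quotient.field (infinI U av)

noncomputable instance (U : Ultrafilter ℕ) (av : ℕ → AbsoluteValue k ℝ) : Field (LimF U av) :=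
  limFieldAux U av

variable {U : Ultrafilter ℕ} {av : ℕ → AbsoluteValue k ℝ}

def IsLim (U : Ultrafilter ℕ) (av : ℕ → AbsoluteValue k ℝ) (f : ℕ → k) (x : LimF U av) : Prop :=
  ∃ h : f ∈ bddSub U av, (Ideal.Quotient.mk (infinI U av) ⟨f, h⟩ : LimF U av) = x

theorem IsLim.exists_lift (x : LimF U av) : ∃ f, IsLim U av f x := by
  obtain ⟨⟨f, h⟩, hf⟩ := Ideal.Quotient.mk_surjective x
  exact ⟨f, h, hf⟩

theorem IsLim.exists_lim {f : ℕ → k} {C : ℝ} (h : ∀ᶠ i in (U : Filter ℕ), av i (f i) ≤ C) :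
    ∃ x, IsLim U av f x := ⟨_, ⟨C, h⟩, rfl⟩

theorem IsLim.bdd {f : ℕ → k} {x : LimF U av} (h : IsLim U av f x) :
    ∃ C : ℝ, ∀ᶠ i in (U : Filter ℕ), av i (f i) ≤ C := h.1

theorem IsLim.unique {f : ℕ → k} {x y : LimF U av} (h : IsLim U av f x) (h' : IsLim U av f y) :
    x = y := by
  obtain ⟨_, rfl⟩ := h
  obtain ⟨_, rfl⟩ := h'
  rfl

theorem IsLim.add {f g : ℕ → k} {x y : LimF U av} (h : IsLim U av f x) (h' : IsLim U av g y) :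
    IsLim U av (fun i => f i + g i) (x + y) := by
  obtain ⟨h1, rfl⟩ := h
  obtain ⟨h2, rfl⟩ := h'
  exact ⟨(bddSub U av).add_mem h1 h2, rfl⟩

theorem IsLim.mul {f g : ℕ → k} {x y : LimF U av} (h : IsLim U av f x) (h' : IsLim U av g y) :
    IsLim U av (fun i => f i * g i) (x * y) := by
  obtain ⟨h1, rfl⟩ := h
  obtain ⟨h2, rfl⟩ := h'
  exact ⟨(bddSub U av).mul_mem h1 h2, rfl⟩

theorem IsLim.neg {f : ℕ → k} {x : LimF U av} (h : IsLim U av f x) :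
    IsLim U av (fun i => - f i) (-x) := by
  obtain ⟨h1, rfl⟩ := h
  exact ⟨(bddSub U av).neg_mem h1, rfl⟩

theorem IsLim.zero : IsLim U av (fun _ => 0) 0 := ⟨(bddSub U av).zero_mem, rfl⟩
theorem IsLim.one : IsLim U av (fun _ => 1) 1 := ⟨(bddSub U av).one_mem, rfl⟩

theorem IsLim.sub {f g : ℕ → k} {x y : LimF U av} (h : IsLim U av f x) (h' : IsLim U av g y) :
    IsLim U av (fun i => f i - g i) (x - y) := by
  simpa only [sub_eq_add_neg] using h.add h'.neg

theorem IsLim.sum {ι : Type*} (s : Finset ι) {f : ι → ℕ → k} {x : ι → LimF U av}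
    (h : ∀ j ∈ s, IsLim U av (f j) (x j)) :
    IsLim U av (fun i => ∑ j ∈ s, f j i) (∑ j ∈ s, x j) := by
  classical
  induction s using Finset.induction_on with
  | empty => simpa using IsLim.zero
  | insert a s ha ih =>
    simp only [Finset.sum_insert ha]
    exact (h a (by simp)).add (ih fun j hj => h j (by simp [hj]))

theorem IsLim.prod {ι : Type*} (s : Finset ι) {f : ι → ℕ → k} {x : ι → LimF U av}
    (h : ∀ j ∈ s, IsLim U av (f j) (x j)) :
    IsLim U av (fun i => ∏ j ∈ s, f j i) (∏ j ∈ s, x j) := by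
  classical
  induction s using Finset.induction_on with
  | empty => simpa using IsLim.one
  | insert a s ha ih =>
    simp only [Finset.prod_insert ha]
    exact (h a (by simp)).mul (ih fun j hj => h j (by simp [hj]))

theorem IsLim.pow {f : ℕ → k} {x : LimF U av} (h : IsLim U av f x) (n : ℕ) :
    IsLim U av (fun i => f i ^ n) (x ^ n) := by
  simpa using IsLim.prod (Finset.range n) (f := fun _ => f) (x := fun _ => x) (fun _ _ => h)

theorem isLim_zero_iff {f : ℕ → k} :
    IsLim U av f 0 ↔ Tendsto (fun i => av i (f i)) U (𝓝 0) := by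
  constructor
  · rintro ⟨h, h0⟩
    exact (Ideal.Quotient.eq_zero_iff_mem (I := infinI U av)).1 h0
  · intro h
    have hb : f ∈ bddSub U av := ⟨1, (h.eventually (gt_mem_nhds one_pos)).mono fun _ h => h.le⟩
    exact ⟨hb, (Ideal.Quotient.eq_zero_iff_mem (I := infinI U av)).2 h⟩

attribute [irreducible] limFieldAux

theorem IsLim.congr {f g : ℕ → k} {x : LimF U av} (h : IsLim U av f x)
    (hfg : ∀ᶠ i in (U : Filter ℕ), f i = g i) : IsLim U av g x := by
  have h0 : IsLim U av (fun i => g i - f i) 0 := by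
    rw [isLim_zero_iff]
    refine tendsto_const_nhds.congr' ?_
    filter_upwards [hfg] with i hi
    simp [hi]
  simpa using h0.add h

theorem IsLim.exists_abs (x : LimF U av) :
    ∃ l : ℝ, ∀ f, IsLim U av f x → Tendsto (fun i => av i (f i)) U (𝓝 l) := by
  obtain ⟨f, hf⟩ := IsLim.exists_lift x
  obtain ⟨C, hC⟩ := hf.bdd
  obtain ⟨l, hl⟩ := tendsto_limUnder_of_bdd U _ C (fun i => (av i).nonneg _) hC
  refine ⟨l, fun g hg => ?_⟩
  have h0 := hg.sub hf
  rw [sub_self, isLim_zero_iff] at h0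
  have h1 : Tendsto (fun i => av i (g i) - av i (f i)) U (𝓝 0) := by
    refine squeeze_zero_norm (fun i => ?_) h0
    rw [Real.norm_eq_abs]
    exact (av i).abs_abv_sub_le_abv_sub _ _
  simpa using h1.add hl

noncomputable def limAbsFun (x : LimF U av) : ℝ := (IsLim.exists_abs x).choose

theorem IsLim.tendsto_fun {f : ℕ → k} {x : LimF U av} (h : IsLim U av f x) :
    Tendsto (fun i => av i (f i)) U (𝓝 (limAbsFun x)) :=
  (IsLim.exists_abs x).choose_spec f h

noncomputable def limAbs (U : Ultrafilter ℕ) (av : ℕ → AbsoluteValue k ℝ) :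
    AbsoluteValue (LimF U av) ℝ where
  toFun := limAbsFun
  map_mul' x y := by
    obtain ⟨f, hf⟩ := IsLim.exists_lift x
    obtain ⟨g, hg⟩ := IsLim.exists_lift y
    have h1 := (hf.mul hg).tendsto_fun
    simp only [map_mul] at h1
    exact tendsto_nhds_unique h1 (hf.tendsto_fun.mul hg.tendsto_fun)
  nonneg' x := by
    obtain ⟨f, hf⟩ := IsLim.exists_lift x
    exact ge_of_tendsto' hf.tendsto_fun fun i => (av i).nonneg _
  eq_zero' x := by
    obtain ⟨f, hf⟩ := IsLim.exists_lift x
    constructor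
    · intro h
      have h1 := hf.tendsto_fun
      rw [h, ← isLim_zero_iff] at h1
      exact hf.unique h1
    · rintro rfl
      exact tendsto_nhds_unique hf.tendsto_fun (isLim_zero_iff.1 hf)
  add_le' x y := by
    obtain ⟨f, hf⟩ := IsLim.exists_lift x
    obtain ⟨g, hg⟩ := IsLim.exists_lift y
    exact le_of_tendsto_of_tendsto' (hf.add hg).tendsto_fun (hf.tendsto_fun.add hg.tendsto_fun)
      fun i => (av i).add_le _ _

theorem IsLim.tendsto {f : ℕ → k} {x : LimF U av} (h : IsLim U av f x) :
    Tendsto (fun i => av i (f i)) U (𝓝 (limAbs U av x)) := h.tendsto_fun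

theorem IsLim.eventually_ne {f : ℕ → k} {x : LimF U av} (h : IsLim U av f x) (hx : x ≠ 0) :
    ∀ᶠ i in (U : Filter ℕ), f i ≠ 0 := by
  have h1 : 0 < limAbs U av x := (limAbs U av).pos hx
  filter_upwards [h.tendsto.eventually (lt_mem_nhds h1)] with i hi h0
  rw [h0, map_zero] at hi
  exact lt_irrefl _ hi

theorem IsLim.inv {f : ℕ → k} {x : LimF U av} (h : IsLim U av f x) (hx : x ≠ 0) :
    IsLim U av (fun i => (f i)⁻¹) x⁻¹ := by
  have hp : 0 < limAbs U av x := (limAbs U av).pos hx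
  obtain ⟨y, hy⟩ := IsLim.exists_lim (U := U) (av := av) (f := fun i => (f i)⁻¹)
    (C := (limAbs U av x / 2)⁻¹) (by
      filter_upwards [h.tendsto.eventually (lt_mem_nhds (half_lt_self hp))] with i hi
      rw [map_inv₀]
      exact inv_anti₀ (by positivity) hi.le)
  have h1 : IsLim U av (fun _ => 1) (x * y) := (h.mul hy).congr (by
    filter_upwards [h.eventually_ne hx] with i hi
    simp [hi])
  have h2 := h1.unique IsLim.one
  rwa [inv_eq_of_mul_eq_one_right h2]

/-- matrix limits -/
def IsLimM {p q : Type*} (U : Ultrafilter ℕ) (av : ℕ → AbsoluteValue k ℝ)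
    (A : ℕ → Matrix p q k) (X : Matrix p q (LimF U av)) : Prop :=
  ∀ a b, IsLim U av (fun i => A i a b) (X a b)

section mats
variable {p q r : Type*}

theorem IsLimM.exists_lift (X : Matrix p q (LimF U av)) : ∃ A, IsLimM U av A X := by
  choose f hf using fun a b => IsLim.exists_lift (X a b)
  exact ⟨fun i => Matrix.of fun a b => f a b i, fun a b => hf a b⟩

theorem IsLimM.exists_lim {A : ℕ → Matrix p q k}
    (h : ∀ a b, ∃ C : ℝ, ∀ᶠ i in (U : Filter ℕ), av i (A i a b) ≤ C) :
    ∃ X, IsLimM U av A X := by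
  choose C hC using h
  choose X hX using fun a b => IsLim.exists_lim (hC a b)
  exact ⟨Matrix.of X, hX⟩

theorem IsLimM.unique {A : ℕ → Matrix p q k} {X Y} (h : IsLimM U av A X) (h' : IsLimM U av A Y) :
    X = Y := by
  ext a b
  exact (h a b).unique (h' a b)

theorem IsLimM.mul [Fintype q] {A : ℕ → Matrix p q k} {B : ℕ → Matrix q r k} {X Y}
    (h : IsLimM U av A X) (h' : IsLimM U av B Y) :
    IsLimM U av (fun i => A i * B i) (X * Y) := by
  intro a b
  simp only [Matrix.mul_apply]
  exact IsLim.sum _ fun j _ => (h a j).mul (h' j b)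

theorem IsLimM.mulVec [Fintype q] {A : ℕ → Matrix p q k} {v : ℕ → q → k} {X} {w : q → LimF U av}
    (h : IsLimM U av A X) (h' : ∀ j, IsLim U av (fun i => v i j) (w j)) (a : p) :
    IsLim U av (fun i => (A i *ᵥ v i) a) ((X *ᵥ w) a) := by
  simp only [Matrix.mulVec, dotProduct]
  exact IsLim.sum _ fun j _ => (h a j).mul (h' j)

theorem IsLimM.sub {A B : ℕ → Matrix p q k} {X Y}
    (h : IsLimM U av A X) (h' : IsLimM U av B Y) :
    IsLimM U av (fun i => A i - B i) (X - Y) := fun a b => (h a b).sub (h' a b)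

theorem IsLimM.smul {c : ℕ → k} {x} {A : ℕ → Matrix p q k} {X}
    (hc : IsLim U av c x) (h : IsLimM U av A X) :
    IsLimM U av (fun i => c i • A i) (x • X) := fun a b => hc.mul (h a b)

theorem IsLimM.one [DecidableEq p] : IsLimM U av (fun _ => (1 : Matrix p p k)) 1 := by
  intro a b
  by_cases h : a = b
  · subst h; simpa using IsLim.one
  · simpa [h] using IsLim.zero

theorem IsLimM.congr {A B : ℕ → Matrix p q k} {X} (h : IsLimM U av A X)
    (hAB : ∀ᶠ i in (U : Filter ℕ), A i = B i) : IsLimM U av B X := fun a b =>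
  (h a b).congr (hAB.mono fun i hi => by simp [hi])

theorem IsLimM.det [Fintype p] [DecidableEq p] {A : ℕ → Matrix p p k} {X} (h : IsLimM U av A X) :
    IsLim U av (fun i => (A i).det) X.det := by
  simp only [Matrix.det_apply']
  refine IsLim.sum _ fun σ _ => IsLim.mul ?_ (IsLim.prod _ fun j _ => h _ _)
  rcases Int.units_eq_one_or (Equiv.Perm.sign σ) with h | h
  · simpa [h] using IsLim.one
  · simpa [h] using IsLim.one.neg

theorem IsLimM.trace [Fintype p] {A : ℕ → Matrix p p k} {X} (h : IsLimM U av A X) :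
    IsLim U av (fun i => (A i).trace) X.trace := by
  simp only [Matrix.trace]
  exact IsLim.sum _ fun j _ => h j j

end mats

end LimField
end UTA

end

section
open Matrix Pointwise
open Filter Topology

namespace UTA

section PingPong
variable {k : Type*} [Field k] {m : ℕ}

def letter {G : Type*} [Group G] (a : Fin 2 → G) (x : Fin 2 × Bool) : G :=
  cond x.2 (a x.1) (a x.1)⁻¹

def linv (x : Fin 2 × Bool) : Fin 2 × Bool := (x.1, !x.2)

theorem letter_linv {G : Type*} [Group G] (a : Fin 2 → G) (x : Fin 2 × Bool) :
    letter a (linv x) = (letter a x)⁻¹ := by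
  rcases x with ⟨i, b⟩
  cases b <;> simp [letter, linv]

def vN (v : AbsoluteValue k ℝ) (u : Fin m → k) : ℝ := ∑ j, v (u j)
def mN (v : AbsoluteValue k ℝ) (A : Matrix (Fin m) (Fin m) k) : ℝ := ∑ i, ∑ j, v (A i j)

variable (v : AbsoluteValue k ℝ)

theorem vN_nonneg (u : Fin m → k) : 0 ≤ vN v u := Finset.sum_nonneg fun _ _ => v.nonneg _
theorem mN_nonneg (A : Matrix (Fin m) (Fin m) k) : 0 ≤ mN v A :=
  Finset.sum_nonneg fun _ _ => Finset.sum_nonneg fun _ _ => v.nonneg _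

theorem vN_pos {u : Fin m → k} (h : u ≠ 0) : 0 < vN v u := by
  obtain ⟨j, hj⟩ := Function.ne_iff.1 h
  exact Finset.sum_pos' (fun _ _ => v.nonneg _) ⟨j, Finset.mem_univ _, v.pos hj⟩

theorem vN_zero : vN v (0 : Fin m → k) = 0 := by simp [vN]

theorem vN_smul (c : k) (u : Fin m → k) : vN v (c • u) = v c * vN v u := by
  simp [vN, Finset.mul_sum]

theorem vN_add_le (u w : Fin m → k) : vN v (u + w) ≤ vN v u + vN v w := by
  rw [vN, vN, vN, ← Finset.sum_add_distrib]
  exact Finset.sum_le_sum fun j _ => v.add_le _ _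

theorem vN_mulVec_le (A : Matrix (Fin m) (Fin m) k) (u : Fin m → k) :
    vN v (A *ᵥ u) ≤ mN v A * vN v u := by
  rw [mN, Finset.sum_mul]
  refine Finset.sum_le_sum fun i _ => ?_
  rw [Finset.sum_mul, Matrix.mulVec, dotProduct]
  refine (v.sum_le _ _).trans (Finset.sum_le_sum fun j _ => ?_)
  rw [map_mul]
  exact mul_le_mul_of_nonneg_left
    (Finset.single_le_sum (f := fun j => v (u j)) (fun _ _ => v.nonneg _) (Finset.mem_univ j)) (v.nonneg _)

def Cert (a : Fin 2 → GL (Fin m) k) : Prop :=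
  ∃ (c : Fin 2 × Bool → k) (Z : Fin 2 × Bool → Fin 2 × Bool → Matrix (Fin m) (Fin m) k)
    (p : Fin m → k) (δ : ℝ), 0 < δ ∧ (∀ x, c x ≠ 0) ∧
    (∀ x y, y ≠ linv x →
      mN v (Z x y * (c x • (letter a x).1) * (c y • (letter a y).1) - c y • (letter a y).1) < δ / 2) ∧
    (∀ x y, 2 * δ * mN v (Z x y) < 1) ∧
    (∀ x, δ * vN v p < vN v ((c x • (letter a x).1) *ᵥ p)) ∧
    (∀ x, v (c x * c (linv x)) < δ ^ 2)

theorem linv_linv (x : Fin 2 × Bool) : linv (linv x) = x := by simp [linv]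

theorem Cert.injective {a : Fin 2 → GL (Fin m) k} (h : Cert v a) :
    Function.Injective (FreeGroup.lift a) := by
  obtain ⟨c, Z, p, δ, hδ, hc, h1, h2, h3, h4⟩ := h
  have hp : p ≠ 0 := by
    rintro rfl
    have := h3 (0, true)
    simp [vN_zero] at this
  -- good sets
  let Gd : Fin 2 × Bool → (Fin m → k) → Prop := fun x q =>
    q ≠ 0 ∧ δ * vN v q ≤ vN v ((c x • (letter a x).1) *ᵥ q)
  have hinv : ∀ (x : Fin 2 × Bool) (q : Fin m → k), (letter a (linv x)).1 *ᵥ ((letter a x).1 *ᵥ q) = q := by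
    intro x q
    rw [Matrix.mulVec_mulVec, letter_linv, ← Units.val_mul]
    simp
  have hne : ∀ (x : Fin 2 × Bool) (q : Fin m → k), q ≠ 0 → (letter a x).1 *ᵥ q ≠ 0 := by
    intro x q hq h0
    apply hq
    rw [← hinv x q, h0, Matrix.mulVec_zero]
  have hstep : ∀ x y q, y ≠ linv x → Gd y q → Gd x ((letter a y).1 *ᵥ q) := by
    rintro x y q hxy ⟨hq, hyq⟩
    refine ⟨hne _ _ hq, ?_⟩
    have e1 := h1 x y hxy
    have e2 := h2 x y
    set X := c x • (letter a x).1 with hX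
    set Y := c y • (letter a y).1 with hY
    have hYq : Y *ᵥ q = c y • ((letter a y).1 *ᵥ q) := by rw [hY, Matrix.smul_mulVec]
    have e3 : Y *ᵥ q = -((Z x y * X * Y - Y) *ᵥ q) + Z x y *ᵥ (X *ᵥ (Y *ᵥ q)) := by
      rw [Matrix.sub_mulVec, ← Matrix.mulVec_mulVec, ← Matrix.mulVec_mulVec]; abel
    have e4 : vN v (Y *ᵥ q) ≤ δ / 2 * vN v q + mN v (Z x y) * vN v (X *ᵥ (Y *ᵥ q)) := by
      calc vN v (Y *ᵥ q) ≤ vN v (-((Z x y * X * Y - Y) *ᵥ q)) + vN v (Z x y *ᵥ (X *ᵥ (Y *ᵥ q))) := by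
            conv_lhs => rw [e3]
            exact vN_add_le _ _ _
        _ ≤ _ := by
            gcongr
            · have : vN v (-((Z x y * X * Y - Y) *ᵥ q)) = vN v ((Z x y * X * Y - Y) *ᵥ q) := by
                simp [vN]
              rw [this]
              refine (vN_mulVec_le v _ _).trans ?_
              exact mul_le_mul_of_nonneg_right e1.le (vN_nonneg _ _)
            · exact vN_mulVec_le v _ _
    have e5 : δ * vN v (Y *ᵥ q) ≤ vN v (X *ᵥ (Y *ᵥ q)) := by
      have n1 := vN_nonneg v (X *ᵥ (Y *ᵥ q))
      have e6 : vN v (Y *ᵥ q) ≤ 2 * (mN v (Z x y) * vN v (X *ᵥ (Y *ᵥ q))) := by linarith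
      calc δ * vN v (Y *ᵥ q) ≤ δ * (2 * (mN v (Z x y) * vN v (X *ᵥ (Y *ᵥ q)))) := by gcongr
        _ = (2 * δ * mN v (Z x y)) * vN v (X *ᵥ (Y *ᵥ q)) := by ring
        _ ≤ 1 * _ := by gcongr
        _ = _ := one_mul _
    rw [hYq, vN_smul, Matrix.mulVec_smul, vN_smul] at e5
    have hcy : 0 < v (c y) := v.pos (hc y)
    have : v (c y) * (δ * vN v ((letter a y).1 *ᵥ q)) ≤ v (c y) * vN v (X *ᵥ ((letter a y).1 *ᵥ q)) := by
      linarith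
    exact le_of_mul_le_mul_left this hcy
  have hword : ∀ (L : List (Fin 2 × Bool)) (x : Fin 2 × Bool), FreeGroup.IsReduced (x :: L) →
      Gd x (((L.map (letter a)).prod).1 *ᵥ p) := by
    intro L
    induction L with
    | nil =>
      intro x _
      simpa using ⟨hp, (h3 x).le⟩
    | cons y L ih =>
      intro x hr
      rw [FreeGroup.isReduced_cons_cons] at hr
      have := hstep x y _ (by
        rintro rfl
        have := hr.1 rfl
        simp [linv] at this) (ih y hr.2)
      rw [List.map_cons, List.prod_cons, Units.val_mul, ← Matrix.mulVec_mulVec]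
      exact this
  rw [injective_iff_map_eq_one]
  intro w hw
  by_contra hw1
  have hred := FreeGroup.isReduced_toWord (x := w)
  obtain ⟨x, L, hL⟩ : ∃ x L, w.toWord = x :: L := by
    rcases hh : w.toWord with _ | ⟨x, L⟩
    · exact absurd (FreeGroup.toWord_eq_nil_iff.1 hh) hw1
    · exact ⟨x, L, rfl⟩
  rw [hL] at hred
  have hG := hword L x hred
  have hprod : letter a x * (L.map (letter a)).prod = 1 := by
    rw [← hw, ← FreeGroup.mk_toWord (x := w), hL, FreeGroup.lift_mk, List.map_cons, List.prod_cons]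
    rfl
  set q := ((L.map (letter a)).prod).1 *ᵥ p with hq
  have hpq : (letter a x).1 *ᵥ q = p := by
    rw [hq, Matrix.mulVec_mulVec, ← Units.val_mul, hprod]; simp
  have h5 := h3 (linv x)
  have h6 : (letter a (linv x)).1 *ᵥ p = q := by rw [← hpq, hinv]
  rw [Matrix.smul_mulVec, h6, vN_smul] at h5
  have h7 := hG.2
  rw [Matrix.smul_mulVec, hpq, vN_smul] at h7
  have h8 := h4 x
  rw [map_mul] at h8
  have hpp := vN_pos v hp
  have hc' : 0 < v (c (linv x)) := v.pos (hc _)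
  have h9 : δ * (δ * vN v p) < δ * (v (c (linv x)) * vN v q) := by gcongr
  have h10 : v (c (linv x)) * (δ * vN v q) ≤ v (c (linv x)) * (v (c x) * vN v p) := by gcongr
  nlinarith
end PingPong
end UTA

end

section
open Matrix Pointwise
open Filter Topology

namespace UTA

section Transfer
variable {k : Type*} [Field k] {m : ℕ} {U : Ultrafilter ℕ} {av : ℕ → AbsoluteValue k ℝ}

theorem IsLimM.tendsto_mN {A : ℕ → Matrix (Fin m) (Fin m) k} {X} (h : IsLimM U av A X) :
    Tendsto (fun i => mN (av i) (A i)) U (𝓝 (mN (limAbs U av) X)) :=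
  tendsto_finsetSum _ fun a _ => tendsto_finsetSum _ fun b _ => (h a b).tendsto

theorem tendsto_vN {A : ℕ → Fin m → k} {X : Fin m → LimF U av}
    (h : ∀ j, IsLim U av (fun i => A i j) (X j)) :
    Tendsto (fun i => vN (av i) (A i)) U (𝓝 (vN (limAbs U av) X)) :=
  tendsto_finsetSum _ fun a _ => (h a).tendsto

/-- A certificate for a limit, with sequences `X x i = c x i • letter` . -/
theorem cert_transfer {A : ℕ → Fin 2 → GL (Fin m) k}
    (c : Fin 2 × Bool → ℕ → k) (Z : Fin 2 × Bool → Fin 2 × Bool → Matrix (Fin m) (Fin m) (LimF U av))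
    (p : Fin m → LimF U av) (δ : ℝ) (X : Fin 2 × Bool → Matrix (Fin m) (Fin m) (LimF U av))
    (hX : ∀ x, IsLimM U av (fun i => c x i • (letter (A i) x).1) (X x))
    (hδ : 0 < δ) (hc : ∀ x, ∀ᶠ i in (U : Filter ℕ), c x i ≠ 0)
    (h1 : ∀ x y, y ≠ linv x → mN (limAbs U av) (Z x y * X x * X y - X y) < δ / 2)
    (h2 : ∀ x y, 2 * δ * mN (limAbs U av) (Z x y) < 1)
    (h3 : ∀ x, δ * vN (limAbs U av) p < vN (limAbs U av) (X x *ᵥ p))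
    (h4 : ∀ x, ∀ᶠ i in (U : Filter ℕ), av i (c x i * c (linv x) i) < δ ^ 2) :
    ∀ᶠ i in (U : Filter ℕ), Cert (av i) (A i) := by
  choose Zl hZl using fun x y => IsLimM.exists_lift (Z x y)
  choose pl hpl using fun j => IsLim.exists_lift (p j)
  have e1 : ∀ᶠ i in (U : Filter ℕ), ∀ x y, y ≠ linv x →
      mN (av i) (Zl x y i * (c x i • (letter (A i) x).1) * (c y i • (letter (A i) y).1)
        - c y i • (letter (A i) y).1) < δ / 2 := by
    refine eventually_all.2 fun x => eventually_all.2 fun y => ?_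
    by_cases hxy : y = linv x
    · simp [hxy]
    · have := ((((hZl x y).mul (hX x)).mul (hX y)).sub (hX y)).tendsto_mN.eventually
        (gt_mem_nhds (h1 x y hxy))
      filter_upwards [this] with i hi _ using hi
  have e2 : ∀ᶠ i in (U : Filter ℕ), ∀ x y, 2 * δ * mN (av i) (Zl x y i) < 1 := by
    refine eventually_all.2 fun x => eventually_all.2 fun y => ?_
    exact ((hZl x y).tendsto_mN.const_mul (2 * δ)).eventually (gt_mem_nhds (h2 x y))
  have e3 : ∀ᶠ i in (U : Filter ℕ), ∀ x, δ * vN (av i) (fun j => pl j i) <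
      vN (av i) ((c x i • (letter (A i) x).1) *ᵥ (fun j => pl j i)) := by
    refine eventually_all.2 fun x => ?_
    have t1 := (tendsto_vN (A := fun i j => pl j i) hpl).const_mul δ
    have t2 := tendsto_vN (A := fun i => (c x i • (letter (A i) x).1) *ᵥ (fun j => pl j i))
      (fun a => (hX x).mulVec hpl a)
    exact t1.eventually_lt t2 (h3 x)
  filter_upwards [e1, e2, e3, eventually_all.2 hc, eventually_all.2 h4] with i a1 a2 a3 a4 a5
  exact ⟨fun x => c x i, fun x y => Zl x y i, fun j => pl j i, δ, hδ, a4, a1, a2, a3, a5⟩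

theorem Cert.transfer {A : ℕ → Fin 2 → GL (Fin m) k} {Ā : Fin 2 → GL (Fin m) (LimF U av)}
    (hA : ∀ x, IsLimM U av (fun i => (letter (A i) x).1) (letter Ā x).1)
    (h : Cert (limAbs U av) Ā) : ∀ᶠ i in (U : Filter ℕ), Cert (av i) (A i) := by
  obtain ⟨c, Z, p, δ, hδ, hc, h1, h2, h3, h4⟩ := h
  choose cl hcl using fun x => IsLim.exists_lift (c x)
  refine cert_transfer cl Z p δ (fun x => c x • (letter Ā x).1) (fun x => IsLimM.smul (hcl x) (hA x)) hδ
    (fun x => (hcl x).eventually_ne (hc x)) h1 h2 h3 fun x => ?_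
  exact ((hcl x).mul (hcl (linv x))).tendsto.eventually (gt_mem_nhds (h4 x))
end Transfer
end UTA

end

section
open Matrix Pointwise
open Filter Topology

namespace UTA

section Zar

theorem exists_irred_subgroup {Γ : Type*} [Group Γ] [TopologicalSpace Γ]
    [TopologicalSpace.NoetherianSpace Γ]
    (hl : ∀ g : Γ, Continuous (fun x => g * x)) (hr : ∀ g : Γ, Continuous (fun x => x * g)) :
    ∃ Γ0 : Subgroup Γ, Γ0.FiniteIndex ∧ IsIrreducible (Γ0 : Set Γ) := by
  have hmul : ∀ C D : Set Γ, IsPreirreducible C → IsPreirreducible D → IsPreirreducible (C * D) := by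
    rintro C D hC hD u w hu hw ⟨_, ⟨c, hc, d, hd, rfl⟩, hcd⟩ ⟨_, ⟨c', hc', d', hd', rfl⟩, hcd'⟩
    obtain ⟨x, hxC, hx1, hx2⟩ := hC _ _ (hu.preimage (hr d)) (hw.preimage (hr d'))
      ⟨c, hc, hcd⟩ ⟨c', hc', hcd'⟩
    obtain ⟨y, hyD, hy1, hy2⟩ := hD _ _ (hu.preimage (hl x)) (hw.preimage (hl x))
      ⟨d, hd, hx1⟩ ⟨d', hd', hx2⟩
    exact ⟨x * y, ⟨x, hxC, y, hyD, rfl⟩, hy1, hy2⟩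
  set C : Set Γ := irreducibleComponent (1 : Γ) with hCdef
  have hCirr : IsIrreducible C := isIrreducible_irreducibleComponent
  have h1C : (1 : Γ) ∈ C := mem_irreducibleComponent
  have hmax : ∀ t : Set Γ, IsPreirreducible t → C ⊆ t → t = C := fun t ht hc =>
    eq_irreducibleComponent ht hc
  have hCC : C * C = C := hmax _ (hmul _ _ hCirr.2 hCirr.2) fun x hx => ⟨x, hx, 1, h1C, mul_one x⟩
  have htr : ∀ (g : Γ) (D : Set Γ), IsPreirreducible D → IsPreirreducible ((fun x => g * x) '' D) :=
    fun g D hD => hD.image _ (hl g).continuousOn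
  have hinv : ∀ x ∈ C, x⁻¹ ∈ C := by
    intro x hx
    have h2 : ((fun y => x⁻¹ * y) '' C) * C = C := hmax _ (hmul _ _ (htr _ _ hCirr.2) hCirr.2)
      fun y hy => ⟨1, ⟨x, hx, by simp⟩, y, hy, one_mul y⟩
    rw [← h2]
    exact ⟨x⁻¹, ⟨1, h1C, by simp⟩, 1, h1C, by simp⟩
  let Γ0 : Subgroup Γ :=
    { carrier := C
      mul_mem' := fun {a b} ha hb => by rw [← hCC]; exact ⟨a, ha, b, hb, rfl⟩
      one_mem' := h1C
      inv_mem' := fun {x} hx => hinv x hx }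
  refine ⟨Γ0, ?_, hCirr⟩
  have hfin : (irreducibleComponents Γ).Finite :=
    TopologicalSpace.NoetherianSpace.finite_irreducibleComponents
  have hcomp : ∀ g : Γ, ((fun x => g * x) '' C) ∈ irreducibleComponents Γ := by
    intro g
    refine ⟨⟨hCirr.1.image _, htr g _ hCirr.2⟩, ?_⟩
    intro t ht hle
    have h3 : ((fun x => g⁻¹ * x) '' t) = C := hmax _ (htr _ _ ht.2) (by
      intro x hx
      exact ⟨g * x, hle ⟨x, hx, rfl⟩, by simp⟩)
    intro y hy
    refine ⟨g⁻¹ * y, ?_, by simp⟩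
    rw [← h3]
    exact ⟨y, hy, rfl⟩
  haveI : Finite (irreducibleComponents Γ) := hfin.to_subtype
  let f : Γ ⧸ Γ0 → irreducibleComponents Γ := fun q => ⟨_, hcomp q.out⟩
  have hf : Function.Injective f := by
    intro q r hqr
    have h4 : ((fun x => q.out * x) '' C) = ((fun x => r.out * x) '' C) := congrArg Subtype.val hqr
    have h5 : q.out ∈ ((fun x => r.out * x) '' C) := by
      rw [← h4]; exact ⟨1, h1C, by simp⟩
    obtain ⟨x, hx, hxq⟩ := h5
    rw [← QuotientGroup.out_eq' q, ← QuotientGroup.out_eq' r, eq_comm, QuotientGroup.eq]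
    simp only at hxq
    rw [← hxq]
    show _ ∈ C
    simpa using hx
  haveI := Finite.of_injective f hf
  exact Subgroup.finiteIndex_of_finite_quotient

variable {Γ : Type*} [Group Γ] {F : Type*} [Field F] {m : ℕ}

def coords (ρ : Γ →* GL (Fin m) F) (g : Γ) (t : Bool × Fin m × Fin m) : F :=
  if t.1 then (ρ g).1 t.2.1 t.2.2 else (ρ g⁻¹).1 t.2.1 t.2.2

noncomputable def zev (ρ : Γ →* GL (Fin m) F) (g : Γ) : MvPolynomial (Bool × Fin m × Fin m) F →+* F :=
  MvPolynomial.eval (coords ρ g)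

noncomputable def zpt (ρ : Γ →* GL (Fin m) F) (g : Γ) :
    PrimeSpectrum (MvPolynomial (Bool × Fin m × Fin m) F) :=
  ⟨RingHom.ker (zev ρ g), RingHom.ker_isPrime _⟩

noncomputable def zT (s : Bool × Fin m × Fin m → MvPolynomial (Bool × Fin m × Fin m) F) :
    MvPolynomial (Bool × Fin m × Fin m) F →+* MvPolynomial (Bool × Fin m × Fin m) F :=
  (MvPolynomial.bind₁ s).toRingHom

theorem zev_zT (ρ : Γ →* GL (Fin m) F) (s) (g g' : Γ)
    (h : ∀ t, zev ρ g (s t) = coords ρ g' t) :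
    PrimeSpectrum.comap (zT s) (zpt ρ g) = zpt ρ g' := by
  ext f
  simp only [PrimeSpectrum.comap_asIdeal, Ideal.mem_comap, zpt, RingHom.mem_ker]
  have : zev ρ g (zT s f) = zev ρ g' f := by
    simp only [zT, zev]
    show MvPolynomial.eval _ (MvPolynomial.bind₁ s f) = _
    rw [MvPolynomial.eval, MvPolynomial.eval₂Hom_bind₁]
    congr 2
    funext t
    exact h t
  rw [this]

theorem zariski (ρ : Γ →* GL (Fin m) F) : ∃ Γ0 : Subgroup Γ, Γ0.FiniteIndex ∧
    ∀ s : Finset (MvPolynomial (Bool × Fin m × Fin m) F), (∀ f ∈ s, ∃ h ∈ Γ0, zev ρ h f ≠ 0) →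
      ∃ h ∈ Γ0, ∀ f ∈ s, zev ρ h f ≠ 0 := by
  letI : TopologicalSpace Γ := TopologicalSpace.induced (zpt ρ) inferInstance
  have hind : IsInducing (zpt ρ) := ⟨rfl⟩
  haveI : TopologicalSpace.NoetherianSpace Γ := hind.noetherianSpace
  have hcont : ∀ (φ : Γ → Γ) (s : Bool × Fin m × Fin m → MvPolynomial (Bool × Fin m × Fin m) F),
      (∀ g t, zev ρ g (s t) = coords ρ (φ g) t) → Continuous φ := by
    intro φ s h
    rw [hind.continuous_iff]
    have : zpt ρ ∘ φ = PrimeSpectrum.comap (zT s) ∘ zpt ρ := by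
      funext g
      exact (zev_zT ρ s g (φ g) (h g)).symm
    rw [this]
    exact (PrimeSpectrum.continuous_comap _).comp hind.continuous
  obtain ⟨Γ0, hfi, hirr⟩ := exists_irred_subgroup (Γ := Γ) (fun g => hcont _
      (fun t => if t.1 then ∑ l, MvPolynomial.C ((ρ g).1 t.2.1 l) * MvPolynomial.X (true, l, t.2.2)
        else ∑ l, MvPolynomial.X (false, t.2.1, l) * MvPolynomial.C ((ρ g⁻¹).1 l t.2.2)) (by
      rintro h ⟨b, i, j⟩
      cases b <;> simp [zev, coords, Matrix.mul_apply]))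
    (fun g => hcont _
      (fun t => if t.1 then ∑ l, MvPolynomial.X (true, t.2.1, l) * MvPolynomial.C ((ρ g).1 l t.2.2)
        else ∑ l, MvPolynomial.C ((ρ g⁻¹).1 t.2.1 l) * MvPolynomial.X (false, l, t.2.2)) (by
      rintro h ⟨b, i, j⟩
      cases b <;> simp [zev, coords, Matrix.mul_apply]))
  refine ⟨Γ0, hfi, fun s hs => ?_⟩
  classical
  have hopen : ∀ f : MvPolynomial (Bool × Fin m × Fin m) F, IsOpen {h : Γ | zev ρ h f ≠ 0} := by
    intro f
    exact (PrimeSpectrum.basicOpen f).2.preimage hind.continuous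
  obtain ⟨x, hx1, hx2⟩ := isIrreducible_iff_sInter.1 hirr
    (s.image fun f => {h : Γ | zev ρ h f ≠ 0})
    (by
      intro u hu
      obtain ⟨f, _, rfl⟩ := Finset.mem_image.1 hu
      exact hopen f)
    (by
      intro u hu
      obtain ⟨f, hf, rfl⟩ := Finset.mem_image.1 hu
      obtain ⟨h, h0, h1⟩ := hs f hf
      exact ⟨h, h0, h1⟩)
  refine ⟨x, hx1, fun f hf => ?_⟩
  exact hx2 _ (Finset.mem_coe.2 (Finset.mem_image_of_mem _ hf))

/-- simultaneous transversality -/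
theorem exists_transverse (ρ : Γ →* GL (Fin m) F)
    (hsp : ∀ Γ0 : Subgroup Γ, Γ0.FiniteIndex → ∀ B C : Matrix (Fin m) (Fin m) F, B ≠ 0 → C ≠ 0 →
      ∃ h ∈ Γ0, B * (ρ h).1 * C ≠ 0)
    {ι : Type*} [Fintype ι] (B C : ι → Matrix (Fin m) (Fin m) F) (hB : ∀ i, B i ≠ 0)
    (hC : ∀ i, C i ≠ 0) :
    ∃ h : Γ, ∀ i, B i * (ρ h).1 * C i ≠ 0 ∧ B i * (ρ h⁻¹).1 * C i ≠ 0 := by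
  classical
  obtain ⟨Γ0, hfi, hz⟩ := zariski ρ
  have h1 : ∀ i, ∃ h : Γ, h ∈ Γ0 ∧ ∃ ab : Fin m × Fin m, (B i * (ρ h).1 * C i) ab.1 ab.2 ≠ 0 := by
    intro i
    obtain ⟨h, h0, hne⟩ := hsp Γ0 hfi (B i) (C i) (hB i) (hC i)
    refine ⟨h, h0, ?_⟩
    by_contra hcon
    push Not at hcon
    exact hne (by ext a b; exact hcon (a, b))
  choose h hh ab hab using h1
  let f : ι × Bool → MvPolynomial (Bool × Fin m × Fin m) F := fun t =>
    ∑ y, (∑ x, MvPolynomial.C (B t.1 (ab t.1).1 x) * MvPolynomial.X (t.2, x, y)) *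
      MvPolynomial.C (C t.1 y (ab t.1).2)
  have hft : ∀ i g, zev ρ g (f (i, true)) = (B i * (ρ g).1 * C i) (ab i).1 (ab i).2 := by
    intro i g
    simp [f, zev, coords, Matrix.mul_apply]
  have hff : ∀ i g, zev ρ g (f (i, false)) = (B i * (ρ g⁻¹).1 * C i) (ab i).1 (ab i).2 := by
    intro i g
    simp [f, zev, coords, Matrix.mul_apply]
  obtain ⟨g, _, hg⟩ := hz (Finset.univ.image f) (by
    intro p hp
    obtain ⟨⟨i, b⟩, _, rfl⟩ := Finset.mem_image.1 hp
    cases b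
    · exact ⟨(h i)⁻¹, Γ0.inv_mem (hh i), by rw [hff, inv_inv]; exact hab i⟩
    · exact ⟨h i, hh i, by rw [hft]; exact hab i⟩)
  refine ⟨g, fun i => ⟨fun h0 => ?_, fun h0 => ?_⟩⟩
  · apply hg (f (i, true)) (Finset.mem_image_of_mem _ (Finset.mem_univ _))
    rw [hft, h0]; rfl
  · apply hg (f (i, false)) (Finset.mem_image_of_mem _ (Finset.mem_univ _))
    rw [hff, h0]; rfl

/-- transversality from spanning after base field extension -/
theorem span_transverse {L : Type*} [Field L] (e : L →+* F) (S : Set (Matrix (Fin m) (Fin m) L))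
    (hS : Submodule.span L S = ⊤) (B C : Matrix (Fin m) (Fin m) F) (hB : B ≠ 0) (hC : C ≠ 0) :
    ∃ A ∈ S, B * A.map e * C ≠ 0 := by
  by_contra hcon
  push Not at hcon
  have hall : ∀ A : Matrix (Fin m) (Fin m) L, B * A.map e * C = 0 := by
    intro A
    have hA : A ∈ Submodule.span L S := by rw [hS]; trivial
    induction hA using Submodule.span_induction with
    | mem x hx => exact hcon x hx
    | zero => simp
    | add x y _ _ hx hy =>
      rw [Matrix.map_add _ (map_add e), mul_add, add_mul, hx, hy, add_zero]
    | smul c x _ hx =>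
      have : (c • x).map e = e c • x.map e := by ext; simp
      rw [this, Matrix.mul_smul, Matrix.smul_mul, hx, smul_zero]
  obtain ⟨i, a, hBa⟩ : ∃ i a, B i a ≠ 0 := by
    by_contra h; push Not at h; exact hB (by ext i j; exact h i j)
  obtain ⟨b, j, hCb⟩ : ∃ i a, C i a ≠ 0 := by
    by_contra h; push Not at h; exact hC (by ext i j; exact h i j)
  have h := congrFun (congrFun (hall (Matrix.single a b 1)) i) j
  have hm : (Matrix.single a b (1:L)).map e = Matrix.single a b (1 : F) := by
    ext x y
    simp [Matrix.single_apply, apply_ite e]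
  rw [hm] at h
  simp [Matrix.mul_apply, Matrix.single_apply, ite_and] at h

  rcases h with h | h
  · exact hBa h
  · exact hCb h
end Zar
end UTA

end

section
open Matrix Pointwise
open Filter Topology

namespace UTA

section ThmB
variable {L : Type*} [Field L] {m : ℕ} (v : AbsoluteValue L ℝ) {Γ : Type*} [Group Γ]
  (ρ : Γ →* GL (Fin m) L) (U : Ultrafilter ℕ)

abbrev Kap := LimF U (fun _ => v)

theorem exists_const_lim (x : L) : ∃ y, IsLim U (fun _ => v) (fun _ => x) y :=
  IsLim.exists_lim (C := v x) (by simp)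

noncomputable def constHom : L →+* Kap v U where
  toFun x := (exists_const_lim v U x).choose
  map_one' := (exists_const_lim v U 1).choose_spec.unique IsLim.one
  map_zero' := (exists_const_lim v U 0).choose_spec.unique IsLim.zero
  map_mul' x y := (exists_const_lim v U (x * y)).choose_spec.unique
    ((exists_const_lim v U x).choose_spec.mul (exists_const_lim v U y).choose_spec)
  map_add' x y := (exists_const_lim v U (x + y)).choose_spec.unique
    ((exists_const_lim v U x).choose_spec.add (exists_const_lim v U y).choose_spec)

theorem isLim_const (x : L) : IsLim U (fun _ => v) (fun _ => x) (constHom v U x) :=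
  (exists_const_lim v U x).choose_spec

theorem isLimM_const (A : Matrix (Fin m) (Fin m) L) :
    IsLimM U (fun _ => v) (fun _ => A) (A.map (constHom v U)) := fun _ _ => isLim_const v U _

def Red (g : ℕ → Γ) (c : ℕ → L) (X : Matrix (Fin m) (Fin m) (Kap v U)) : Prop :=
  (∀ i, c i ≠ 0) ∧ IsLimM U (fun _ => v) (fun i => c i • (ρ (g i)).1) X

variable {v ρ U}

theorem Red.mul {g g' : ℕ → Γ} {c c' : ℕ → L} {X X' : Matrix (Fin m) (Fin m) (Kap v U)}
    (h : Red v ρ U g c X) (h' : Red v ρ U g' c' X') :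
    Red v ρ U (fun i => g i * g' i) (fun i => c i * c' i) (X * X') := by
  refine ⟨fun i => mul_ne_zero (h.1 i) (h'.1 i), ?_⟩
  have := h.2.mul h'.2
  refine this.congr (Eventually.of_forall fun i => ?_)
  simp [Matrix.smul_mul, Matrix.mul_smul, smul_smul, mul_comm]

variable (v ρ U)
noncomputable def rho2 : Γ →* GL (Fin m) (Kap v U) :=
  (Matrix.GeneralLinearGroup.map (constHom v U)).comp ρ

theorem rho2_val (h : Γ) : (rho2 v ρ U h).1 = (ρ h).1.map (constHom v U) := rfl

theorem Red.const (h : Γ) : Red v ρ U (fun _ => h) (fun _ => 1) (rho2 v ρ U h).1 := by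
  refine ⟨fun _ => one_ne_zero, ?_⟩
  simp only [one_smul]
  exact isLimM_const v U _

theorem exists_red (hm : 0 < m) (g : ℕ → Γ) : ∃ c X, Red v ρ U g c X ∧ X ≠ 0 := by
  haveI : Nonempty (Fin m) := ⟨⟨0, hm⟩⟩
  have h1 : ∀ i, ∃ t : Fin m × Fin m, ∀ s : Fin m × Fin m,
      v ((ρ (g i)).1 s.1 s.2) ≤ v ((ρ (g i)).1 t.1 t.2) := by
    intro i
    obtain ⟨t, _, ht⟩ := Finset.exists_max_image (Finset.univ : Finset (Fin m × Fin m))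
      (fun s => v ((ρ (g i)).1 s.1 s.2)) ⟨(⟨0, hm⟩, ⟨0, hm⟩), Finset.mem_univ _⟩
    exact ⟨t, fun s => ht s (Finset.mem_univ _)⟩
  choose t ht using h1
  have hne : ∀ i, (ρ (g i)).1 (t i).1 (t i).2 ≠ 0 := by
    intro i h0
    have h2 : (ρ (g i)).1 = 0 := by
      ext a b
      have := ht i (a, b)
      rw [h0, map_zero] at this
      exact v.eq_zero.1 (le_antisymm this (v.nonneg _))
    have h3 : (ρ (g i)).1 * (ρ (g i))⁻¹.1 = 1 := (ρ (g i)).mul_inv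
    rw [h2, zero_mul] at h3
    exact zero_ne_one h3
  have hle : ∀ i a b, v ((((ρ (g i)).1 (t i).1 (t i).2)⁻¹ • (ρ (g i)).1) a b) ≤ 1 := by
    intro i a b
    rw [Matrix.smul_apply, smul_eq_mul, map_mul, map_inv₀, inv_mul_le_iff₀ (v.pos (hne i)), mul_one]
    exact ht i (a, b)
  obtain ⟨X, hX⟩ := IsLimM.exists_lim (U := U) (av := fun _ => v)
    (A := fun i => ((ρ (g i)).1 (t i).1 (t i).2)⁻¹ • (ρ (g i)).1)
    (fun a b => ⟨1, Eventually.of_forall fun i => hle i a b⟩)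
  refine ⟨fun i => ((ρ (g i)).1 (t i).1 (t i).2)⁻¹, X, ⟨fun i => inv_ne_zero (hne i), hX⟩, ?_⟩
  rintro rfl
  have h5 : ∀ᶠ i in (U : Filter ℕ), ∀ a b,
      v ((((ρ (g i)).1 (t i).1 (t i).2)⁻¹ • (ρ (g i)).1) a b) < 1 := by
    refine eventually_all.2 fun a => eventually_all.2 fun b => ?_
    exact (isLim_zero_iff.1 (hX a b)).eventually (gt_mem_nhds one_pos)
  obtain ⟨i, hi⟩ := h5.exists
  have := hi (t i).1 (t i).2
  rw [Matrix.smul_apply, smul_eq_mul, inv_mul_cancel₀ (hne i), map_one] at this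
  exact lt_irrefl _ this

theorem rank_lt_of_mulVec {F : Type*} [Field F] (X : Matrix (Fin m) (Fin m) F) {w : Fin m → F}
    (hw : w ≠ 0) (h : X *ᵥ w = 0) : X.rank < m := by
  have h1 := LinearMap.finrank_range_add_finrank_ker X.mulVecLin
  have h2 : Module.finrank F (LinearMap.range X.mulVecLin) = X.rank := rfl
  have h3 : 0 < Module.finrank F (LinearMap.ker X.mulVecLin) := by
    rw [Module.finrank_pos_iff_exists_ne_zero]
    exact ⟨⟨w, h⟩, fun h0 => hw (congrArg Subtype.val h0)⟩
  simp only [Module.finrank_fintype_fun_eq_card, Fintype.card_fin] at h1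
  omega

theorem exists_singular_red (hU : (U : Filter ℕ) ≤ atTop) (hm : 0 < m) (γ : Γ) (lam mu : L)
    (hlm : v mu < v lam) (u z : Fin m → L) (hu : u ≠ 0) (hz : z ≠ 0)
    (hγu : (ρ γ).1 *ᵥ u = lam • u) (hγz : (ρ γ).1 *ᵥ z = mu • z) :
    ∃ g c X, Red v ρ U g c X ∧ X ≠ 0 ∧ X.rank < m := by
  obtain ⟨c, X, hX, hX0⟩ := exists_red v ρ U hm (fun N => γ ^ N)
  refine ⟨_, c, X, hX, hX0, ?_⟩
  have hlam : lam ≠ 0 := by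
    rintro rfl
    rw [map_zero] at hlm
    exact absurd hlm (not_lt.2 (v.nonneg _))
  have hpow : ∀ (N : ℕ) (w : Fin m → L) (x : L), (ρ γ).1 *ᵥ w = x • w →
      (ρ (γ ^ N)).1 *ᵥ w = x ^ N • w := by
    intro N w x h
    induction N with
    | zero => simp
    | succ N ih =>
      rw [pow_succ, map_mul, Units.val_mul, ← Matrix.mulVec_mulVec, h, Matrix.mulVec_smul, ih,
        smul_smul, pow_succ, mul_comm]
  obtain ⟨j, hj⟩ := Function.ne_iff.1 hu
  have h1 : ∃ y, IsLim U (fun _ => v) (fun N => c N * lam ^ N) y := by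
    have h2 := (hX.2.mulVec (v := fun _ => u) (w := fun j => constHom v U (u j))
      (fun j => isLim_const v U (u j)) j).mul (isLim_const v U (u j)⁻¹)
    refine ⟨_, h2.congr (Eventually.of_forall fun N => ?_)⟩
    rw [Matrix.smul_mulVec, hpow N u lam hγu]
    simp only [Pi.smul_apply, smul_eq_mul]
    have : u j ≠ 0 := hj
    field_simp
  obtain ⟨y, hy⟩ := h1
  have h3 : IsLim U (fun _ => v) (fun N => (mu / lam) ^ N) 0 := by
    rw [isLim_zero_iff]
    have h4 : v (mu / lam) < 1 := by
      rw [map_div₀, div_lt_one (v.pos hlam)]; exact hlm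
    have := (tendsto_pow_atTop_nhds_zero_of_lt_one (v.nonneg _) h4).mono_left hU
    simpa [map_pow] using this
  have h5 : X *ᵥ (fun j => constHom v U (z j)) = 0 := by
    funext a
    have h6 := hX.2.mulVec (v := fun _ => z) (w := fun j => constHom v U (z j))
      (fun j => isLim_const v U (z j)) a
    have h7 := (hy.mul h3).mul (isLim_const v U (z a))
    rw [mul_zero, zero_mul] at h7
    refine h6.unique (h7.congr (Eventually.of_forall fun N => ?_))
    rw [Matrix.smul_mulVec, hpow N z mu hγz]
    simp only [Pi.smul_apply, smul_eq_mul, div_pow]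
    field_simp
  refine rank_lt_of_mulVec X (fun h0 => hz ?_) h5
  funext j
  exact (map_eq_zero (constHom v U)).1 (congrFun h0 j)

theorem exists_left_factor {F : Type*} [Field F] (X Y : Matrix (Fin m) (Fin m) F)
    (h : Y.rank ≤ (X * Y).rank) : ∃ Z : Matrix (Fin m) (Fin m) F, Z * X * Y = Y := by
  let x := Matrix.toLin' X
  let y := Matrix.toLin' Y
  have hr : (LinearMap.range (x.comp (LinearMap.range y).subtype)) = LinearMap.range (Matrix.toLin' (X * Y)) := by
    rw [Matrix.toLin'_mul, LinearMap.range_comp, Submodule.range_subtype, LinearMap.range_comp]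
  have hinj : Function.Injective (x.comp (LinearMap.range y).subtype) := by
    rw [← LinearMap.ker_eq_bot, ← Submodule.finrank_eq_zero (R := F)]
    have h1 := LinearMap.finrank_range_add_finrank_ker (x.comp (LinearMap.range y).subtype)
    rw [hr] at h1
    have h2 : Module.finrank F (LinearMap.range (Matrix.toLin' (X * Y))) = (X * Y).rank := rfl
    have h3 : Module.finrank F (LinearMap.range y) = Y.rank := rfl
    omega
  obtain ⟨g, hg⟩ := LinearMap.exists_leftInverse_of_injective _ (LinearMap.ker_eq_bot.2 hinj)
  refine ⟨LinearMap.toMatrix' ((LinearMap.range y).subtype.comp g), ?_⟩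
  apply Matrix.toLin'.injective
  rw [Matrix.toLin'_mul, Matrix.toLin'_mul, Matrix.toLin'_toMatrix']
  refine LinearMap.ext fun w => ?_
  exact congrArg Subtype.val (LinearMap.congr_fun hg ⟨y w, LinearMap.mem_range_self y w⟩)
end ThmB
end UTA

end

section
open Matrix Pointwise
open Filter Topology

namespace UTA

section ThmB
variable {L : Type*} [Field L] {m : ℕ} (v : AbsoluteValue L ℝ) {Γ : Type*} [Group Γ]
  (ρ : Γ →* GL (Fin m) L)

theorem bool_eq_of_ne_linv {i : Fin 2} {b b' : Bool} (h : (i, b') ≠ linv (i, b)) : b' = b := by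
  cases b <;> cases b' <;> simp_all [linv]

set_option maxHeartbeats 1000000 in
theorem thmB (hspan : ∀ Γ0 : Subgroup Γ, Γ0.FiniteIndex →
      Submodule.span L ((fun g => (ρ g).1) '' (Γ0 : Set Γ)) = ⊤)
    (γ : Γ) (lam mu : L)
    (hlm : v mu < v lam) (u z : Fin m → L) (hu : u ≠ 0) (hz : z ≠ 0)
    (hγu : (ρ γ).1 *ᵥ u = lam • u) (hγz : (ρ γ).1 *ᵥ z = mu • z) :
    ∃ a : Fin 2 → Γ, Cert v (fun j => ρ (a j)) := by
  classical
  have hm : 0 < m := by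
    rcases Nat.eq_zero_or_pos m with rfl | h
    · exact absurd (Subsingleton.elim u 0) hu
    · exact h
  let U : Ultrafilter ℕ := hyperfilter ℕ
  have hU : (U : Filter ℕ) ≤ atTop := by
    rw [← Nat.cofinite_eq_atTop]; exact hyperfilter_le_cofinite
  let ρ2 := rho2 v ρ U
  have hsp : ∀ Γ0 : Subgroup Γ, Γ0.FiniteIndex → ∀ B C : Matrix (Fin m) (Fin m) (Kap v U),
      B ≠ 0 → C ≠ 0 → ∃ h ∈ Γ0, B * (ρ2 h).1 * C ≠ 0 := by
    intro Γ0 hfi B C hB hC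
    obtain ⟨_, ⟨h, hh, rfl⟩, hne⟩ := span_transverse (constHom v U) _ (hspan Γ0 hfi) B C hB hC
    exact ⟨h, hh, hne⟩
  have hex : ∃ r, ∃ g c X, Red v ρ U g c X ∧ X ≠ 0 ∧ X.rank = r ∧ r < m := by
    obtain ⟨g, c, X, h1, h2, h3⟩ := exists_singular_red v ρ U hU hm γ lam mu hlm u z hu hz hγu hγz
    exact ⟨_, g, c, X, h1, h2, rfl, h3⟩
  obtain ⟨g, c, π, hπ, hπ0, hπr, hrm⟩ := Nat.find_spec hex
  set r := Nat.find hex with hr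
  have hmin : ∀ g c X, Red v ρ U g c X → X ≠ 0 → r ≤ X.rank := by
    intro g c X h1 h2
    by_contra hlt
    push Not at hlt
    exact Nat.find_min hex hlt ⟨g, c, X, h1, h2, rfl, hlt.trans hrm⟩
  obtain ⟨c', π', hπ', hπ'0⟩ := exists_red v ρ U hm (fun i => (g i)⁻¹)
  obtain ⟨h, hh⟩ := exists_transverse ρ2 hsp (ι := Unit) (fun _ => π) (fun _ => π')
    (fun _ => hπ0) (fun _ => hπ'0)
  obtain ⟨hA0, hA'0⟩ := hh ()
  set A := π * (ρ2 h).1 * π' with hA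
  set A' := π * (ρ2 h⁻¹).1 * π' with hA'
  obtain ⟨l0, hl0⟩ := exists_transverse ρ2 hsp (ι := Bool) (fun b => cond b A A')
    (fun b => cond b A A') (by rintro (_ | _) <;> assumption) (by rintro (_ | _) <;> assumption)
  have hAA := (hl0 true).1
  have hAA' := (hl0 false).2
  simp only [cond_true, cond_false] at hAA hAA'
  -- cancellation of group elements
  have hunitr : ∀ (g : Γ) (B : Matrix (Fin m) (Fin m) (Kap v U)), B * (ρ2 g).1 = 0 → B = 0 := by
    intro g B hB
    have : B * (ρ2 g).1 * (ρ2 g)⁻¹.1 = 0 := by rw [hB, zero_mul]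
    rwa [Matrix.mul_assoc, (ρ2 g).mul_inv, mul_one] at this
  have hunitl : ∀ (g : Γ) (B : Matrix (Fin m) (Fin m) (Kap v U)), (ρ2 g).1 * B = 0 → B = 0 := by
    intro g B hB
    have : (ρ2 g)⁻¹.1 * ((ρ2 g).1 * B) = 0 := by rw [hB, mul_zero]
    rwa [← Matrix.mul_assoc, (ρ2 g).inv_mul, one_mul] at this
  let aN : ℕ → Γ := fun i => g i * h * (g i)⁻¹ * l0
  let Q : Bool → Matrix (Fin m) (Fin m) (Kap v U) := fun b =>
    cond b (A * (ρ2 l0).1) ((ρ2 l0⁻¹).1 * A')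
  let q : Bool → ℕ → L := fun b => cond b (fun i => c i * 1 * c' i * 1) (fun i => 1 * (c i * 1 * c' i))
  let s : Bool → ℕ → Γ := fun b i => cond b (aN i) (aN i)⁻¹
  have hQ : ∀ b, Red v ρ U (s b) (q b) (Q b) := by
    rintro (_ | _)
    · have := (Red.const v ρ U l0⁻¹).mul ((hπ.mul (Red.const v ρ U h⁻¹)).mul hπ')
      have e : s false = fun i => l0⁻¹ * (g i * h⁻¹ * (g i)⁻¹) := by
        funext i
        simp only [s, aN, cond_false, _root_.mul_inv_rev, inv_inv]
        group
      rw [e]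
      exact this
    · exact ((hπ.mul (Red.const v ρ U h)).mul hπ').mul (Red.const v ρ U l0)
  have hQ0 : ∀ b, Q b ≠ 0 := by
    rintro (_ | _) h0
    · exact hA'0 (hunitl _ _ h0)
    · exact hA0 (hunitr _ _ h0)
  have hQQ : ∀ b, Q b * Q b ≠ 0 := by
    rintro (_ | _) h0
    · have h0' : (ρ2 l0⁻¹).1 * A' * ((ρ2 l0⁻¹).1 * A') = 0 := h0
      rw [Matrix.mul_assoc, ← Matrix.mul_assoc A'] at h0'
      exact hAA' (hunitl _ _ h0')
    · have h0' : A * (ρ2 l0).1 * (A * (ρ2 l0).1) = 0 := h0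
      rw [← Matrix.mul_assoc] at h0'
      exact hAA (hunitr _ _ h0')
  have hQr : ∀ b, (Q b).rank ≤ r := by
    have e1 : A.rank ≤ r := by
      rw [hA, Matrix.mul_assoc, ← hπr]; exact Matrix.rank_mul_le_left _ _
    have e2 : A'.rank ≤ r := by
      rw [hA', Matrix.mul_assoc, ← hπr]; exact Matrix.rank_mul_le_left _ _
    rintro (_ | _)
    · exact (Matrix.rank_mul_le_right _ _).trans e2
    · exact (Matrix.rank_mul_le_left _ _).trans e1
  obtain ⟨l, hl⟩ := exists_transverse ρ2 hsp (ι := Bool × Bool) (fun b => Q b.1)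
    (fun b => Q b.2) (fun b => hQ0 _) (fun b => hQ0 _)
  -- four letters
  let X : Fin 2 × Bool → Matrix (Fin m) (Fin m) (Kap v U) := fun x =>
    if x.1 = 0 then Q x.2 else (ρ2 l).1 * Q x.2 * (ρ2 l⁻¹).1
  let cc : Fin 2 × Bool → ℕ → L := fun x =>
    if x.1 = 0 then q x.2 else fun i => 1 * q x.2 i * 1
  let aa : ℕ → Fin 2 → Γ := fun i => ![aN i, l * aN i * l⁻¹]
  have hX : ∀ x, Red v ρ U (fun i => letter (aa i) x) (cc x) (X x) := by
    rintro ⟨i, b⟩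
    fin_cases i
    · exact hQ b
    · have h3 := ((Red.const v ρ U l).mul (hQ b)).mul (Red.const v ρ U l⁻¹)
      have e : (fun i => letter (aa i) (1, b)) = fun i => l * s b i * l⁻¹ := by
        funext i
        cases b <;> simp [letter, aa, s, _root_.mul_assoc]
      show Red v ρ U (fun i => letter (aa i) (1, b)) _ _
      rw [e]
      exact h3
  have hXr : ∀ x, (X x).rank ≤ r := by
    rintro ⟨i, b⟩
    fin_cases i
    · exact hQr b
    · exact (Matrix.rank_mul_le_left _ _).trans ((Matrix.rank_mul_le_right _ _).trans (hQr b))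
  have hll : (ρ2 l⁻¹).1 * (ρ2 l).1 = 1 := by
    rw [map_inv]; exact (ρ2 l).inv_mul
  have hXX : ∀ x y, y ≠ linv x → X x * X y ≠ 0 := by
    rintro ⟨i, b⟩ ⟨j, b'⟩ hxy h0
    have hbb : i = j → b' = b := by
      rintro rfl
      exact bool_eq_of_ne_linv hxy
    fin_cases i <;> fin_cases j
    · obtain rfl := hbb rfl
      exact hQQ _ h0
    · have h0' : Q b * ((ρ2 l).1 * Q b' * (ρ2 l⁻¹).1) = 0 := h0
      rw [← Matrix.mul_assoc, ← Matrix.mul_assoc] at h0'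
      exact (hl (b, b')).1 (hunitr _ _ h0')
    · have h0' : (ρ2 l).1 * Q b * (ρ2 l⁻¹).1 * Q b' = 0 := h0
      rw [Matrix.mul_assoc, Matrix.mul_assoc] at h0'
      have := hunitl _ _ h0'
      rw [← Matrix.mul_assoc] at this
      exact (hl (b, b')).2 this
    · obtain rfl := hbb rfl
      have h0' : (ρ2 l).1 * Q b' * (ρ2 l⁻¹).1 * ((ρ2 l).1 * Q b' * (ρ2 l⁻¹).1) = 0 := h0
      have e : (ρ2 l).1 * Q b' * (ρ2 l⁻¹).1 * ((ρ2 l).1 * Q b' * (ρ2 l⁻¹).1) =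
          (ρ2 l).1 * (Q b' * ((ρ2 l⁻¹).1 * (ρ2 l).1) * Q b' * (ρ2 l⁻¹).1) := by
        simp only [Matrix.mul_assoc]
      rw [e, hll, mul_one] at h0'
      exact hQQ _ (hunitr _ _ (hunitl _ _ h0'))
  have hXne : ∀ x, X x ≠ 0 := by
    intro x h0
    refine hXX x x ?_ (by rw [h0, zero_mul])
    rcases x with ⟨i, b⟩
    cases b <;> simp [linv]
  have hZ : ∀ x y, ∃ Z : Matrix (Fin m) (Fin m) (Kap v U), y ≠ linv x → Z * X x * X y = X y := by
    intro x y
    by_cases hxy : y = linv x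
    · exact ⟨0, fun h => absurd hxy h⟩
    · obtain ⟨Z, hZ⟩ := exists_left_factor (X x) (X y)
        ((hXr y).trans (hmin _ _ _ ((hX x).mul (hX y)) (hXX x y hxy)))
      exact ⟨Z, fun _ => hZ⟩
  choose Z hZ using hZ
  -- base point
  let o : Fin m := ⟨0, hm⟩
  have hs0 : (Matrix.single o o (1 : Kap v U)) ≠ 0 := by
    intro h0
    have := congrFun (congrFun h0 o) o
    simp at this
  obtain ⟨t, ht⟩ := exists_transverse ρ2 hsp (ι := Fin 2 × Bool) X (fun _ => Matrix.single o o 1)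
    hXne (fun _ => hs0)
  let p : Fin m → Kap v U := (ρ2 t).1 *ᵥ Pi.single o 1
  have hp : ∀ x, X x *ᵥ p ≠ 0 := by
    intro x h0
    apply (ht x).1
    have h0' : (X x * (ρ2 t).1) *ᵥ Pi.single o 1 = 0 := by
      rw [← Matrix.mulVec_mulVec]; exact h0
    ext a b
    by_cases hb : b = o
    · subst hb
      rw [Matrix.mul_single_apply_same]
      have := congrFun h0' a
      simpa using this
    · rw [Matrix.mul_single_apply_of_ne _ _ _ _ _ (fun h => hb h)]
      rfl
  have hcc0 : ∀ x, IsLim U (fun _ => v) (fun i => cc x i * cc (linv x) i) 0 := by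
    intro x
    have h5 := ((hX x).mul (hX (linv x))).2
    have h6 : IsLimM U (fun _ => v) (fun i => (cc x i * cc (linv x) i) • (1 : Matrix (Fin m) (Fin m) L))
        (X x * X (linv x)) := by
      refine h5.congr (Eventually.of_forall fun i => ?_)
      simp only [letter_linv, mul_inv_cancel, map_one, Units.val_one]
    have h7 := h6 o o
    simp only [Matrix.smul_apply, Matrix.one_apply_eq, smul_eq_mul, mul_one] at h7
    have h8 := h6.det
    simp only [Matrix.det_smul, Matrix.det_one, mul_one] at h8
    have h9 : (X x * X (linv x)).det = 0 := by
      rw [Matrix.det_mul]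
      have : (X x).det = 0 := by
        by_contra hd
        have e1 := Matrix.rank_of_det_ne_zero hd
        have e2 := hXr x
        simp at e1
        omega
      rw [this, zero_mul]
    rw [h9] at h8
    have h10 := (h7.pow (Fintype.card (Fin m))).unique h8
    have h11 : (X x * X (linv x)) o o = 0 := eq_zero_of_pow_eq_zero h10
    rwa [h11] at h7
  -- choose δ
  have hδ : ∀ᶠ δ : ℝ in 𝓝[>] 0, (∀ x y, 2 * δ * mN (limAbs U fun _ => v) (Z x y) < 1) ∧
      (∀ x, δ * vN (limAbs U fun _ => v) p < vN (limAbs U fun _ => v) (X x *ᵥ p)) := by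
    refine (eventually_all.2 fun x => eventually_all.2 fun y => ?_).and (eventually_all.2 fun x => ?_)
    · have : Tendsto (fun δ : ℝ => 2 * δ * mN (limAbs U fun _ => v) (Z x y)) (𝓝 0)
          (𝓝 (2 * 0 * mN (limAbs U fun _ => v) (Z x y))) := by
        apply Continuous.tendsto; fun_prop
      exact (this.mono_left nhdsWithin_le_nhds).eventually (gt_mem_nhds (by simp))
    · have : Tendsto (fun δ : ℝ => δ * vN (limAbs U fun _ => v) p) (𝓝 0)
          (𝓝 (0 * vN (limAbs U fun _ => v) p)) := by
        apply Continuous.tendsto; fun_prop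
      exact (this.mono_left nhdsWithin_le_nhds).eventually
        (gt_mem_nhds (by rw [zero_mul]; exact vN_pos _ (hp x)))
  obtain ⟨δ, ⟨hδ1, hδ2⟩, hδ0⟩ := (hδ.and self_mem_nhdsWithin).exists
  have hδ0 : 0 < δ := hδ0
  have hfin := cert_transfer (U := U) (av := fun _ => v) (A := fun i j => ρ (aa i j)) cc Z p δ X
    (fun x => by
      have := (hX x).2
      refine this.congr (Eventually.of_forall fun i => ?_)
      rcases x with ⟨j, b⟩
      cases b <;> simp [letter])
    hδ0 (fun x => Eventually.of_forall fun i => (hX x).1 i)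
    (fun x y hxy => by rw [hZ x y hxy, sub_self]; simp [mN]; positivity)
    hδ1 hδ2
    (fun x => (isLim_zero_iff.1 (hcc0 x)).eventually (gt_mem_nhds (by positivity)))
  obtain ⟨i, hi⟩ := hfin.exists
  exact ⟨aa i, hi⟩
end ThmB
end UTA

end

section
open Matrix Pointwise
open Filter Topology

namespace UTA

set_option linter.unusedSectionVars false
set_option linter.style.haveILetI false

section Places

theorem ext_hom_dom {D S C : Type*} [CommRing D] [IsDomain D] [CommRing S] [IsDomain S]
    [Field C] [IsAlgClosed C] (i : D →+* S) (hi : Function.Injective i) (hinteg : i.IsIntegral)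
    (j : D →+* C) (hj : Function.Injective j) : ∃ φ : S →+* C, φ.comp i = j := by
  letI : Algebra D S := i.toAlgebra
  letI : Algebra D C := j.toAlgebra
  have : Module.IsTorsionFree D S := Module.isTorsionFree_iff_algebraMap_injective.2 hi
  have : Module.IsTorsionFree D C := Module.isTorsionFree_iff_algebraMap_injective.2 hj
  have : Algebra.IsIntegral D S := ⟨fun x => hinteg x⟩
  have : Algebra.IsAlgebraic D S := Algebra.IsIntegral.isAlgebraic
  let φ : S →ₐ[D] C := IsAlgClosed.lift
  exact ⟨φ.toRingHom, RingHom.ext fun x => φ.commutes x⟩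

theorem ext_hom {B R C : Type*} [CommRing B] [CommRing R] [Field C] [IsAlgClosed C]
    (f : B →+* R) (hf : f.IsIntegral) (g : B →+* C) (hker : RingHom.ker f ≤ RingHom.ker g) :
    ∃ ψ : R →+* C, ψ.comp f = g := by
  have hex : ∃ Q : Ideal R, Q.IsPrime ∧ Q.comap f = RingHom.ker g := by
    letI : Algebra B R := f.toAlgebra
    have : Algebra.IsIntegral B R := ⟨fun x => hf x⟩
    have : (RingHom.ker g).IsPrime := RingHom.ker_isPrime g
    obtain ⟨Q, -, hQp, hQ⟩ := Ideal.exists_ideal_over_prime_of_isIntegral (S := R)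
      (RingHom.ker g) (⊥ : Ideal R) hker
    exact ⟨Q, hQp, hQ⟩
  obtain ⟨Q, hQp, hQ⟩ := hex
  let i : (B ⧸ Q.comap f) →+* R ⧸ Q := Ideal.quotientMap Q f le_rfl
  have hi : Function.Injective i := Ideal.quotientMap_injective
  let j : (B ⧸ Q.comap f) →+* C := Ideal.Quotient.lift _ g (fun a ha => by
    rw [hQ] at ha; exact ha)
  have hj : Function.Injective j := by
    rw [injective_iff_map_eq_zero]
    intro x hx
    obtain ⟨y, rfl⟩ := Ideal.Quotient.mk_surjective x
    rw [Ideal.Quotient.eq_zero_iff_mem, hQ]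
    exact hx
  have hp : (Q.comap f).IsPrime := hQ ▸ RingHom.ker_isPrime g
  obtain ⟨φ, hφ⟩ := ext_hom_dom i hi (by
    intro x
    obtain ⟨r, rfl⟩ := Ideal.Quotient.mk_surjective x
    obtain ⟨p, hp, hp0⟩ := hf r
    refine ⟨p.map (Ideal.Quotient.mk _), hp.map _, ?_⟩
    rw [Polynomial.eval₂_map]
    have h1 : i.comp (Ideal.Quotient.mk (Q.comap f)) = (Ideal.Quotient.mk Q).comp f := by
      ext b; rfl
    rw [h1, ← Polynomial.hom_eval₂, hp0, map_zero]) j hj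
  refine ⟨φ.comp (Ideal.Quotient.mk Q), ?_⟩
  ext b
  have h2 : (Ideal.Quotient.mk Q) (f b) = i (Ideal.Quotient.mk (Q.comap f) b) := rfl
  change φ (Ideal.Quotient.mk Q (f b)) = g b
  rw [h2]
  exact RingHom.congr_fun hφ (Ideal.Quotient.mk _ b)

structure Places (R : Type*) [CommRing R] where
  W : Type
  fW : Fintype W
  neW : Nonempty W
  C : W → Type
  nf : ∀ w, NormedField (C w)
  ac : ∀ w, IsAlgClosed (C w)
  E : ℕ
  P : Set (∀ w, Set (R →+* C w))
  ne : ∀ Ψ ∈ P, ∀ w, (Ψ w).Nonempty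
  q0 : ∀ X : Set R, X.Finite → (∀ x ∈ X, x ≠ 0) → ∃ Ψ ∈ P, ∀ x ∈ X, ∀ w, ∀ ψ ∈ Ψ w, ψ x ≠ 0
  q1 : ∀ Ψ ∈ P, ∀ x, (∀ w, ∀ ψ ∈ Ψ w, ψ x ≠ 0) → ∀ B : ℝ, 1 ≤ B →
    (∀ w, ∀ ψ ∈ Ψ w, ‖ψ x‖ ≤ B) → ∀ w, ∀ ψ ∈ Ψ w, 1 ≤ ‖ψ x‖ * B ^ E
  q2 : ∀ B : ℝ, ∃ Y : ∀ w, Set (C w), (∀ w, (Y w).Finite) ∧ ∀ Ψ ∈ P, ∀ x,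
    (∀ w, ∀ ψ ∈ Ψ w, ‖ψ x‖ ≤ B) → ∀ w, ∀ ψ ∈ Ψ w, ψ x ∈ Y w
  q3 : ∀ Ψ ∈ P, ∀ x, ∃ B : ℝ, ∀ w, ∀ ψ ∈ Ψ w, ‖ψ x‖ ≤ B

structure BasePlaces (A : Type*) [CommRing A] where
  W : Type
  fW : Fintype W
  neW : Nonempty W
  C : W → Type
  nf : ∀ w, NormedField (C w)
  ac : ∀ w, IsAlgClosed (C w)
  T : Set (∀ w, A →+* C w)
  t0 : ∀ X : Set A, X.Finite → (∀ x ∈ X, x ≠ 0) → ∃ τ ∈ T, ∀ x ∈ X, ∀ w, τ w x ≠ 0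
  t1 : ∀ τ ∈ T, ∀ a, (∀ w, τ w a ≠ 0) → 1 ≤ ∏ w, ‖τ w a‖
  t2 : ∀ B : ℝ, ∃ Y : ∀ w, Set (C w), (∀ w, (Y w).Finite) ∧ ∀ τ ∈ T, ∀ a,
    (∀ w, ‖τ w a‖ ≤ B) → ∀ w, τ w a ∈ Y w

section lift
variable {A R : Type*} [CommRing A] [IsDomain A] [IsIntegrallyClosed A] [CommRing R] [IsDomain R]
  [Algebra A R] [Module.Finite A R] [Module.IsTorsionFree A R]

theorem exists_ext_root {C : Type*} [Field C] [IsAlgClosed C] (τ : A →+* C) (x : R) (z : C)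
    (hz : ((minpoly A x).map τ).IsRoot z) :
    ∃ ψ : R →+* C, ψ.comp (algebraMap A R) = τ ∧ ψ x = z := by
  have hx : IsIntegral A x := Algebra.IsIntegral.isIntegral x
  obtain ⟨ψ, hψ⟩ := ext_hom (B := Polynomial A) (Polynomial.aeval x).toRingHom (by
      intro r
      obtain ⟨p, hp, hp0⟩ : IsIntegral A r := Algebra.IsIntegral.isIntegral r
      refine ⟨p.map Polynomial.C, hp.map _, ?_⟩
      rw [Polynomial.eval₂_map]
      convert hp0 using 2
      ext a; simp)
    (Polynomial.eval₂RingHom τ z) (by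
      intro p hp
      have hp' : Polynomial.aeval x p = 0 := hp
      obtain ⟨q, rfl⟩ := minpoly.isIntegrallyClosed_dvd hx hp'
      have : Polynomial.eval₂ τ z (minpoly A x) = 0 := by
        rw [← Polynomial.eval_map]; exact hz
      rw [RingHom.mem_ker, map_mul]
      simp [this])
  refine ⟨ψ, ?_, ?_⟩
  · ext a
    have := RingHom.congr_fun hψ (Polynomial.C a)
    simpa using this
  · have := RingHom.congr_fun hψ Polynomial.X
    simpa using this

theorem root_of_ext {C : Type*} [Field C] (τ : A →+* C) (x : R) (ψ : R →+* C)
    (h : ψ.comp (algebraMap A R) = τ) : ((minpoly A x).map τ).IsRoot (ψ x) := by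
  rw [Polynomial.IsRoot, Polynomial.eval_map, ← h, ← Polynomial.hom_eval₂]
  have := minpoly.aeval A x
  rw [Polynomial.aeval_def] at this
  rw [this, map_zero]

theorem natDegree_minpoly_le' (x : R) :
    (minpoly A x).natDegree ≤ (⊤ : Submodule A R).spanFinrank := by
  obtain ⟨p, hp, hd, h0⟩ := LinearMap.exists_monic_and_natDegree_eq_and_aeval_eq_zero A
    (Algebra.lmul A R x)
  rw [← hd]
  refine Polynomial.natDegree_le_natDegree (minpoly.min A x hp ?_)
  rw [Polynomial.aeval_algHom_apply] at h0
  have := congrArg (fun f : Module.End A R => f 1) h0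
  simpa using this

theorem coeff_zero_minpoly_ne {x : R} (hx0 : x ≠ 0) : (minpoly A x).coeff 0 ≠ 0 := by
  intro h
  have hx : IsIntegral A x := Algebra.IsIntegral.isIntegral x
  obtain ⟨q, hq⟩ := Polynomial.X_dvd_iff.2 h
  have hqm : q.Monic := Polynomial.Monic.of_mul_monic_left Polynomial.monic_X
    (hq ▸ minpoly.monic hx)
  have h1 := minpoly.aeval A x
  rw [hq, map_mul, Polynomial.aeval_X] at h1
  have h2 := (mul_eq_zero.1 h1).resolve_left hx0
  have h3 := Polynomial.natDegree_le_natDegree (minpoly.min A x hqm h2)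
  rw [hq, Polynomial.natDegree_X_mul hqm.ne_zero] at h3
  omega

theorem prod_le_of_mem {C : Type*} [NormedField C] {B : ℝ} (hB : 1 ≤ B) (s : Multiset C)
    (hs : ∀ z ∈ s, ‖z‖ ≤ B) : ‖s.prod‖ ≤ B ^ s.card := by
  induction s using Multiset.induction with
  | empty => simp
  | cons a s ih =>
    rw [Multiset.prod_cons, norm_mul, Multiset.card_cons, pow_succ, mul_comm]
    exact mul_le_mul (ih fun z hz => hs z (Multiset.mem_cons_of_mem hz))
      (hs a (Multiset.mem_cons_self a s)) (norm_nonneg _) (by positivity)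

theorem liftPlaces (b : BasePlaces A) : Nonempty (Places R) := by
  classical
  letI := b.fW
  letI := b.neW
  letI := b.nf
  letI := b.ac
  set D := (⊤ : Submodule A R).spanFinrank with hD
  let Φ : (∀ w, A →+* b.C w) → ∀ w, Set (R →+* b.C w) :=
    fun τ w => {ψ | ψ.comp (algebraMap A R) = τ w}
  have hmon : ∀ x : R, (minpoly A x).Monic := fun x =>
    minpoly.monic (Algebra.IsIntegral.isIntegral x)
  have hroots : ∀ τ : ∀ w, A →+* b.C w, ∀ (x : R) w z, z ∈ ((minpoly A x).map (τ w)).roots →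
      ∃ ψ ∈ Φ τ w, ψ x = z := fun τ x w z hz => by
    obtain ⟨ψ, h1, h2⟩ := exists_ext_root (τ w) x z (Polynomial.isRoot_of_mem_roots hz)
    exact ⟨ψ, h1, h2⟩
  have hroots' : ∀ τ : ∀ w, A →+* b.C w, ∀ (x : R) w, ∀ ψ ∈ Φ τ w,
      ψ x ∈ ((minpoly A x).map (τ w)).roots := fun τ x w ψ hψ => by
    rw [Polynomial.mem_roots ((hmon x).map _).ne_zero]
    exact root_of_ext (τ w) x ψ hψ
  have hc0 : ∀ τ : ∀ w, A →+* b.C w, ∀ (x : R) w, ‖τ w ((minpoly A x).coeff 0)‖ =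
      ‖((minpoly A x).map (τ w)).roots.prod‖ := fun τ x w => by
    have := (IsAlgClosed.splits ((minpoly A x).map (τ w))).coeff_zero_eq_prod_roots_of_monic
      ((hmon x).map _)
    rw [Polynomial.coeff_map] at this
    rw [this]; simp
  have hcard : ∀ τ : ∀ w, A →+* b.C w, ∀ (x : R) w,
      ((minpoly A x).map (τ w)).roots.card ≤ D := fun τ x w => by
    rw [← (IsAlgClosed.splits ((minpoly A x).map (τ w))).natDegree_eq_card_roots,
      (hmon x).natDegree_map]
    exact natDegree_minpoly_le' x
  refine ⟨⟨b.W, b.fW, b.neW, b.C, b.nf, b.ac, D * Fintype.card b.W, Φ '' b.T, ?_, ?_, ?_, ?_, ?_⟩⟩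
  · rintro _ ⟨τ, hτ, rfl⟩ w
    have hd : ((minpoly A (1 : R)).map (τ w)).degree ≠ 0 := by
      rw [(hmon 1).degree_map]
      exact (minpoly.degree_pos (Algebra.IsIntegral.isIntegral _)).ne'
    obtain ⟨z, hz⟩ := IsAlgClosed.exists_root _ hd
    obtain ⟨ψ, h1, h2⟩ := exists_ext_root (τ w) (1 : R) z hz
    exact ⟨ψ, h1⟩
  · intro X hX hX0
    obtain ⟨τ, hτ, h⟩ := b.t0 ((fun x => (minpoly A x).coeff 0) '' X) (hX.image _) (by
      rintro _ ⟨x, hx, rfl⟩; exact coeff_zero_minpoly_ne (hX0 x hx))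
    refine ⟨_, ⟨τ, hτ, rfl⟩, fun x hx w ψ hψ h0 => ?_⟩
    have h1 := hroots' τ x w ψ hψ
    apply h _ ⟨x, hx, rfl⟩ w
    rw [h0] at h1
    have h2 := Polynomial.isRoot_of_mem_roots h1
    rw [Polynomial.IsRoot, ← Polynomial.coeff_zero_eq_eval_zero, Polynomial.coeff_map] at h2
    exact h2
  · rintro _ ⟨τ, hτ, rfl⟩ x hx0 B hB hxB w0 ψ hψ
    have hle : ∀ w, ‖τ w ((minpoly A x).coeff 0)‖ ≤ B ^ D := fun w => by
      rw [hc0]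
      refine (prod_le_of_mem hB _ fun z hz => ?_).trans (pow_le_pow_right₀ hB (hcard τ x w))
      obtain ⟨ψ, h1, rfl⟩ := hroots τ x w z hz
      exact hxB w ψ h1
    have hle0 : ‖τ w0 ((minpoly A x).coeff 0)‖ ≤ ‖ψ x‖ * B ^ D := by
      rw [hc0]
      obtain ⟨s, hs⟩ := Multiset.exists_cons_of_mem (hroots' τ x w0 ψ hψ)
      have hc := hcard τ x w0
      rw [hs, Multiset.card_cons] at hc
      rw [hs, Multiset.prod_cons, norm_mul]
      refine mul_le_mul_of_nonneg_left ?_ (norm_nonneg _)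
      refine (prod_le_of_mem hB _ fun z hz => ?_).trans
        (pow_le_pow_right₀ hB (show s.card ≤ D by omega))
      obtain ⟨ψ, h1, rfl⟩ := hroots τ x w0 z (hs ▸ Multiset.mem_cons_of_mem hz)
      exact hxB w0 ψ h1
    have h1 := b.t1 τ hτ ((minpoly A x).coeff 0) (fun w => by
      rw [← norm_ne_zero_iff, hc0, norm_ne_zero_iff]
      intro h
      obtain ⟨ψ, h1, h2⟩ := hroots τ x w 0 (Multiset.prod_eq_zero_iff.1 h)
      exact hx0 w ψ h1 h2)
    refine h1.trans ?_
    rw [← Finset.mul_prod_erase _ _ (Finset.mem_univ w0)]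
    have h2 : ∏ w ∈ Finset.univ.erase w0, ‖τ w ((minpoly A x).coeff 0)‖ ≤
        (B ^ D) ^ (Finset.univ.erase w0).card :=
      (Finset.prod_le_prod (fun _ _ => norm_nonneg _) (fun w _ => hle w)).trans_eq (by simp)
    have h3 : D * Fintype.card b.W = D + D * (Finset.univ.erase w0).card := by
      rw [Finset.card_erase_of_mem (Finset.mem_univ _), Finset.card_univ]
      have := Fintype.card_pos (α := b.W)
      obtain ⟨k, hk⟩ : ∃ k, Fintype.card b.W = k + 1 := ⟨_, (Nat.succ_pred_eq_of_pos this).symm⟩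
      rw [hk]; simp; ring
    rw [h3, pow_add, ← mul_assoc, pow_mul]
    exact mul_le_mul hle0 h2 (Finset.prod_nonneg fun _ _ => norm_nonneg _) (by positivity)
  · intro B
    set B1 : ℝ := max 1 B with hB1
    obtain ⟨Y, hYf, hY⟩ := b.t2 (B1 ^ D * 2 ^ D)
    refine ⟨fun w => ⋃ (f : Polynomial (b.C w)) (_ : f.natDegree ≤ D ∧ ∀ i : ℕ, f.coeff i ∈ Y w),
      ((f.map (RingHom.id _)).roots.toFinset : Set (b.C w)),
      fun w => Polynomial.bUnion_roots_finite (RingHom.id _) D (hYf w), ?_⟩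
    rintro _ ⟨τ, hτ, rfl⟩ x hxB w ψ hψ
    simp only [Set.mem_iUnion]
    refine ⟨(minpoly A x).map (τ w), ⟨?_, ?_⟩, ?_⟩
    · rw [(hmon x).natDegree_map]; exact natDegree_minpoly_le' x
    · intro i
      rw [Polynomial.coeff_map]
      refine hY τ hτ _ (fun w => ?_) w
      rw [← Polynomial.coeff_map]
      refine (Polynomial.coeff_le_of_roots_le (B := B1) i (hmon x) (IsAlgClosed.splits _)
        fun z hz => ?_).trans ?_
      · obtain ⟨ψ, h1, rfl⟩ := hroots τ x w z hz
        exact (hxB w ψ h1).trans (le_max_right _ _)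
      · have h1 : (1 : ℝ) ≤ B1 := le_max_left _ _
        have h2 := natDegree_minpoly_le' (A := A) x
        refine mul_le_mul (pow_le_pow_right₀ h1 (by omega)) ?_ (by positivity) (by positivity)
        calc (((minpoly A x).natDegree.choose i : ℕ) : ℝ) ≤ ((2 ^ (minpoly A x).natDegree : ℕ) : ℝ) :=
              by exact_mod_cast Nat.choose_le_two_pow _ _
          _ ≤ 2 ^ D := by push_cast; exact pow_le_pow_right₀ (by norm_num) h2
    · rw [Polynomial.map_id]
      simpa using hroots' τ x w ψ hψ
  · rintro _ ⟨τ, hτ, rfl⟩ x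
    have : ∀ w, ∃ B : ℝ, 0 ≤ B ∧ ∀ ψ ∈ Φ τ w, ‖ψ x‖ ≤ B := fun w => by
      refine ⟨∑ z ∈ ((minpoly A x).map (τ w)).roots.toFinset, ‖z‖,
        Finset.sum_nonneg fun _ _ => norm_nonneg _, fun ψ hψ => ?_⟩
      exact Finset.single_le_sum (f := fun z : b.C w => ‖z‖) (fun _ _ => norm_nonneg _)
        (Multiset.mem_toFinset.2 (hroots' τ x w ψ hψ))
    choose B hB0 hB using this
    exact ⟨∑ w, B w, fun w ψ hψ => (hB w ψ hψ).trans
      (Finset.single_le_sum (fun w _ => hB0 w) (Finset.mem_univ w))⟩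

end lift
end Places
end UTA

end

section
open Matrix Pointwise
open Filter Topology

namespace UTA

section BP

theorem mvBase {A1 O1 : Type*} [CommRing A1] [CommRing O1] [IsDomain O1] [Infinite O1] (s : ℕ)
    (φ : A1 →+* O1) (hφ : Function.Injective φ) (b : BasePlaces O1) :
    Nonempty (BasePlaces (MvPolynomial (Fin s) A1)) := by
  classical
  letI := b.fW
  letI := b.neW
  letI := b.nf
  letI := b.ac
  refine ⟨⟨b.W, b.fW, b.neW, b.C, b.nf, b.ac,
    {σ | ∃ τ ∈ b.T, ∃ z : Fin s → O1, σ = fun w => (τ w).comp (MvPolynomial.eval₂Hom φ z)},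
    ?_, ?_, ?_⟩⟩
  · intro X hX hX0
    have h1 : (∏ x ∈ hX.toFinset, MvPolynomial.map φ x) ≠ 0 := by
      rw [Finset.prod_ne_zero_iff]
      intro x hx h
      apply hX0 x (hX.mem_toFinset.1 hx)
      apply MvPolynomial.map_injective φ hφ
      rw [h, map_zero]
    have h2 : ∃ z : Fin s → O1, MvPolynomial.eval z (∏ x ∈ hX.toFinset, MvPolynomial.map φ x) ≠ 0 := by
      by_contra hcon
      push Not at hcon
      exact h1 (MvPolynomial.funext fun z => by rw [hcon z, map_zero])
    obtain ⟨z, hz⟩ := h2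
    rw [map_prod, Finset.prod_ne_zero_iff] at hz
    obtain ⟨τ, hτ, h⟩ := b.t0 ((fun x => MvPolynomial.eval₂Hom φ z x) '' X) (hX.image _) (by
      rintro _ ⟨x, hx, rfl⟩
      have := hz x (hX.mem_toFinset.2 hx)
      rwa [MvPolynomial.eval_map] at this)
    exact ⟨_, ⟨τ, hτ, z, rfl⟩, fun x hx w => h _ ⟨x, hx, rfl⟩ w⟩
  · rintro _ ⟨τ, hτ, z, rfl⟩ a ha
    exact b.t1 τ hτ _ ha
  · intro B
    obtain ⟨Y, hYf, hY⟩ := b.t2 B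
    refine ⟨Y, hYf, ?_⟩
    rintro _ ⟨τ, hτ, z, rfl⟩ a ha w
    exact hY τ hτ _ ha w

/-- The absolute value `2 ^ deg` on rational functions. -/
noncomputable def degAbs (F : Type) [Field F] : AbsoluteValue (RatFunc F) ℝ where
  toFun r := open Classical in if r = 0 then 0 else (2 : ℝ) ^ r.intDegree
  map_mul' x y := by
    by_cases hx : x = 0
    · simp [hx]
    by_cases hy : y = 0
    · simp [hy]
    simp only [hx, hy, mul_eq_zero, or_self, if_false]
    rw [RatFunc.intDegree_mul hx hy, zpow_add₀ (by norm_num)]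
  nonneg' x := by
    split_ifs
    · rfl
    · positivity
  eq_zero' x := by
    split_ifs with h
    · simp [h]
    · simp only [h, iff_false]; positivity
  add_le' x y := by
    by_cases hx : x = 0
    · subst hx; rw [zero_add]; simp
    by_cases hy : y = 0
    · subst hy; rw [add_zero]; simp
    by_cases hxy : x + y = 0
    · simp only [hxy, if_true, hx, hy, if_false]; positivity
    simp only [hx, hy, hxy, if_false]
    have h := RatFunc.intDegree_add_le hy hxy
    rcases le_max_iff.1 h with h | h
    · have := zpow_le_zpow_right₀ (one_le_two (α := ℝ)) h
      have h2 : (0 : ℝ) < 2 ^ y.intDegree := by positivity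
      linarith
    · have := zpow_le_zpow_right₀ (one_le_two (α := ℝ)) h
      have h2 : (0 : ℝ) < 2 ^ x.intDegree := by positivity
      linarith

theorem degAbs_poly {F : Type} [Field F] {q : Polynomial F} (hq : q ≠ 0) :
    degAbs F (algebraMap _ (RatFunc F) q) = (2 : ℝ) ^ q.natDegree := by
  classical
  change (if _ then _ else _) = _
  rw [if_neg (by simpa using hq), RatFunc.intDegree_polynomial, zpow_natCast]

theorem exists_algclosed_ext (F : Type) [NontriviallyNormedField F] [CompleteSpace F]
    [IsUltrametricDist F] : ∃ (C : Type) (_ : NormedField C) (_ : IsAlgClosed C) (f : F →+* C),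
      ∀ x, ‖f x‖ = ‖x‖ := by
  letI := spectralNorm.normedField F (AlgebraicClosure F)
  exact ⟨AlgebraicClosure F, spectralNorm.normedField F (AlgebraicClosure F), inferInstance,
    algebraMap F (AlgebraicClosure F), fun x => spectralNorm_extends x⟩

theorem exists_ext_degAbs (p : ℕ) [Fact p.Prime] :
    ∃ (C : Type) (_ : NormedField C) (_ : IsAlgClosed C) (f : RatFunc (ZMod p) →+* C),
      ∀ x, ‖f x‖ = degAbs (ZMod p) x := by
  set v := degAbs (ZMod p)
  let em : RatFunc (ZMod p) →+* v.Completion :=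
    (UniformSpace.Completion.coeRingHom (α := WithAbs v)).comp (WithAbs.equiv v).symm.toRingHom
  have hem : ∀ x, ‖em x‖ = v x := fun x => by
    change ‖(((WithAbs.toAbs v x : WithAbs v)) : v.Completion)‖ = v x
    rw [UniformSpace.Completion.norm_coe]
    rfl
  letI : NontriviallyNormedField v.Completion :=
    { (inferInstance : NormedField v.Completion) with
      non_trivial := ⟨em RatFunc.X, by
        rw [hem, ← RatFunc.algebraMap_X, degAbs_poly Polynomial.X_ne_zero]
        norm_num⟩ }
  have : IsUltrametricDist v.Completion := by
    apply IsUltrametricDist.isUltrametricDist_of_forall_norm_natCast_le_one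
    intro n
    rw [← map_natCast em, hem, ← map_natCast (algebraMap (Polynomial (ZMod p)) (RatFunc (ZMod p)))]
    by_cases h : (n : Polynomial (ZMod p)) = 0
    · rw [h]; simp
    · rw [degAbs_poly h]; simp
  obtain ⟨C, h1, h2, f, hf⟩ := exists_algclosed_ext v.Completion
  exact ⟨C, h1, h2, f.comp em, fun x => by rw [RingHom.comp_apply, hf, hem]⟩

theorem basePlacesFpT (p : ℕ) [Fact p.Prime] : Nonempty (BasePlaces (Polynomial (ZMod p))) := by
  classical
  obtain ⟨C, h1, h2, f, hf⟩ := exists_ext_degAbs p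
  let g : Polynomial (ZMod p) →+* C := f.comp (algebraMap _ (RatFunc (ZMod p)))
  have hg0 : ∀ q, q ≠ 0 → ‖g q‖ = (2 : ℝ) ^ q.natDegree := fun q hq => by
    change ‖f _‖ = _
    rw [hf, degAbs_poly hq]
  have hgne : ∀ q, q ≠ 0 → g q ≠ 0 := fun q hq h => by
    have := hg0 q hq
    rw [h, norm_zero] at this
    have h2 : (0 : ℝ) < 2 ^ q.natDegree := by positivity
    linarith
  refine ⟨⟨Unit, inferInstance, inferInstance, fun _ => C, fun _ => h1, fun _ => h2,
    {fun _ => g}, ?_, ?_, ?_⟩⟩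
  · intro X hX hX0
    exact ⟨_, rfl, fun x hx w => hgne x (hX0 x hx)⟩
  · rintro _ rfl a ha
    have ha0 : a ≠ 0 := fun h => ha () (by rw [h, map_zero])
    simp only [Finset.univ_unique, Finset.prod_const, Finset.card_singleton, pow_one]
    rw [hg0 a ha0]
    exact one_le_pow₀ one_le_two
  · intro B
    obtain ⟨M, hM⟩ := pow_unbounded_of_one_lt B (one_lt_two)
    refine ⟨fun _ => g '' {q | q.degree < M}, fun _ => Set.Finite.image _ ?_, ?_⟩
    · have : Finite (Polynomial.degreeLT (ZMod p) M) :=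
        Finite.of_equiv _ (Polynomial.degreeLTEquiv (ZMod p) M).symm.toEquiv
      refine (Set.toFinite (Polynomial.degreeLT (ZMod p) M : Set (Polynomial (ZMod p)))).subset ?_
      intro q hq
      exact Polynomial.mem_degreeLT.2 hq
    · rintro _ rfl a ha w
      refine ⟨a, ?_, rfl⟩
      by_cases h0 : a = 0
      · simp [h0]
      have h3 := (ha ()).trans_lt hM
      rw [hg0 a h0] at h3
      have h4 := (pow_lt_pow_iff_right₀ (one_lt_two (α := ℝ))).1 h3
      rw [Set.mem_ofPred_eq, Polynomial.degree_eq_natDegree h0]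
      exact_mod_cast h4

/-- completions of `ℚ` -/
def CW (N : ℕ) : Option {p // p ∈ N.primeFactors} → Type
  | none => ℂ
  | some p => @PadicAlgCl p.1 ⟨Nat.prime_of_mem_primeFactors p.2⟩

theorem cw_exists (N : ℕ) : ∃ (nf : ∀ w, NormedField (CW N w)) (_ : ∀ w, IsAlgClosed (CW N w))
    (f : ∀ w, ℚ →+* CW N w), (∀ q, ‖f none q‖ = |(q : ℝ)|) ∧
      ∀ p q, ‖f (some p) q‖ = (padicNorm p.1 q : ℝ) := by
  have : ∀ w, ∃ (nf : NormedField (CW N w)) (_ : IsAlgClosed (CW N w)) (f : ℚ →+* CW N w),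
      ∀ q, ‖f q‖ = match w with
        | none => |(q : ℝ)|
        | some p => (padicNorm p.1 q : ℝ) := by
    intro w
    match w with
    | none =>
      exact ⟨(inferInstance : NormedField ℂ), (inferInstance : IsAlgClosed ℂ),
        (algebraMap ℚ ℂ), fun q => by
          change ‖((algebraMap ℚ ℂ q : ℂ))‖ = |(q : ℝ)|
          simp⟩
    | some p =>
      haveI : Fact p.1.Prime := ⟨Nat.prime_of_mem_primeFactors p.2⟩
      refine ⟨(inferInstance : NormedField (PadicAlgCl p.1)),
        (inferInstance : IsAlgClosed (PadicAlgCl p.1)),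
        (algebraMap ℚ_[p.1] (PadicAlgCl p.1)).comp (algebraMap ℚ ℚ_[p.1]), fun q => ?_⟩
      change ‖(algebraMap ℚ_[p.1] (PadicAlgCl p.1)) (algebraMap ℚ ℚ_[p.1] q)‖ = (padicNorm p.1 q : ℝ)
      rw [← Padic.eq_padicNorm, ← PadicAlgCl.norm_extends]
      rfl
  choose nf ac f hf using this
  exact ⟨nf, ac, f, fun q => hf none q, fun p q => hf (some p) q⟩

theorem prod_padicNorm_nat (N : ℕ) (hN : N ≠ 0) :
    (N : ℚ) * ∏ p ∈ N.primeFactors, padicNorm p N = 1 := by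
  have h1 : (N : ℚ) = ∏ p ∈ N.primeFactors, (p : ℚ) ^ (padicValNat p N) := by
    have h0 : ((N : ℕ) : ℚ) = ((∏ p ∈ N.primeFactors, p ^ N.factorization p : ℕ) : ℚ) :=
      congrArg _ (Nat.prod_primeFactors_pow_factorization hN)
    rw [h0]
    push_cast
    exact Finset.prod_congr rfl fun p hp => by
      rw [Nat.factorization_def _ (Nat.prime_of_mem_primeFactors hp)]
  have h2 : (N : ℚ) * ∏ p ∈ N.primeFactors, padicNorm p N =
      (∏ p ∈ N.primeFactors, (p : ℚ) ^ (padicValNat p N)) * ∏ p ∈ N.primeFactors, padicNorm p N :=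
    congrArg (· * _) h1
  rw [h2, ← Finset.prod_mul_distrib]
  refine Finset.prod_eq_one fun p hp => ?_
  have hp0 : (p : ℚ) ≠ 0 := by exact_mod_cast (Nat.prime_of_mem_primeFactors hp).ne_zero
  rw [padicNorm.eq_zpow_of_nonzero (by exact_mod_cast hN), padicValRat.of_nat, _root_.zpow_neg,
    zpow_natCast]
  field_simp

theorem prod_padicNorm_int (N : ℕ) (z : ℤ) (hz : z ≠ 0) :
    1 ≤ |(z : ℚ)| * ∏ p ∈ N.primeFactors, padicNorm p z := by
  have h1 : ∏ p ∈ N.primeFactors, (p : ℚ) ^ (padicValInt p z) ≤ |(z : ℚ)| := by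
    have h2 : ∏ p ∈ N.primeFactors, p ^ (padicValInt p z) ∣ z.natAbs := by
      apply Finset.prod_dvd_of_isRelPrime
      · intro p hp q hq hpq
        exact Nat.coprime_iff_isRelPrime.1 <| Nat.Coprime.pow _ _ ((Nat.coprime_primes (Nat.prime_of_mem_primeFactors hp)
          (Nat.prime_of_mem_primeFactors hq)).2 hpq)
      · intro p hp
        exact pow_padicValNat_dvd
    have h3 := Nat.le_of_dvd (Int.natAbs_pos.2 hz) h2
    have h4 : ((∏ p ∈ N.primeFactors, p ^ (padicValInt p z) : ℕ) : ℚ) ≤ (z.natAbs : ℚ) := by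
      exact_mod_cast h3
    rw [Nat.cast_natAbs] at h4
    push_cast at h4
    exact h4
  have h5 : ∏ p ∈ N.primeFactors, padicNorm p z = (∏ p ∈ N.primeFactors, (p : ℚ) ^ (padicValInt p z))⁻¹ := by
    rw [← Finset.prod_inv_distrib]
    refine Finset.prod_congr rfl fun p hp => ?_
    rw [padicNorm.eq_zpow_of_nonzero (by exact_mod_cast hz), padicValRat.of_int, _root_.zpow_neg,
      zpow_natCast]
  have h6 : 0 < ∏ p ∈ N.primeFactors, (p : ℚ) ^ (padicValInt p z) :=
    Finset.prod_pos fun p hp => by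
      have := (Nat.prime_of_mem_primeFactors hp).pos
      positivity
  rw [h5, ← div_eq_mul_inv, le_div_iff₀ h6, one_mul]
  exact h1

/-- a rational in `ℤ[1/N]` which is integral at all `p ∣ N` is an integer -/
theorem int_of_padic (N k : ℕ) (hN : N ≠ 0) (q : ℚ) (z : ℤ) (hq : q * N ^ k = z)
    (h : ∀ p ∈ N.primeFactors, padicNorm p q ≤ 1) : ∃ y : ℤ, q = y := by
  have hden : (q.den : ℤ) ∣ (N : ℤ) ^ k := by
    have h1 : (q.num : ℚ) * N ^ k = z * q.den := by
      rw [← hq]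
      nth_rewrite 2 [← Rat.num_div_den q]
      have : (q.den : ℚ) ≠ 0 := by exact_mod_cast q.den_ne_zero
      field_simp
    have h2 : q.num * (N : ℤ) ^ k = z * q.den := by exact_mod_cast h1
    have h3 : (q.den : ℤ) ∣ q.num * (N : ℤ) ^ k := ⟨z, by rw [h2, mul_comm]⟩
    refine IsCoprime.dvd_of_dvd_mul_left ?_ h3
    exact (Rat.isCoprime_num_den q).symm
  have hd1 : q.den = 1 := by
    by_contra hne
    obtain ⟨p, hp, hpd⟩ := Nat.exists_prime_and_dvd hne
    haveI : Fact p.Prime := ⟨hp⟩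
    have hpN : p ∣ N := by
      have : (p : ℤ) ∣ (N : ℤ) ^ k := (Int.natCast_dvd_natCast.2 hpd).trans hden
      exact hp.dvd_of_dvd_pow (by exact_mod_cast this)
    have h1 := h p (Nat.mem_primeFactors.2 ⟨hp, hpN, hN⟩)
    have h2 : padicNorm p q * padicNorm p q.den = padicNorm p q.num := by
      rw [← padicNorm.mul, Rat.mul_den_eq_num]
    have h3 : padicNorm p q.den < 1 := by
      have := (padicNorm.int_lt_one_iff (p := p) (q.den : ℤ)).2 (by exact_mod_cast hpd)
      exact_mod_cast this
    have h4 : padicNorm p q.num = 1 := by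
      rw [padicNorm.int_eq_one_iff]
      intro hd
      have := q.reduced
      have h5 : p ∣ q.num.natAbs := Int.natCast_dvd.1 hd
      exact Nat.Prime.not_coprime_iff_dvd.2 ⟨p, hp, h5, hpd⟩ this
    have h6 : 0 ≤ padicNorm p q.den := padicNorm.nonneg _
    have h7 : 0 ≤ padicNorm p q := padicNorm.nonneg _
    nlinarith
  exact ⟨q.num, by rw [← Rat.num_div_den q, hd1]; simp⟩

theorem basePlacesAway (N : ℕ) (hN : N ≠ 0) :
    Nonempty (BasePlaces (Localization.Away (N : ℤ))) := by
  classical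
  obtain ⟨nf, ac, f, hf0, hfp⟩ := cw_exists N
  have hNQ : (N : ℚ) ≠ 0 := by exact_mod_cast hN
  let h : Localization.Away (N : ℤ) →+* ℚ := IsLocalization.Away.lift (N : ℤ)
    (g := algebraMap ℤ ℚ) (by simpa using hNQ)
  have hsurj : ∀ a, ∃ (k : ℕ) (z : ℤ), h a * (N : ℚ) ^ k = z := fun a => by
    obtain ⟨k, z, hz⟩ := IsLocalization.Away.surj (N : ℤ) a
    refine ⟨k, z, ?_⟩
    have := congrArg h hz
    rw [map_mul, map_pow] at this
    simpa [h, IsLocalization.Away.lift_eq] using this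
  have hinj : ∀ a, a ≠ 0 → h a ≠ 0 := fun a ha h0 => by
    obtain ⟨k, z, hz⟩ := IsLocalization.Away.surj (N : ℤ) a
    have h1 := congrArg h hz
    rw [map_mul, h0, zero_mul] at h1
    have h2 : (z : ℚ) = 0 := by
      simpa [h, IsLocalization.Away.lift_eq] using h1.symm
    have h3 : z = 0 := by exact_mod_cast h2
    rw [h3, map_zero] at hz
    have hu : IsUnit (algebraMap ℤ (Localization.Away (N : ℤ)) (N : ℤ) ^ k) :=
      (IsLocalization.Away.algebraMap_isUnit (N : ℤ)).pow k
    exact ha ((hu.mul_left_eq_zero).1 hz)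
  refine ⟨⟨Option {p // p ∈ N.primeFactors}, inferInstance, inferInstance, CW N, nf, ac,
    {fun w => (f w).comp h}, ?_, ?_, ?_⟩⟩
  · intro X hX hX0
    refine ⟨_, rfl, fun x hx w => ?_⟩
    exact (map_ne_zero (f w)).2 (hinj x (hX0 x hx))
  · rintro _ rfl a ha
    have hq0 : h a ≠ 0 := fun h0 => ha none (by rw [RingHom.comp_apply, h0, map_zero])
    rw [Fintype.prod_option]
    simp only [RingHom.comp_apply, hf0, hfp]
    obtain ⟨k, z, hz⟩ := hsurj a
    have hz0 : z ≠ 0 := by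
      rintro rfl
      rw [Int.cast_zero, mul_eq_zero] at hz
      exact hz.elim hq0 (pow_ne_zero _ hNQ)
    have h1 := prod_padicNorm_int N z hz0
    have h2 : (1 : ℚ) ≤ |h a| * ∏ p ∈ N.primeFactors, padicNorm p (h a) := by
      refine h1.trans_eq ?_
      have h3 : ∀ p ∈ N.primeFactors, padicNorm p (z : ℚ) = padicNorm p (h a) * padicNorm p N ^ k := by
        intro p hp
        haveI : Fact p.Prime := ⟨Nat.prime_of_mem_primeFactors hp⟩
        rw [← hz, padicNorm.mul]
        congr 1
        induction k with
        | zero => simp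
        | succ k _ => 
          clear * -
          induction (k+1) with
          | zero => simp
          | succ k ih => rw [pow_succ, padicNorm.mul, ih, pow_succ]
      rw [Finset.prod_congr rfl h3, Finset.prod_mul_distrib, Finset.prod_pow, ← hz, abs_mul, abs_pow]
      have h4 := prod_padicNorm_nat N hN
      have h5 : |(N : ℚ)| = N := abs_of_nonneg (by positivity)
      rw [h5]
      calc |h a| * (N : ℚ) ^ k * ((∏ p ∈ N.primeFactors, padicNorm p (h a)) *
            (∏ p ∈ N.primeFactors, padicNorm p N) ^ k)
          = |h a| * (∏ p ∈ N.primeFactors, padicNorm p (h a)) *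
            ((N : ℚ) * ∏ p ∈ N.primeFactors, padicNorm p N) ^ k := by rw [mul_pow]; ring
        _ = _ := by rw [h4, one_pow, mul_one]
    rw [← Finset.prod_coe_sort] at h2
    have h3 : ((1 : ℚ) : ℝ) ≤ ((|h a| * ∏ p : {p // p ∈ N.primeFactors}, padicNorm p.1 (h a) : ℚ) : ℝ) :=
      Rat.cast_le.2 h2
    push_cast at h3
    exact h3
  · intro B
    obtain ⟨M, hM⟩ := pow_unbounded_of_one_lt B (one_lt_two)
    obtain ⟨L, hL⟩ := exists_nat_ge (B * N ^ M)
    refine ⟨fun w => (fun y : ℤ => f w ((y : ℚ) / N ^ M)) '' (Set.Icc (-(L : ℤ)) L),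
      fun w => Set.Finite.image _ (Set.finite_Icc _ _), ?_⟩
    rintro _ rfl a ha w
    have h1 : ∃ y : ℤ, h a * N ^ M = y := by
      obtain ⟨k, z, hz⟩ := hsurj a
      refine int_of_padic N k hN _ (z * N ^ M) (by push_cast; rw [← hz]; ring) ?_
      intro p hp
      haveI : Fact p.Prime := ⟨Nat.prime_of_mem_primeFactors hp⟩
      have h2 := ha (some ⟨p, hp⟩)
      rw [RingHom.comp_apply, hfp] at h2
      have hpow : ∀ k : ℕ, padicNorm p ((N : ℚ) ^ k) = padicNorm p N ^ k := by
        intro k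
        induction k with
        | zero => simp
        | succ k ih => rw [pow_succ, padicNorm.mul, ih, pow_succ]
      rw [padicNorm.mul, hpow]
      have h3 : padicNorm p (N : ℚ) ≤ 1 / p := by
        have := (padicNorm.dvd_iff_norm_le (p := p) (n := 1) (z := (N : ℤ))).1
          (by rw [pow_one]; exact_mod_cast (Nat.dvd_of_mem_primeFactors hp))
        simpa using this
      have h4 : padicNorm p (h a) ≤ p ^ M := by
        have : (padicNorm p (h a) : ℝ) ≤ ((p ^ M : ℚ) : ℝ) := by
          push_cast
          refine h2.trans (hM.le.trans (pow_le_pow_left₀ (by norm_num) ?_ M))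
          exact_mod_cast (Nat.prime_of_mem_primeFactors hp).two_le
        exact_mod_cast this
      have hp0 : (p : ℚ) ≠ 0 := by exact_mod_cast (Nat.prime_of_mem_primeFactors hp).ne_zero
      calc padicNorm p (h a) * padicNorm p N ^ M ≤ p ^ M * (1 / p) ^ M := by
            refine mul_le_mul h4 (pow_le_pow_left₀ (padicNorm.nonneg _) h3 M)
              (pow_nonneg (padicNorm.nonneg _) _) (by positivity)
        _ = 1 := by rw [← mul_pow, mul_one_div_cancel hp0, one_pow]
    obtain ⟨y, hy⟩ := h1
    refine ⟨y, ?_, ?_⟩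
    · have h2 := ha none
      rw [RingHom.comp_apply, hf0] at h2
      have h3 : |(y : ℝ)| ≤ L := by
        have h4 : (y : ℝ) = (h a : ℝ) * (N : ℝ) ^ M := by
          have := congrArg (fun q : ℚ => (q : ℝ)) hy
          push_cast at this
          exact this.symm
        rw [h4, abs_mul, abs_of_nonneg (show (0 : ℝ) ≤ (N : ℝ) ^ M by positivity)]
        exact (mul_le_mul_of_nonneg_right h2 (by positivity)).trans hL
      rw [abs_le] at h3
      exact ⟨by exact_mod_cast h3.1, by exact_mod_cast h3.2⟩
    · simp only [RingHom.comp_apply]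
      rw [← hy, mul_div_cancel_right₀ _ (pow_ne_zero _ hNQ)]

end BP
end UTA

end

section
open Matrix Pointwise
open Filter Topology

namespace UTA

section PE
universe u

theorem places_of_base {K : Type u} {A : Type} [Field K] [CommRing A] [IsDomain A] [IsIntegrallyClosed A]
    (f : A →+* K) (hf : Function.Injective f) (b : BasePlaces A) (Y : Finset K)
    (hY : ∀ y ∈ Y, f.IsIntegralElem y) :
    ∃ (R : Type u) (_ : CommRing R) (ι : R →+* K), Function.Injective ι ∧
      (∀ y ∈ Y, y ∈ Set.range ι) ∧ Nonempty (Places R) := by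
  letI : Algebra A K := f.toAlgebra
  have hfin : Module.Finite A (Algebra.adjoin A (Y : Set K)) :=
    Module.Finite.iff_fg.2 (fg_adjoin_of_finite Y.finite_toSet fun y hy => hY y hy)
  have htf : Module.IsTorsionFree A (Algebra.adjoin A (Y : Set K)) := by
    rw [Module.isTorsionFree_iff_algebraMap_injective]
    intro x y hxy
    exact hf (congrArg Subtype.val hxy)
  exact ⟨Algebra.adjoin A (Y : Set K), inferInstance, (Algebra.adjoin A (Y : Set K)).val.toRingHom,
    Subtype.val_injective, fun y hy => ⟨⟨y, Algebra.subset_adjoin hy⟩, rfl⟩, liftPlaces b⟩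

theorem noether_K (k : Type) {K : Type u} [Field K] [Field k] [Algebra k K] (Y : Finset K) :
    ∃ (s : ℕ) (G : MvPolynomial (Fin s) k →ₐ[k] K), Function.Injective G ∧
      ∀ y ∈ Y, G.toRingHom.IsIntegralElem y := by
  have hft : Algebra.FiniteType k (Algebra.adjoin k (Y : Set K)) :=
    Subalgebra.fg_iff_finiteType _ |>.1 ⟨Y, rfl⟩
  obtain ⟨s, g, hg, hgi⟩ := exists_integral_inj_algHom_of_fg k (Algebra.adjoin k (Y : Set K))
  refine ⟨s, (Algebra.adjoin k (Y : Set K)).val.comp g, Subtype.val_injective.comp hg, ?_⟩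
  intro y hy
  obtain ⟨p, hp, hp0⟩ := hgi ⟨y, Algebra.subset_adjoin hy⟩
  refine ⟨p, hp, ?_⟩
  have h1 := Polynomial.hom_eval₂ p g.toRingHom (Algebra.adjoin k (Y : Set K)).val.toRingHom
    ⟨y, Algebra.subset_adjoin hy⟩
  rw [hp0, map_zero] at h1
  exact h1.symm

theorem exists_common_N (Q : Finset ℚ) : ∃ N : ℕ, N ≠ 0 ∧ ∀ q ∈ Q, ∃ z : ℤ, q * N = z := by
  classical
  refine ⟨∏ q ∈ Q, q.den, Finset.prod_ne_zero_iff.2 fun q _ => q.den_ne_zero, fun q hq => ?_⟩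
  rw [← Finset.mul_prod_erase _ _ hq]
  refine ⟨q.num * (∏ q ∈ Q.erase q, q.den : ℕ), ?_⟩
  push_cast
  rw [← mul_assoc, Rat.mul_den_eq_num]

theorem places_exist (K : Type u) [Field K] (Y : Finset K) :
    ∃ (R : Type u) (_ : CommRing R) (ι : R →+* K), Function.Injective ι ∧
      (∀ y ∈ Y, y ∈ Set.range ι) ∧ Nonempty (Places R) := by
  classical
  obtain ⟨p, hp⟩ := CharP.exists K
  rcases CharP.char_is_prime_or_zero K p with hpp | rfl
  · haveI : Fact p.Prime := ⟨hpp⟩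
    letI : Algebra (ZMod p) K := ZMod.algebra K p
    obtain ⟨s, G, hG, hY⟩ := noether_K (ZMod p) Y
    obtain ⟨b0⟩ := basePlacesFpT p
    obtain ⟨b⟩ := mvBase s (Polynomial.C : ZMod p →+* _) Polynomial.C_injective b0
    exact places_of_base G.toRingHom hG b Y hY
  · haveI : CharZero K := CharP.charP_to_charZero K
    obtain ⟨s, G, hG, hY⟩ := noether_K ℚ Y
    choose! P hPm hP using hY
    let Q : Finset ℚ := Y.biUnion fun y => (P y).coeffs.biUnion fun c => c.coeffs
    obtain ⟨N, hN, hNQ⟩ := exists_common_N Q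
    have hNQ0 : (N : ℚ) ≠ 0 := by exact_mod_cast hN
    obtain ⟨b0⟩ := basePlacesAway N hN
    let h : Localization.Away (N : ℤ) →+* ℚ := IsLocalization.Away.lift (N : ℤ)
      (g := algebraMap ℤ ℚ) (by simpa using hNQ0)
    have hhz : ∀ z : ℤ, h (algebraMap ℤ _ z) = z := fun z => by
      simp [h, IsLocalization.Away.lift_eq]
    have hinj : Function.Injective h := by
      rw [injective_iff_map_eq_zero]
      intro a h0
      obtain ⟨k, z, hz⟩ := IsLocalization.Away.surj (N : ℤ) a
      have h1 := congrArg h hz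
      rw [map_mul, h0, zero_mul, hhz] at h1
      have h3 : z = 0 := by exact_mod_cast h1.symm
      rw [h3, map_zero] at hz
      have hu : IsUnit (algebraMap ℤ (Localization.Away (N : ℤ)) (N : ℤ) ^ k) :=
        (IsLocalization.Away.algebraMap_isUnit (N : ℤ)).pow k
      exact (hu.mul_left_eq_zero).1 hz
    have hrange : ∀ q ∈ Q, q ∈ Set.range h := fun q hq => by
      obtain ⟨z, hz⟩ := hNQ q hq
      obtain ⟨u, hu⟩ := IsLocalization.Away.algebraMap_isUnit
        (S := Localization.Away (N : ℤ)) (N : ℤ)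
      refine ⟨algebraMap ℤ _ z * (u⁻¹ : (Localization.Away (N : ℤ))ˣ), ?_⟩
      have h1 : h ((u⁻¹ : (Localization.Away (N : ℤ))ˣ) : Localization.Away (N : ℤ)) * N = 1 := by
        have h2 : h (u : Localization.Away (N : ℤ)) = N := by rw [hu, hhz]; simp
        rw [← h2, ← map_mul]; simp
      rw [map_mul, hhz, ← hz, mul_assoc, mul_comm (N : ℚ), h1, mul_one]
    have hdom : IsDomain (Localization.Away (N : ℤ)) := hinj.isDomain h
    have hinf : Infinite (Localization.Away (N : ℤ)) :=
      Infinite.of_injective (fun z : ℤ => algebraMap ℤ (Localization.Away (N : ℤ)) z) (fun a c hac => by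
        have := congrArg h hac
        simp only [hhz] at this
        exact_mod_cast this)
    have hufd : UniqueFactorizationMonoid (Localization.Away (N : ℤ)) :=
      inferInstanceAs (UniqueFactorizationMonoid (Localization (Submonoid.powers (N : ℤ))))
    obtain ⟨b⟩ := mvBase s (RingHom.id (Localization.Away (N : ℤ))) (fun _ _ h => h) b0
    refine places_of_base (A := MvPolynomial (Fin s) (Localization.Away (N : ℤ)))
      (G.toRingHom.comp (MvPolynomial.map h))
      (hG.comp (MvPolynomial.map_injective h hinj)) b Y ?_
    intro y hy
    have hlift : P y ∈ Polynomial.lifts (MvPolynomial.map (σ := Fin s) h) := by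
      rw [Polynomial.lifts_iff_coeff_lifts]
      intro i
      by_cases h0 : (P y).coeff i = 0
      · exact ⟨0, by rw [h0, map_zero]⟩
      rw [MvPolynomial.mem_range_map_iff_coeffs_subset]
      intro q hq
      apply hrange
      simp only [Q, Finset.mem_biUnion]
      exact ⟨y, hy, _, Polynomial.coeff_mem_coeffs h0, hq⟩
    obtain ⟨q, hq, -, hqm⟩ := Polynomial.lifts_and_natDegree_eq_and_monic hlift (hPm y hy)
    refine ⟨q, hqm, ?_⟩
    have h1 := hP y hy
    rw [← hq] at h1
    rw [← Polynomial.eval₂_map]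
    exact h1
end PE
end UTA

end

section
open Matrix Pointwise
open Filter Topology
namespace UTA


theorem burnside_end {Ω V : Type*} [Field Ω] [IsAlgClosed Ω] [AddCommGroup V] [Module Ω V]
    [FiniteDimensional Ω V] [Nontrivial V] (A : Subalgebra Ω (Module.End Ω V))
    (hirr : ∀ W : Submodule Ω V, (∀ a ∈ A, ∀ v ∈ W, a v ∈ W) → W = ⊥ ∨ W = ⊤) : A = ⊤ := by
  classical
  have hs : IsSimpleModule A V := by
    rw [isSimpleModule_iff]
    refine { exists_pair_ne := ⟨⊥, ⊤, bot_ne_top⟩, eq_bot_or_eq_top := fun W => ?_ }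
    have h := hirr (W.restrictScalars Ω) (fun a ha v hv => W.smul_mem (⟨a, ha⟩ : A) hv)
    rcases h with h | h
    · left
      exact Submodule.restrictScalars_injective Ω _ _ h
    · right
      exact Submodule.restrictScalars_injective Ω _ _ h
  have hb := (IsSimpleModule.algebraMap_end_bijective_of_isAlgClosed (A := A) (V := V) Ω).2
  rw [eq_top_iff]
  intro T _
  let f : Module.End (Module.End A V) V :=
    { toFun := T
      map_add' := T.map_add
      map_smul' := fun φ v => by
        obtain ⟨c, rfl⟩ := hb φ
        simp }
  let b := Module.finBasis Ω V
  obtain ⟨r, hr⟩ := jacobson_density (R := A) f (Finset.univ.image b)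
  have : T = r.1 := by
    apply b.ext
    intro i
    exact hr (b i) (by simp)
  rw [this]
  exact r.2

theorem burnside {Ω : Type*} [Field Ω] [IsAlgClosed Ω] {m : ℕ} (hm : 0 < m)
    (T : Submonoid (Matrix (Fin m) (Fin m) Ω))
    (hirr : ∀ W : Submodule Ω (Fin m → Ω), (∀ a ∈ T, ∀ v ∈ W, a *ᵥ v ∈ W) → W = ⊥ ∨ W = ⊤) :
    Submodule.span Ω (T : Set (Matrix (Fin m) (Fin m) Ω)) = ⊤ := by
  haveI : Nonempty (Fin m) := ⟨⟨0, hm⟩⟩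
  let e : Matrix (Fin m) (Fin m) Ω ≃ₐ[Ω] Module.End Ω (Fin m → Ω) := Matrix.toLinAlgEquiv'
  let A := Algebra.adjoin Ω (T : Set (Matrix (Fin m) (Fin m) Ω))
  have hA : A.map e.toAlgHom = ⊤ := by
    apply burnside_end
    intro W hW
    apply hirr
    intro a ha v hv
    have := hW (e a) ⟨a, Algebra.subset_adjoin ha, rfl⟩ v hv
    simpa [e] using this
  have hA' : A = ⊤ := by
    rw [eq_top_iff]
    intro x _
    have : e x ∈ A.map e.toAlgHom := by rw [hA]; trivial
    obtain ⟨y, hy, hxy⟩ := this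
    have : y = x := e.injective hxy
    exact this ▸ hy
  have := Algebra.adjoin_eq_span (R := Ω) (s := (T : Set (Matrix (Fin m) (Fin m) Ω)))
  rw [Submonoid.closure_eq] at this
  rw [← this]
  change Subalgebra.toSubmodule A = ⊤
  rw [hA']
  simp

open Classical in
noncomputable def trivAv (K : Type*) [Field K] : ℕ → AbsoluteValue K ℝ := fun _ => AbsoluteValue.trivial

theorem trivAv_le {K : Type*} [Field K] (i : ℕ) (x : K) : trivAv K i x ≤ 1 := by
  by_cases hx : x = 0 <;> simp [trivAv, AbsoluteValue.trivial, hx]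

theorem trivAv_lim {K : Type*} [Field K] {U : Ultrafilter ℕ} (f : ℕ → K) :
    ∃ x, IsLim U (trivAv K) f x :=
  IsLim.exists_lim (C := 1) (Eventually.of_forall fun i => trivAv_le i _)

theorem trivAv_zero {K : Type*} [Field K] {U : Ultrafilter ℕ} {f : ℕ → K}
    (h : IsLim U (trivAv K) f 0) : ∀ᶠ i in (U : Filter ℕ), f i = 0 := by
  rw [isLim_zero_iff] at h
  filter_upwards [h.eventually (gt_mem_nhds (zero_lt_one' ℝ))] with i hi
  by_contra hx
  simp [trivAv, hx] at hi

theorem trivAv_limM {K : Type*} [Field K] {U : Ultrafilter ℕ} {p q : Type*} (A : ℕ → Matrix p q K) :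
    ∃ X, IsLimM U (trivAv K) A X :=
  IsLimM.exists_lim (fun _ _ => ⟨1, Eventually.of_forall fun i => trivAv_le i _⟩)

theorem trivAv_zeroM {K : Type*} [Field K] {U : Ultrafilter ℕ} {p q : Type*} [Finite p] [Finite q]
    {A : ℕ → Matrix p q K}
    (h : IsLimM U (trivAv K) A 0) : ∀ᶠ i in (U : Filter ℕ), A i = 0 := by
  have : ∀ᶠ i in (U : Filter ℕ), ∀ a b, A i a b = 0 := by
    rw [eventually_all]
    intro a
    rw [eventually_all]
    intro b
    exact trivAv_zero (h a b)
  filter_upwards [this] with i hi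
  ext a b
  exact hi a b

instance trivAv_algClosed {K : Type*} [Field K] [IsAlgClosed K] {U : Ultrafilter ℕ} :
    IsAlgClosed (LimF U (trivAv K)) := by
  apply IsAlgClosed.of_exists_root
  intro p hp hirr
  have hn : 0 < p.natDegree := hirr.natDegree_pos
  choose c hc using fun j => IsLim.exists_lift (U := U) (av := trivAv K) (p.coeff j)
  let q : ℕ → Polynomial K := fun i => Polynomial.X ^ p.natDegree +
    ∑ j ∈ Finset.range p.natDegree, Polynomial.C (c j i) * Polynomial.X ^ j
  have hq : ∀ i, ∃ x, Polynomial.eval x (q i) = 0 := by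
    intro i
    apply IsAlgClosed.exists_root
    have h1 : (∑ j ∈ Finset.range p.natDegree, Polynomial.C (c j i) * Polynomial.X ^ j).degree
        < (p.natDegree : WithBot ℕ) := by
      rw [← Polynomial.mem_degreeLT]
      apply Submodule.sum_mem
      intro j hj
      rw [Polynomial.mem_degreeLT]
      refine lt_of_le_of_lt (Polynomial.degree_C_mul_X_pow_le _ _) ?_
      exact_mod_cast Finset.mem_range.1 hj
    have h2 : (q i).degree = p.natDegree := by
      change (_ + _ : Polynomial K).degree = _
      rw [Polynomial.degree_add_eq_left_of_degree_lt, Polynomial.degree_X_pow]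
      rwa [Polynomial.degree_X_pow]
    rw [h2]
    exact_mod_cast hn.ne'
  choose r hr using hq
  obtain ⟨x, hx⟩ := trivAv_lim (U := U) r
  refine ⟨x, ?_⟩
  have h1 : IsLim U (trivAv K) (fun i => r i ^ p.natDegree +
      ∑ j ∈ Finset.range p.natDegree, c j i * r i ^ j)
      (x ^ p.natDegree + ∑ j ∈ Finset.range p.natDegree, p.coeff j * x ^ j) :=
    (hx.pow _).add (IsLim.sum _ fun j _ => (hc j).mul (hx.pow j))
  have h2 : IsLim U (trivAv K) (fun i => r i ^ p.natDegree +
      ∑ j ∈ Finset.range p.natDegree, c j i * r i ^ j) 0 := by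
    refine IsLim.zero.congr (Eventually.of_forall fun i => ?_)
    have := hr i
    simp only [q, Polynomial.eval_add, Polynomial.eval_pow, Polynomial.eval_X,
      Polynomial.eval_finset_sum, Polynomial.eval_mul, Polynomial.eval_C] at this
    exact this.symm
  have h3 := h1.unique h2
  rw [hp.as_sum]
  simpa [Polynomial.eval_finset_sum] using h3

theorem exists_limhom {k : Type*} [Field k] {U : Ultrafilter ℕ} {av : ℕ → AbsoluteValue k ℝ}
    {m : ℕ} {H : Type*} [Group H]
    (A : ℕ → H →* GL (Fin m) k)
    (hb : ∀ h a b, ∃ C, ∀ᶠ i in (U : Filter ℕ), av i ((A i h).1 a b) ≤ C) :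
    ∃ σ : H →* GL (Fin m) (LimF U av), ∀ h, IsLimM U av (fun i => (A i h).1) (σ h).1 := by
  choose M hM using fun h => IsLimM.exists_lim (U := U) (hb h)
  have h1 : M 1 = 1 := (hM 1).unique (by simpa using IsLimM.one)
  have hmul : ∀ g h, M (g * h) = M g * M h := fun g h =>
    (hM (g * h)).unique (by simpa using (hM g).mul (hM h))
  let σ0 : H →* Matrix (Fin m) (Fin m) (LimF U av) :=
    { toFun := M, map_one' := h1, map_mul' := hmul }
  exact ⟨σ0.toHomUnits, fun h => hM h⟩

end UTA

end

section
open Matrix Pointwise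
open Filter Topology
namespace UTA

structure SymGen (G : Type*) [Group G] where
  S : Set G
  fin : S.Finite
  one : (1 : G) ∈ S
  inv : ∀ s ∈ S, s⁻¹ ∈ S
  gen : Subgroup.closure S = ⊤

theorem SymGen.inv_pow {G : Type*} [Group G] (S : SymGen G) {l : ℕ} {x : G} (hx : x ∈ S.S ^ l) :
    x⁻¹ ∈ S.S ^ l := by
  have h : S.S⁻¹ = S.S := by
    ext y
    exact ⟨fun h => by simpa using S.inv _ h, fun h => S.inv _ h⟩
  rw [← h, _root_.inv_pow]
  simpa using hx

theorem SymGen.mono {G : Type*} [Group G] (S : SymGen G) {l l' : ℕ} (h : l ≤ l') :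
    S.S ^ l ⊆ S.S ^ l' := Set.pow_subset_pow_right S.one h

theorem SymGen.induct {G : Type*} [Group G] (S : SymGen G) {p : G → Prop} (h1 : p 1)
    (hm : ∀ s ∈ S.S, ∀ g, p g → p (s * g)) (g : G) : p g := by
  have hg : g ∈ Subgroup.closure S.S := by rw [S.gen]; trivial
  have h2 : ∀ x (hx : x ∈ Subgroup.closure S.S), ∀ g, p g → p (x * g) ∧ p (x⁻¹ * g) := by
    intro x hx
    induction hx using Subgroup.closure_induction with
    | mem x hx => exact fun g hg => ⟨hm x hx g hg, hm _ (S.inv x hx) g hg⟩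
    | one => intro g hg; simpa using hg
    | mul x y _ _ ihx ihy =>
      intro g hg
      constructor
      · rw [mul_assoc]; exact (ihx _ (ihy g hg).1).1
      · rw [_root_.mul_inv_rev, mul_assoc]; exact (ihy _ (ihx g hg).2).2
    | inv x _ ih => intro g hg; rw [inv_inv]; exact (ih g hg).symm
  simpa using (h2 g hg 1 h1).1

theorem SymGen.exists_pow {G : Type*} [Group G] (S : SymGen G) (g : G) : ∃ l, g ∈ S.S ^ l := by
  induction g using S.induct with
  | h1 => exact ⟨0, by simp⟩
  | hm s hs g ih =>
    obtain ⟨l, hl⟩ := ih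
    exact ⟨l + 1, by rw [pow_succ']; exact Set.mul_mem_mul hs hl⟩

def Gstar {G : Type*} [Group G] (S : ℕ → SymGen G) : Subgroup (ℕ → G) where
  carrier := {g | ∃ l : ℕ, ∀ i, g i ∈ (S i).S ^ l}
  mul_mem' := by
    rintro a b ⟨l, hl⟩ ⟨l', hl'⟩
    exact ⟨l + l', fun i => by rw [pow_add]; exact Set.mul_mem_mul (hl i) (hl' i)⟩
  one_mem' := ⟨0, fun i => by simp⟩
  inv_mem' := by
    rintro a ⟨l, hl⟩
    exact ⟨l, fun i => (S i).inv_pow (hl i)⟩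

def evG {G H : Type*} [Group G] [Group H] (S : ℕ → SymGen G) (ρ : G →* H) (i : ℕ) : Gstar S →* H :=
  ρ.comp ((Pi.evalMonoidHom (fun _ : ℕ => G) i).comp (Gstar S).subtype)

theorem evG_apply {G H : Type*} [Group G] [Group H] (S : ℕ → SymGen G) (ρ : G →* H) (i : ℕ)
    (g : Gstar S) : evG S ρ i g = ρ (g.1 i) := rfl

def StrIrr {G K : Type*} [Group G] [Field K] {m : ℕ} (ρ : G →* GL (Fin m) K) : Prop :=
  ∀ H : Subgroup G, H.FiniteIndex → ∀ V : Submodule K (Fin m → K),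
    (∀ h ∈ H, ∀ v ∈ V, (ρ h).1 *ᵥ v ∈ V) → V = ⊥ ∨ V = ⊤

/-- linear action of a matrix group element on subspaces -/
noncomputable def actSub {G K : Type*} [Group G] [Field K] {m : ℕ} (ρ : G →* GL (Fin m) K) :
    MulAction G (Submodule K (Fin m → K)) where
  smul g V := V.map (Matrix.mulVecLin (ρ g).1)
  one_smul V := by
    change V.map (Matrix.mulVecLin (ρ 1).1) = V
    simp
  mul_smul g h V := by
    change V.map (Matrix.mulVecLin (ρ (g * h)).1) =
      (V.map (Matrix.mulVecLin (ρ h).1)).map (Matrix.mulVecLin (ρ g).1)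
    rw [map_mul, Units.val_mul, Matrix.mulVecLin_mul, Submodule.map_comp]

theorem no_perm {G K : Type*} [Group G] [Field K] {m : ℕ} (ρ : G →* GL (Fin m) K) (hρ : StrIrr ρ)
    (S : SymGen G) {J : Type*} [Finite J] (t : J → G) (V : Submodule K (Fin m → K))
    (hV0 : V ≠ ⊥) (hV1 : V ≠ ⊤) (j0 : J)
    (h : ∀ s ∈ S.S, ∀ j, ∃ j', ∀ v ∈ V, ∃ v' ∈ V,
      (ρ s).1 *ᵥ ((ρ (t j)).1 *ᵥ v) = (ρ (t j')).1 *ᵥ v') : False := by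
  letI := actSub ρ
  have hsm : ∀ (g : G) (W : Submodule K (Fin m → K)), g • W = W.map (Matrix.mulVecLin (ρ g).1) :=
    fun _ _ => rfl
  have hfr : ∀ (g : G) (W : Submodule K (Fin m → K)),
      Module.finrank K (g • W : Submodule K (Fin m → K)) = Module.finrank K W := by
    intro g W
    rw [hsm]
    have hinj : Function.Injective (Matrix.mulVecLin (ρ g).1) := by
      rw [Matrix.coe_mulVecLin]
      exact Matrix.mulVec_injective_of_isUnit (ρ g).isUnit
    exact (Submodule.equivMapOfInjective _ hinj W).finrank_eq.symm
  have key : ∀ s ∈ S.S, ∀ j, ∃ j', s • (t j • V) = t j' • V := by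
    intro s hs j
    obtain ⟨j', hj'⟩ := h s hs j
    refine ⟨j', Submodule.eq_of_le_of_finrank_eq ?_ (by simp only [hfr])⟩
    simp only [hsm]
    rintro _ ⟨_, ⟨v, hv, rfl⟩, rfl⟩
    obtain ⟨v', hv', he⟩ := hj' v hv
    exact ⟨v', hv', he.symm⟩
  have key2 : ∀ g : G, ∃ j', g • (t j0 • V) = t j' • V := by
    intro g
    induction g using S.induct with
    | h1 => exact ⟨j0, one_smul _ _⟩
    | hm s hs g ih =>
      obtain ⟨j', hj'⟩ := ih
      obtain ⟨j'', hj''⟩ := key s hs j'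
      exact ⟨j'', by rw [mul_smul, hj', hj'']⟩
  have hfin : (MulAction.orbit G (t j0 • V)).Finite := by
    refine (Set.finite_range (fun j => t j • V)).subset ?_
    rintro _ ⟨g, rfl⟩
    obtain ⟨j', hj'⟩ := key2 g
    exact ⟨j', hj'.symm⟩
  have hidx : (MulAction.stabilizer G (t j0 • V)).FiniteIndex := by
    constructor
    rw [MulAction.index_stabilizer]
    exact (Set.ncard_pos hfin).2 ⟨_, MulAction.mem_orbit_self _⟩ |>.ne'
  have := hρ _ hidx (t j0 • V) (fun g hg v hv => by
    have hg' : g • (t j0 • V) = t j0 • V := hg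
    rw [← hg', hsm]
    exact ⟨v, hv, rfl⟩)
  rcases this with h0 | h0
  · apply hV0
    rw [← Submodule.finrank_eq_zero (R := K), ← hfr (t j0) V, h0]
    simp
  · apply hV1
    apply Submodule.eq_top_of_finrank_eq
    rw [← hfr (t j0) V, h0]
    simp

theorem exists_basis_of_span {Ω : Type*} [Field Ω] {m : ℕ} (T : Set (Matrix (Fin m) (Fin m) Ω))
    (hT : Submodule.span Ω T = ⊤) :
    ∃ X : Fin m × Fin m → Matrix (Fin m) (Fin m) Ω, (∀ p, X p ∈ T) ∧
      (Matrix.of fun p q : Fin m × Fin m => X p q.1 q.2).det ≠ 0 := by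
  obtain ⟨b, hbT, hb, hli⟩ := exists_linearIndependent Ω T
  rw [hT] at hb
  let B : Module.Basis b Ω (Matrix (Fin m) (Fin m) Ω) := Module.Basis.mk hli (by rw [Subtype.range_coe, hb])
  let B' := Matrix.stdBasis Ω (Fin m) (Fin m)
  let e := B'.indexEquiv B
  let B2 := B.reindex e.symm
  refine ⟨fun p => B2 p, fun p => ?_, ?_⟩
  · have : B2 p = (e p).1 := by simp [B2, B]
    change B2 p ∈ T
    rw [this]
    exact hbT (e p).2
  · let fl : Matrix (Fin m) (Fin m) Ω ≃ₗ[Ω] (Fin m × Fin m → Ω) :=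
      (LinearEquiv.curry Ω Ω (Fin m) (Fin m)).symm
    have h1 : LinearIndependent Ω (fun p => fl (B2 p)) :=
      B2.linearIndependent.map' fl.toLinearMap fl.ker
    have h2 : IsUnit (Matrix.of fun p q : Fin m × Fin m => (B2 p) q.1 q.2) := by
      rw [← Matrix.linearIndependent_rows_iff_isUnit]
      exact h1
    exact ((Matrix.isUnit_iff_isUnit_det _).1 h2).ne_zero

end UTA

end

section
open Matrix Pointwise
open Filter Topology
namespace UTA

theorem ext_mulVec {Ω : Type*} [Field Ω] {m : ℕ} {A B : Matrix (Fin m) (Fin m) Ω}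
    (h : ∀ v, A *ᵥ v = B *ᵥ v) : A = B := by
  apply Matrix.toLin'.injective
  apply LinearMap.ext
  intro v
  rw [Matrix.toLin'_apply, Matrix.toLin'_apply]
  exact h v

theorem exists_proj {Ω : Type*} [Field Ω] {m : ℕ} (W : Submodule Ω (Fin m → Ω)) (h0 : W ≠ ⊥)
    (h1 : W ≠ ⊤) : ∃ π : Matrix (Fin m) (Fin m) Ω, π ≠ 0 ∧ 1 - π ≠ 0 ∧ π * π = π ∧
      (∀ v, π *ᵥ v ∈ W) ∧ ∀ v ∈ W, π *ᵥ v = v := by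
  obtain ⟨W', hW'⟩ := W.exists_isCompl
  let f : (Fin m → Ω) →ₗ[Ω] (Fin m → Ω) := W.subtype ∘ₗ W.linearProjOfIsCompl W' hW'
  have hf : ∀ v, (LinearMap.toMatrix' f) *ᵥ v = f v := fun v => LinearMap.toMatrix'_mulVec f v
  have hfW : ∀ v, f v ∈ W := fun v => (W.linearProjOfIsCompl W' hW' v).2
  have hfi : ∀ v ∈ W, f v = v := fun v hv => by
    have := Submodule.linearProjOfIsCompl_apply_left hW' ⟨v, hv⟩
    change ((W.linearProjOfIsCompl W' hW' v : W) : Fin m → Ω) = v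
    exact congrArg Subtype.val this
  refine ⟨LinearMap.toMatrix' f, ?_, ?_, ?_, ?_, ?_⟩
  · intro h
    apply h0
    rw [eq_bot_iff]
    intro v hv
    have := hf v
    rw [h, hfi v hv] at this
    simpa using this.symm
  · intro h
    apply h1
    rw [eq_top_iff]
    intro v _
    have := hf v
    rw [← sub_eq_zero.1 h] at this
    have h2 := hfW v
    rw [← this] at h2
    simpa using h2
  · apply ext_mulVec
    intro v
    rw [← Matrix.mulVec_mulVec, hf, hf, hfi _ (hfW v)]
  · intro v
    rw [hf]; exact hfW v
  · intro v hv
    rw [hf]; exact hfi v hv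

set_option maxHeartbeats 1000000 in
theorem SIstar {G K : Type*} [Group G] [Field K] [IsAlgClosed K] {m : ℕ} (hm : 0 < m)
    (ρ : G →* GL (Fin m) K) (hρ : StrIrr ρ) (S : ℕ → SymGen G) (U : Ultrafilter ℕ)
    (Γ0 : Subgroup (Gstar S)) (hΓ0 : Γ0.FiniteIndex) :
    ∃ g : Fin m × Fin m → Gstar S, (∀ p, g p ∈ Γ0) ∧ ∀ᶠ i in (U : Filter ℕ),
      (Matrix.of fun p q : Fin m × Fin m => (ρ ((g p).1 i)).1 q.1 q.2).det ≠ 0 := by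
  obtain ⟨σ, hσ⟩ := exists_limhom (U := U) (av := trivAv K) (fun i => evG S ρ i)
    (fun _ _ _ => ⟨1, Eventually.of_forall fun i => trivAv_le i _⟩)
  simp only [evG_apply] at hσ
  by_cases hspan : Submodule.span (LimF U (trivAv K)) ((fun g => (σ g).1) '' (Γ0 : Set (Gstar S))) = ⊤
  · obtain ⟨X, hX, hdet⟩ := exists_basis_of_span _ hspan
    choose g hg hgX using hX
    refine ⟨g, hg, ?_⟩
    have h1 : IsLimM U (trivAv K) (fun i => Matrix.of fun p q : Fin m × Fin m => (ρ ((g p).1 i)).1 q.1 q.2)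
        (Matrix.of fun p q : Fin m × Fin m => X p q.1 q.2) := by
      intro p q
      have := hσ (g p) q.1 q.2
      have h2 : X p q.1 q.2 = (σ (g p)).1 q.1 q.2 := by rw [← hgX p]
      rw [← h2] at this
      exact this
    exact h1.det.eventually_ne hdet
  · exfalso
    let T : Submonoid (Matrix (Fin m) (Fin m) (LimF U (trivAv K))) :=
      Γ0.toSubmonoid.map ((Units.coeHom _).comp σ)
    have hT : ¬ ∀ W : Submodule (LimF U (trivAv K)) (Fin m → LimF U (trivAv K)),
        (∀ a ∈ T, ∀ v ∈ W, a *ᵥ v ∈ W) → W = ⊥ ∨ W = ⊤ := by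
      intro h
      exact hspan (burnside hm T h)
    push Not at hT
    obtain ⟨W, hW, hW0, hW1⟩ := hT
    obtain ⟨π, hπ0, hπ1, hππ, hπW, hπi⟩ := exists_proj W hW0 hW1
    have hinv : ∀ h ∈ Γ0, (1 - π) * ((σ h).1 * π) = 0 := by
      intro h hh
      apply ext_mulVec
      intro v
      have h1 : (σ h).1 *ᵥ (π *ᵥ v) ∈ W := hW _ ⟨h, hh, rfl⟩ _ (hπW v)
      rw [sub_mul, one_mul, Matrix.sub_mulVec, ← Matrix.mulVec_mulVec, ← Matrix.mulVec_mulVec, ← Matrix.mulVec_mulVec,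
        hπi _ h1, sub_self, Matrix.zero_mulVec]
    obtain ⟨P, hP⟩ := IsLimM.exists_lift (U := U) (av := trivAv K) π
    haveI := hΓ0
    let t : (Gstar S ⧸ Γ0) → Gstar S := Quotient.out
    -- pointwise relations
    have hrel : ∀ s : Gstar S, ∀ᶠ i in (U : Filter ℕ), ∀ j : Gstar S ⧸ Γ0, ∃ j' : Gstar S ⧸ Γ0,
        (1 - P i) * ((ρ (((t j')⁻¹ * s * t j).1 i)).1 * P i) = 0 := by
      intro s
      haveI : Finite (Gstar S ⧸ Γ0) := Subgroup.finite_quotient_of_finiteIndex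
      rw [eventually_all]
      intro j
      let j' : Gstar S ⧸ Γ0 := QuotientGroup.mk (s * t j)
      have hmem : (t j')⁻¹ * s * t j ∈ Γ0 := by
        rw [mul_assoc, ← QuotientGroup.eq]
        exact Quotient.out_eq j'
      have h1 := ((IsLimM.one (U := U) (av := trivAv K) (p := Fin m)).sub hP).mul
        ((hσ ((t j')⁻¹ * s * t j)).mul hP)
      rw [hinv _ hmem] at h1
      filter_upwards [trivAv_zeroM h1] with i hi
      exact ⟨j', hi⟩
    have hall : ∀ᶠ i in (U : Filter ℕ), ∀ s ∈ (S i).S, ∀ j : Gstar S ⧸ Γ0, ∃ j' : Gstar S ⧸ Γ0,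
        (1 - P i) * ((ρ (((t j').1 i)⁻¹ * s * (t j).1 i)).1 * P i) = 0 := by
      by_contra hcon
      rw [← Ultrafilter.eventually_not] at hcon
      let bad : ℕ → G → Prop := fun i s => s ∈ (S i).S ∧ ¬ ∀ j : Gstar S ⧸ Γ0, ∃ j' : Gstar S ⧸ Γ0,
        (1 - P i) * ((ρ (((t j').1 i)⁻¹ * s * (t j).1 i)).1 * P i) = 0
      have hbad : ∀ i, ∃ s, s ∈ (S i).S ∧ ((∃ s', bad i s') → bad i s) := by
        intro i
        by_cases h : ∃ s', bad i s'
        · obtain ⟨s, hs⟩ := h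
          exact ⟨s, hs.1, fun _ => hs⟩
        · exact ⟨1, (S i).one, fun h' => absurd h' h⟩
      choose s hs hsb using hbad
      have h1 := hrel ⟨s, 1, fun i => by simpa using hs i⟩
      obtain ⟨i, hi1, hi2⟩ := (hcon.and h1).exists
      push Not at hi1
      obtain ⟨s', hs', hj⟩ := hi1
      have := hsb i ⟨s', hs', by push Not; exact hj⟩
      exact this.2 hi2
    have hid : ∀ᶠ i in (U : Filter ℕ), P i * P i = P i := by
      have h1 := (hP.mul hP).sub hP
      rw [hππ, sub_self] at h1
      filter_upwards [trivAv_zeroM h1] with i hi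
      exact sub_eq_zero.1 hi
    have hne : ∀ {A : ℕ → Matrix (Fin m) (Fin m) K} {X : Matrix (Fin m) (Fin m) (LimF U (trivAv K))},
        IsLimM U (trivAv K) A X → X ≠ 0 → ∀ᶠ i in (U : Filter ℕ), A i ≠ 0 := by
      intro A X hA hX
      have : ∃ a b, X a b ≠ 0 := by
        by_contra hc
        push Not at hc
        exact hX (by ext a b; exact hc a b)
      obtain ⟨a, b, hab⟩ := this
      filter_upwards [(hA a b).eventually_ne hab] with i hi h0
      exact hi (by rw [h0]; rfl)
    have hP0 := hne hP hπ0
    have hP1 := hne ((IsLimM.one (U := U) (av := trivAv K) (p := Fin m)).sub hP) hπ1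
    obtain ⟨i, hi1, hi2, hi3, hi4⟩ := (hall.and (hid.and (hP0.and hP1))).exists
    haveI : Finite (Gstar S ⧸ Γ0) := Subgroup.finite_quotient_of_finiteIndex
    refine no_perm ρ hρ (S i) (fun j => (t j).1 i) (LinearMap.range (Matrix.mulVecLin (P i))) ?_ ?_
      (QuotientGroup.mk 1) ?_
    · intro h
      rw [LinearMap.range_eq_bot] at h
      apply hi3
      apply Matrix.toLin'.injective
      rw [map_zero]
      exact h
    · intro h
      apply hi4
      rw [sub_eq_zero]
      apply ext_mulVec
      intro v
      obtain ⟨w, hw⟩ := LinearMap.range_eq_top.1 h v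
      rw [Matrix.mulVecLin_apply] at hw
      rw [← hw, Matrix.mulVec_mulVec, Matrix.mulVec_mulVec, hi2, one_mul]
    · intro s hs j
      obtain ⟨j', hj'⟩ := hi1 s hs j
      refine ⟨j', ?_⟩
      rintro _ ⟨v, rfl⟩
      refine ⟨(ρ (((t j').1 i)⁻¹ * s * (t j).1 i)).1 *ᵥ (P i *ᵥ v), ?_, ?_⟩
      · refine ⟨(ρ (((t j').1 i)⁻¹ * s * (t j).1 i)).1 *ᵥ (P i *ᵥ v), ?_⟩
        rw [sub_mul, one_mul, sub_eq_zero] at hj'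
        rw [Matrix.mulVecLin_apply, Matrix.mulVec_mulVec v, Matrix.mulVec_mulVec, ← hj']
      · simp only [Matrix.mulVecLin_apply, Matrix.mulVec_mulVec, ← mul_assoc, ← Units.val_mul, ← map_mul]
        simp [mul_assoc]

end UTA

end

section
open Matrix Pointwise
open Filter Topology
namespace UTA

section gramsec
variable {R : Type*} [CommRing R] {m : ℕ}

def flat (X : Fin m × Fin m → Matrix (Fin m) (Fin m) R) : Matrix (Fin m × Fin m) (Fin m × Fin m) R :=
  Matrix.of fun p q => X p q.1 q.2

def gram (X : Fin m × Fin m → Matrix (Fin m) (Fin m) R) : Matrix (Fin m × Fin m) (Fin m × Fin m) R :=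
  Matrix.of fun p q => (X p * X q).trace

theorem flat_map {R' : Type*} [CommRing R'] (f : R →+* R')
    (X : Fin m × Fin m → Matrix (Fin m) (Fin m) R) :
    (flat fun p => (X p).map f).det = f (flat X).det := by
  rw [RingHom.map_det]
  rfl

theorem gram_map {R' : Type*} [CommRing R'] (f : R →+* R')
    (X : Fin m × Fin m → Matrix (Fin m) (Fin m) R) :
    (gram fun p => (X p).map f).det = f (gram X).det := by
  rw [RingHom.map_det]
  congr 1
  ext p q
  simp only [gram, Matrix.of_apply, RingHom.mapMatrix_apply, Matrix.map_apply]
  simp [Matrix.trace, Matrix.mul_apply, map_sum]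

theorem gram_det (X : Fin m × Fin m → Matrix (Fin m) (Fin m) R) :
    ∃ ε : R, ε * ε = 1 ∧ (gram X).det = ε * ((flat X).det * (flat X).det) := by
  have h1 : gram X = flat X * ((flat X).submatrix id (Equiv.prodComm (Fin m) (Fin m)))ᵀ := by
    ext p q
    simp only [gram, flat, Matrix.of_apply, Matrix.trace, Matrix.diag, Matrix.mul_apply,
      Matrix.transpose_apply, Matrix.submatrix_apply, Fintype.sum_prod_type, id,
      Equiv.prodComm_apply, Prod.swap]
  refine ⟨((Equiv.Perm.sign (Equiv.prodComm (Fin m) (Fin m) : Equiv.Perm (Fin m × Fin m)) : ℤ) : R), ?_, ?_⟩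
  · rw [← Int.cast_mul, ← Units.val_mul, Int.units_mul_self]
    simp
  · rw [h1, Matrix.det_mul, Matrix.det_transpose]
    have := Matrix.det_permute' (Equiv.prodComm (Fin m) (Fin m) : Equiv.Perm (Fin m × Fin m)) (flat X)
    rw [this]
    ring

theorem gram_ne {F : Type*} [Field F] (X : Fin m × Fin m → Matrix (Fin m) (Fin m) F) :
    (gram X).det ≠ 0 ↔ (flat X).det ≠ 0 := by
  obtain ⟨ε, h1, h2⟩ := gram_det X
  rw [h2]
  have : ε ≠ 0 := by
    rintro rfl
    simp at h1
  simp [this]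

theorem expand {F : Type*} [Field F] {X : Fin m × Fin m → Matrix (Fin m) (Fin m) F}
    {V : Matrix (Fin m × Fin m) (Fin m × Fin m) F} (hV : gram X * V = 1)
    (M : Matrix (Fin m) (Fin m) F) :
    M = ∑ p, (∑ q, (M * X q).trace * V q p) • X p := by
  have hg : (gram X).det ≠ 0 := by
    intro h
    have := congrArg Matrix.det hV
    rw [Matrix.det_mul, h] at this
    simp at this
  have hf := (gram_ne X).1 hg
  let fM : Fin m × Fin m → F := fun q => M q.1 q.2
  let c := fM ᵥ* (flat X)⁻¹
  have hc : c ᵥ* flat X = fM := by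
    simp only [c]
    rw [Matrix.vecMul_vecMul, Matrix.nonsing_inv_mul _ (isUnit_iff_ne_zero.2 hf), Matrix.vecMul_one]
  have hM : M = ∑ p, c p • X p := by
    ext a b
    have := congrFun hc (a, b)
    simp only [Matrix.vecMul, dotProduct, flat, Matrix.of_apply, fM] at this
    rw [← this, Matrix.sum_apply]
    simp
  have ht : (fun q => (M * X q).trace) = c ᵥ* gram X := by
    ext q
    conv_lhs => rw [hM]
    simp [Matrix.vecMul, dotProduct, gram, Finset.sum_mul, Matrix.trace_sum]
  have hcV : c = (fun q => (M * X q).trace) ᵥ* V := by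
    rw [ht, Matrix.vecMul_vecMul, hV, Matrix.vecMul_one]
  conv_lhs => rw [hM]
  apply Finset.sum_congr rfl
  intro p _
  rw [hcV]
  rfl

theorem sum_le_card {F : Type*} [Field F] (v : AbsoluteValue F ℝ) {ι : Type*} [Fintype ι] (f : ι → F)
    {B : ℝ} (h : ∀ i, v (f i) ≤ B) : v (∑ i, f i) ≤ Fintype.card ι * B := by
  refine (v.sum_le _ _).trans ?_
  refine (Finset.sum_le_card_nsmul _ _ B (fun i _ => h i)).trans ?_
  simp

theorem growth {F : Type*} [Field F] (v : AbsoluteValue F ℝ)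
    {X : Fin m × Fin m → Matrix (Fin m) (Fin m) F}
    {V : Matrix (Fin m × Fin m) (Fin m × Fin m) F} (hV : gram X * V = 1)
    {G : Type*} [Group G] (φ : G →* Matrix (Fin m) (Fin m) F) (S : Set G) (B : ℝ) (hB : 1 ≤ B)
    (hVB : ∀ q p, v (V q p) ≤ B) (hs : ∀ s ∈ S, ∀ p q, v ((φ s * X p * X q).trace) ≤ B)
    (h1 : ∀ p, v ((X p).trace) ≤ B) (l : ℕ) :
    ∀ g ∈ S ^ l, (∀ q, v ((φ g * X q).trace) ≤
        (Fintype.card (Fin m × Fin m) * (Fintype.card (Fin m × Fin m) * B * B)) ^ l * B) ∧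
      v ((φ g).trace) ≤
        (Fintype.card (Fin m × Fin m) * (Fintype.card (Fin m × Fin m) * B * B)) ^ (l + 1) * B := by
  set d : ℝ := (Fintype.card (Fin m × Fin m) : ℝ) with hd
  have hd0 : 0 ≤ d := Nat.cast_nonneg _
  have hcoef : ∀ M : Matrix (Fin m) (Fin m) F, ∀ C : ℝ, 0 ≤ C → (∀ q, v ((M * X q).trace) ≤ C) →
      ∀ p, v (∑ q, (M * X q).trace * V q p) ≤ d * (C * B) := by
    intro M C hC hM p
    apply sum_le_card
    intro q
    rw [v.map_mul]
    exact mul_le_mul (hM q) (hVB q p) (v.nonneg _) hC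
  have hstep1 : ∀ g : G, ∀ C : ℝ, 0 ≤ C → (∀ q, v ((φ g * X q).trace) ≤ C) → ∀ s ∈ S, ∀ q,
      v ((φ (s * g) * X q).trace) ≤ (d * (d * B * B)) * C := by
    intro g C hC hg s hs' q
    have h2 : (φ (s * g) * X q).trace =
        ∑ p, (∑ q, (φ g * X q).trace * V q p) * (φ s * X p * X q).trace := by
      conv_lhs => rw [map_mul, expand hV (φ g)]
      simp [Finset.mul_sum, Finset.sum_mul, Matrix.trace_sum]
    rw [h2]
    have : (d * (d * B * B)) * C = d * ((d * (C * B)) * B) := by ring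
    rw [this]
    apply sum_le_card
    intro p
    rw [v.map_mul]
    exact mul_le_mul (hcoef _ C hC hg p) (hs s hs' p q) (v.nonneg _) (by positivity)
  have hstep2 : ∀ g : G, ∀ C : ℝ, 0 ≤ C → (∀ q, v ((φ g * X q).trace) ≤ C) →
      v ((φ g).trace) ≤ (d * (d * B * B)) * C := by
    intro g C hC hg
    have h2 : (φ g).trace = ∑ p, (∑ q, (φ g * X q).trace * V q p) * (X p).trace := by
      conv_lhs => rw [expand hV (φ g)]
      simp [Matrix.trace_sum]
    rw [h2]
    have : (d * (d * B * B)) * C = d * ((d * (C * B)) * B) := by ring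
    rw [this]
    apply sum_le_card
    intro p
    rw [v.map_mul]
    exact mul_le_mul (hcoef _ C hC hg p) (h1 p) (v.nonneg _) (by positivity)
  have main : ∀ g ∈ S ^ l, ∀ q, v ((φ g * X q).trace) ≤ (d * (d * B * B)) ^ l * B := by
    induction l with
    | zero =>
      intro g hg q
      simp only [pow_zero, Set.mem_one] at hg
      subst hg
      simpa using h1 q
    | succ l ih =>
      intro g hg q
      rw [pow_succ'] at hg
      obtain ⟨s, hs', g', hg', rfl⟩ := Set.mem_mul.1 hg
      rw [pow_succ', mul_assoc]
      exact hstep1 g' _ (by positivity) (ih g' hg') s hs' q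
  intro g hg
  refine ⟨main g hg, ?_⟩
  rw [pow_succ', mul_assoc]
  exact hstep2 g _ (by positivity) (main g hg)

theorem det_bound {F : Type*} [Field F] (v : AbsoluteValue F ℝ) {n : Type*} [Fintype n] [DecidableEq n]
    (A : Matrix n n F) {B : ℝ} (h : ∀ a b, v (A a b) ≤ B) :
    v A.det ≤ (Fintype.card n).factorial * B ^ Fintype.card n := by
  simpa using Matrix.det_le h

theorem adj_bound {F : Type*} [Field F] (v : AbsoluteValue F ℝ) {n : Type*} [Fintype n] [DecidableEq n]
    (A : Matrix n n F) {B : ℝ} (hB : 1 ≤ B) (h : ∀ a b, v (A a b) ≤ B) (a b : n) :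
    v (A.adjugate a b) ≤ (Fintype.card n).factorial * B ^ Fintype.card n := by
  rw [Matrix.adjugate_apply]
  apply det_bound
  intro c d
  rw [Matrix.updateRow_apply]
  split_ifs
  · by_cases hd : d = a
    · subst hd; simpa using hB
    · simp [Pi.single_apply, hd]; linarith
  · exact h c d

theorem root_le {F : Type*} [Field F] (v : AbsoluteValue F ℝ) (A : Matrix (Fin m) (Fin m) F) {B : ℝ}
    (h : ∀ a b, v (A a b) ≤ B) {x : F} (hx : x ∈ A.charpoly.roots) : v x ≤ m * B := by
  have hr : A.charpoly.eval x = 0 := (Polynomial.mem_roots'.1 hx).2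
  rw [Matrix.eval_charpoly] at hr
  obtain ⟨u, hu, hu0⟩ := Matrix.exists_mulVec_eq_zero_iff.2 hr
  have hne : ∃ j, u j ≠ 0 := Function.ne_iff.1 hu
  obtain ⟨j0, hj0⟩ := hne
  haveI : Nonempty (Fin m) := ⟨j0⟩
  obtain ⟨j, hj⟩ := Finite.exists_max (fun j => v (u j))
  have hpos : 0 < v (u j) := lt_of_lt_of_le (v.pos hj0) (hj j0)
  have h1 : x * u j = ∑ b, A j b * u b := by
    have := congrFun hu0 j
    rw [Matrix.sub_mulVec] at this
    simp only [Pi.sub_apply, Pi.zero_apply, sub_eq_zero] at this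
    rw [Matrix.scalar_apply, Matrix.mulVec_diagonal] at this
    exact this
  have h2 : v x * v (u j) ≤ m * (B * v (u j)) := by
    rw [← v.map_mul, h1]
    refine (sum_le_card v _ (B := B * v (u j)) ?_).trans (by simp)
    intro b
    rw [v.map_mul]
    exact mul_le_mul (h j b) (hj b) (v.nonneg _) ((v.nonneg _).trans (h j b))
  rw [← mul_assoc] at h2
  exact le_of_mul_le_mul_right h2 hpos

theorem trace_le {F : Type*} [Field F] [IsAlgClosed F] (v : AbsoluteValue F ℝ)
    (A : Matrix (Fin m) (Fin m) F) {B : ℝ} (hB : 0 ≤ B)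
    (h : ∀ x ∈ A.charpoly.roots, v x ≤ B) : v A.trace ≤ m * B := by
  rw [Matrix.trace_eq_sum_roots_charpoly]
  have key : ∀ s : Multiset F, (∀ x ∈ s, v x ≤ B) → v s.sum ≤ s.card * B := by
    intro s
    induction s using Multiset.induction with
    | empty => simp
    | cons a s ih =>
      intro hs
      rw [Multiset.sum_cons, Multiset.card_cons]
      have h1 := ih (fun x hx => hs x (Multiset.mem_cons_of_mem hx))
      have h2 := hs a (Multiset.mem_cons_self a s)
      have h3 := v.add_le a s.sum
      push_cast
      linarith
  refine (key _ h).trans ?_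
  have h1 : A.charpoly.roots.card ≤ m := by
    have := Polynomial.card_roots' A.charpoly
    rwa [Matrix.charpoly_natDegree_eq_dim, Fintype.card_fin] at this
  gcongr

theorem exists_small_root {F : Type*} [Field F] [IsAlgClosed F] (v : AbsoluteValue F ℝ) (hm : 0 < m)
    (A : Matrix (Fin m) (Fin m) F) (hA : A.det = 1) : ∃ x ∈ A.charpoly.roots, v x ≤ 1 := by
  by_contra hcon
  push Not at hcon
  have h1 := Matrix.det_eq_prod_roots_charpoly A
  rw [hA] at h1
  have key : ∀ s : Multiset F, (∀ x ∈ s, 1 < v x) → 1 ≤ v s.prod ∧ (s ≠ 0 → 1 < v s.prod) := by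
    intro s
    induction s using Multiset.induction with
    | empty => simp
    | cons a s ih =>
      intro hs
      have h1 := (ih (fun x hx => hs x (Multiset.mem_cons_of_mem hx))).1
      have h2 := hs a (Multiset.mem_cons_self a s)
      rw [Multiset.prod_cons, v.map_mul]
      have : 1 < v a * v s.prod := by nlinarith
      exact ⟨this.le, fun _ => this⟩
  have h2 := (key _ hcon).2 (by
    intro h0
    have := IsAlgClosed.card_roots_eq_natDegree (p := A.charpoly)
    rw [h0, Matrix.charpoly_natDegree_eq_dim, Fintype.card_fin] at this
    simp at this
    omega)
  rw [← h1] at h2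
  simp at h2

end gramsec
end UTA

end

section
open Matrix Pointwise
open Filter Topology
namespace UTA

theorem exists_conj {F : Type*} [Field F] {m : ℕ} (hm : 0 < m) (v : AbsoluteValue F ℝ)
    (X : Fin m × Fin m → Matrix (Fin m) (Fin m) F) (hX : (gram X).det ≠ 0) :
    ∃ (P : GL (Fin m) F) (f : Fin m → Fin m × Fin m) (e : Fin m → F),
      (∀ b, (P.1)ᵀ b = X (f b) *ᵥ e) ∧ ∀ p a, v (((P⁻¹).1 *ᵥ (X p *ᵥ e)) a) ≤ 1 := by
  let e : Fin m → F := Pi.single ⟨0, hm⟩ 1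
  have hspan : Submodule.span F (Set.range fun p => X p *ᵥ e) = ⊤ := by
    rw [eq_top_iff]
    intro w _
    let M : Matrix (Fin m) (Fin m) F := Matrix.of fun a _ => w a
    have hMe : M *ᵥ e = w := by
      ext a
      simp [M, e]
    have h1 := expand (Matrix.mul_nonsing_inv _ (isUnit_iff_ne_zero.2 hX)) M
    rw [← hMe, h1, Matrix.sum_mulVec]
    apply Submodule.sum_mem
    intro p _
    rw [Matrix.smul_mulVec]
    exact Submodule.smul_mem _ _ (Submodule.subset_span ⟨p, rfl⟩)
  let D : (Fin m → Fin m × Fin m) → Matrix (Fin m) (Fin m) F :=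
    fun f => (Matrix.of fun b => X (f b) *ᵥ e)ᵀ
  have hex : ∃ f, (D f).det ≠ 0 := by
    obtain ⟨b, hbT, hb, hli⟩ := exists_linearIndependent F (Set.range fun p => X p *ᵥ e)
    rw [hspan] at hb
    let B : Module.Basis b F (Fin m → F) := Module.Basis.mk hli (by rw [Subtype.range_coe, hb])
    let E := (Pi.basisFun F (Fin m)).indexEquiv B
    have hmem : ∀ j, ∃ p, X p *ᵥ e = (E j).1 := fun j => hbT (E j).2
    choose f hf using hmem
    refine ⟨f, ?_⟩
    have h2 : LinearIndependent F (fun j => X (f j) *ᵥ e) := by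
      have := hli.comp E E.injective
      have h2' : (fun j => X (f j) *ᵥ e) = Subtype.val ∘ E := funext hf
      rw [h2']
      exact this
    have h3 : IsUnit (Matrix.of fun b => X (f b) *ᵥ e) := by
      rw [← Matrix.linearIndependent_rows_iff_isUnit]
      exact h2
    rw [Matrix.det_transpose]
    exact ((Matrix.isUnit_iff_isUnit_det _).1 h3).ne_zero
  haveI : Nonempty (Fin m → Fin m × Fin m) := ⟨hex.choose⟩
  obtain ⟨f, hf⟩ := Finite.exists_max (fun f => v (D f).det)
  have hf0 : (D f).det ≠ 0 := by
    obtain ⟨f', hf'⟩ := hex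
    have := lt_of_lt_of_le (v.pos hf') (hf f')
    exact v.pos_iff.1 this
  let P : GL (Fin m) F := Matrix.GeneralLinearGroup.mkOfDetNeZero (D f) hf0
  refine ⟨P, f, e, fun b => rfl, fun p a => ?_⟩
  have h1 : (D f).det • ((P⁻¹).1 *ᵥ (X p *ᵥ e)) = Matrix.cramer (D f) (X p *ᵥ e) := by
    have h2 : (P⁻¹).1 = (D f)⁻¹ := Matrix.coe_units_inv P
    rw [h2]
    exact Matrix.det_smul_inv_mulVec_eq_cramer _ _ (isUnit_iff_ne_zero.2 hf0)
  have h2 := congrFun h1 a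
  rw [Matrix.cramer_apply] at h2
  have h3 : (D f).updateCol a (X p *ᵥ e) = D (Function.update f a p) := by
    ext c b
    rw [Matrix.updateCol_apply]
    by_cases hb : b = a
    · subst hb; simp [D]
    · simp [D, hb]
  rw [h3, Pi.smul_apply, smul_eq_mul] at h2
  have h4 := hf (Function.update f a p)
  rw [← h2, v.map_mul] at h4
  have h5 := v.pos hf0
  exact le_of_mul_le_mul_left (by linarith) h5

theorem conj_bound {F : Type*} [Field F] {m : ℕ} (v : AbsoluteValue F ℝ)
    {X : Fin m × Fin m → Matrix (Fin m) (Fin m) F} (hX : (gram X).det ≠ 0)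
    {P : GL (Fin m) F} {f : Fin m → Fin m × Fin m} {e : Fin m → F}
    (hP : ∀ b, (P.1)ᵀ b = X (f b) *ᵥ e) (hv : ∀ p a, v (((P⁻¹).1 *ᵥ (X p *ᵥ e)) a) ≤ 1)
    (N : Matrix (Fin m) (Fin m) F) {C B : ℝ} (hC : 0 ≤ C)
    (hB : ∀ p q, v ((gram X)⁻¹ p q) ≤ B)
    (hN : ∀ p q, v ((N * X p * X q).trace) ≤ C) (a b : Fin m) :
    v (((P⁻¹).1 * N * P.1) a b) ≤ Fintype.card (Fin m × Fin m) *
      (Fintype.card (Fin m × Fin m) * (C * B)) := by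
  have h1 : ((P⁻¹).1 * N * P.1) a b = ((P⁻¹).1 *ᵥ ((N * X (f b)) *ᵥ e)) a := by
    have : ((P⁻¹).1 * N * P.1) a b = ((P⁻¹).1 *ᵥ (N *ᵥ (P.1)ᵀ b)) a := by
      rw [Matrix.mulVec_mulVec, Matrix.mul_apply]
      rfl
    rw [this, hP, ← Matrix.mulVec_mulVec e N (X (f b))]
  rw [h1, expand (Matrix.mul_nonsing_inv _ (isUnit_iff_ne_zero.2 hX)) (N * X (f b)),
    Matrix.sum_mulVec, Matrix.mulVec_sum, Finset.sum_apply]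
  apply sum_le_card
  intro p
  rw [Matrix.smul_mulVec, Matrix.mulVec_smul, Pi.smul_apply, smul_eq_mul, v.map_mul]
  have h2 : v (∑ q, (N * X (f b) * X q).trace * (gram X)⁻¹ q p) ≤
      Fintype.card (Fin m × Fin m) * (C * B) := by
    apply sum_le_card
    intro q
    rw [v.map_mul]
    exact mul_le_mul (hN _ q) (hB q p) (v.nonneg _) hC
  calc _ ≤ (Fintype.card (Fin m × Fin m) * (C * B)) * 1 :=
        mul_le_mul h2 (hv p a) (v.nonneg _) ((v.nonneg _).trans h2)
    _ = _ := mul_one _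

theorem exists_eigvec {F : Type*} [Field F] {m : ℕ} (A : Matrix (Fin m) (Fin m) F) (x : F)
    (h : (Matrix.scalar (Fin m) x - A).det = 0) : ∃ u, u ≠ 0 ∧ A *ᵥ u = x • u := by
  obtain ⟨u, hu, hu0⟩ := Matrix.exists_mulVec_eq_zero_iff.2 h
  refine ⟨u, hu, ?_⟩
  rw [Matrix.sub_mulVec, sub_eq_zero] at hu0
  rw [← hu0, Matrix.scalar_apply]
  ext j
  rw [Matrix.mulVec_diagonal]
  rfl

set_option maxHeartbeats 1000000 in
theorem limit_free {F : Type*} [Field F] [IsAlgClosed F] {m : ℕ} (hm : 0 < m) {Γ : Type*} [Group Γ]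
    (U : Ultrafilter ℕ) (av : ℕ → AbsoluteValue F ℝ) (M : ℕ → Γ →* GL (Fin m) F)
    (htr : ∀ h : Γ, ∃ C, ∀ᶠ i in (U : Filter ℕ), av i ((M i h).1.trace) ≤ C)
    (hgr : ∀ Γ0 : Subgroup Γ, Γ0.FiniteIndex → ∃ g : Fin m × Fin m → Γ, (∀ p, g p ∈ Γ0) ∧
      ∃ c > 0, ∀ᶠ i in (U : Filter ℕ), c ≤ av i (gram fun p => (M i (g p)).1).det)
    (γ : Γ) (hdet : ∀ i, (M i γ).1.det = 1) (lam : ℕ → F)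
    (hlam : ∀ᶠ i in (U : Filter ℕ), lam i ∈ (M i γ).1.charpoly.roots)
    (hl2 : ∀ᶠ i in (U : Filter ℕ), av i (lam i) = 2) :
    ∃ a : Fin 2 → Γ, ∀ᶠ i in (U : Filter ℕ),
      Function.Injective (FreeGroup.lift (fun j => M i (a j))) := by
  obtain ⟨g, -, c, hc, hg⟩ := hgr ⊤ inferInstance
  -- conjugators
  have hconj : ∀ i, ∃ P : GL (Fin m) F, (gram fun p => (M i (g p)).1).det ≠ 0 →
      ∃ (f : Fin m → Fin m × Fin m) (e : Fin m → F),
      (∀ b, (P.1)ᵀ b = (M i (g (f b))).1 *ᵥ e) ∧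
        ∀ p a, av i (((P⁻¹).1 *ᵥ ((M i (g p)).1 *ᵥ e)) a) ≤ 1 := by
    intro i
    by_cases h : (gram fun p => (M i (g p)).1).det ≠ 0
    · obtain ⟨P, f, e, h1⟩ := exists_conj hm (av i) _ h
      exact ⟨P, fun _ => ⟨f, e, h1⟩⟩
    · exact ⟨1, fun h' => absurd h' h⟩
  choose P hP using hconj
  let A : ℕ → Γ →* GL (Fin m) F := fun i => (MulAut.conj (P i)⁻¹).toMonoidHom.comp (M i)
  have hA : ∀ i h, (A i h).1 = ((P i)⁻¹).1 * (M i h).1 * (P i).1 := by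
    intro i h
    simp [A]
  have hunif : ∀ {ι : Type} [Finite ι] (x : ι → Γ), ∃ C : ℝ, 1 ≤ C ∧ ∀ᶠ i in (U : Filter ℕ),
      ∀ j, av i ((M i (x j)).1.trace) ≤ C := by
    intro ι _ x
    choose C hC using fun j => htr (x j)
    cases nonempty_fintype ι
    refine ⟨1 + ∑ j, |C j|, by have := Finset.sum_nonneg (fun j (_ : j ∈ Finset.univ) => abs_nonneg (C j)); linarith, ?_⟩
    rw [eventually_all]
    intro j
    filter_upwards [hC j] with i hi
    have := Finset.single_le_sum (f := fun j => |C j|) (fun j _ => abs_nonneg _) (Finset.mem_univ j)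
    have h2 := le_abs_self (C j)
    linarith
  have hbd : ∀ h a b, ∃ C, ∀ᶠ i in (U : Filter ℕ), av i ((A i h).1 a b) ≤ C := by
    intro h a b
    obtain ⟨C1, hC1, hC1'⟩ := hunif (fun pq : (Fin m × Fin m) × (Fin m × Fin m) => h * g pq.1 * g pq.2)
    obtain ⟨C2, hC2, hC2'⟩ := hunif (fun pq : (Fin m × Fin m) × (Fin m × Fin m) => g pq.1 * g pq.2)
    refine ⟨Fintype.card (Fin m × Fin m) * (Fintype.card (Fin m × Fin m) * (C1 * (c⁻¹ *
      ((Fintype.card (Fin m × Fin m)).factorial * C2 ^ Fintype.card (Fin m × Fin m))))), ?_⟩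
    · filter_upwards [hC1', hC2', hg] with i h1 h2 h3
      have hne : (gram fun p => (M i (g p)).1).det ≠ 0 := by
        intro h0
        rw [h0, map_zero] at h3
        linarith
      obtain ⟨f, e, hf1, hf2⟩ := hP i hne
      rw [hA]
      refine conj_bound (av i) hne hf1 hf2 _ (C := C1)
        (B := c⁻¹ * ((Fintype.card (Fin m × Fin m)).factorial * C2 ^ Fintype.card (Fin m × Fin m)))
        (by linarith) ?_ ?_ a b
      · intro p q
        rw [Matrix.inv_def, Matrix.smul_apply, smul_eq_mul, (av i).map_mul, Ring.inverse_eq_inv',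
          map_inv₀]
        apply mul_le_mul
        · exact inv_anti₀ hc h3
        · apply adj_bound _ _ hC2
          intro a b
          have := h2 (a, b)
          simpa [gram] using this
        · exact (av i).nonneg _
        · positivity
      · intro p q
        have := h1 (p, q)
        simpa using this
  obtain ⟨σ, hσ⟩ := exists_limhom (U := U) (av := av) A hbd
  have htrA : ∀ i (x : Γ), (A i x).1.trace = (M i x).1.trace := by
    intro i x
    rw [hA, Matrix.trace_mul_comm, ← mul_assoc, ← Units.val_mul, mul_inv_cancel]
    simp
  have hcpA : ∀ i (x : Γ) (y : F), (Matrix.scalar (Fin m) y - (A i x).1).det =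
      (Matrix.scalar (Fin m) y - (M i x).1).det := by
    intro i x y
    have h1 : Matrix.scalar (Fin m) y - (A i x).1 =
        ((P i)⁻¹).1 * (Matrix.scalar (Fin m) y - (M i x).1) * (P i).1 := by
      have h2 : ((P i)⁻¹).1 * Matrix.scalar (Fin m) y * (P i).1 = Matrix.scalar (Fin m) y := by
        rw [mul_assoc, (Matrix.scalar_commute y (fun r => mul_comm _ _) (P i).1).eq, ← mul_assoc,
          ← Units.val_mul, inv_mul_cancel]
        simp
      rw [hA, mul_sub, sub_mul, h2]
    rw [h1, Matrix.det_mul, Matrix.det_mul, mul_comm, ← mul_assoc, ← Matrix.det_mul, ← Units.val_mul,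
      mul_inv_cancel]
    simp
  -- spanning
  have hspan : ∀ Γ0 : Subgroup Γ, Γ0.FiniteIndex →
      Submodule.span (LimF U av) ((fun g => (σ g).1) '' (Γ0 : Set Γ)) = ⊤ := by
    intro Γ0 hΓ0
    obtain ⟨x, hx, c', hc', hx'⟩ := hgr Γ0 hΓ0
    have h1 : IsLimM U av (fun i => gram fun p => (M i (x p)).1) (gram fun p => (σ (x p)).1) := by
      intro p q
      have h2 := ((hσ (x p)).mul (hσ (x q))).trace
      refine h2.congr (Eventually.of_forall fun i => ?_)
      simp only [gram, Matrix.of_apply]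
      rw [← Units.val_mul, ← map_mul, htrA, map_mul, Units.val_mul]
    have h2 : (gram fun p => (σ (x p)).1).det ≠ 0 := by
      intro h0
      have h3 := h1.det
      rw [h0, isLim_zero_iff] at h3
      obtain ⟨i, hi1, hi2⟩ := ((h3.eventually (gt_mem_nhds hc')).and hx').exists
      linarith
    rw [eq_top_iff]
    intro N _
    rw [expand (Matrix.mul_nonsing_inv _ (isUnit_iff_ne_zero.2 h2)) N]
    apply Submodule.sum_mem
    intro p _
    exact Submodule.smul_mem _ _ (Submodule.subset_span ⟨x p, hx p, rfl⟩)
  -- eigenvalues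
  have heig : ∀ (y : ℕ → F), (∀ᶠ i in (U : Filter ℕ), y i ∈ (M i γ).1.charpoly.roots) →
      ∀ C : ℝ, (∀ᶠ i in (U : Filter ℕ), av i (y i) ≤ C) →
      ∃ (x : LimF U av) (u : Fin m → LimF U av), IsLim U av y x ∧ u ≠ 0 ∧ (σ γ).1 *ᵥ u = x • u := by
    intro y hy C hC
    obtain ⟨x, hx⟩ := IsLim.exists_lim hC
    have h1 : IsLimM U av (fun i => Matrix.scalar (Fin m) (y i) - (A i γ).1)
        (Matrix.scalar (Fin m) x - (σ γ).1) := by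
      refine IsLimM.sub (fun a b => ?_) (hσ γ)
      by_cases hab : a = b
      · subst hab; simpa [Matrix.scalar_apply] using hx
      · simpa [Matrix.scalar_apply, hab] using IsLim.zero
    have h2 : (Matrix.scalar (Fin m) x - (σ γ).1).det = 0 := by
      refine h1.det.unique (IsLim.zero.congr ?_)
      filter_upwards [hy] with i hi
      rw [hcpA, ← Matrix.eval_charpoly]
      exact (Polynomial.mem_roots'.1 hi).2.symm
    obtain ⟨u, hu, hu'⟩ := exists_eigvec _ _ h2
    exact ⟨x, u, hx, hu, hu'⟩
  choose mu hmu hmu1 using fun i => exists_small_root (av i) hm (M i γ).1 (hdet i)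
  obtain ⟨x, u, hx, hu, hxu⟩ := heig lam hlam 2 (hl2.mono fun i hi => hi.le)
  obtain ⟨x', u', hx', hu', hxu'⟩ := heig mu (Eventually.of_forall hmu) 1 (Eventually.of_forall hmu1)
  have hax : limAbs U av x = 2 := by
    refine tendsto_nhds_unique hx.tendsto ?_
    exact tendsto_const_nhds.congr' (hl2.mono fun i hi => hi.symm)
  have hax' : limAbs U av x' ≤ 1 :=
    le_of_tendsto hx'.tendsto (Eventually.of_forall hmu1)
  obtain ⟨a, ha⟩ := thmB (limAbs U av) σ hspan γ x x' (by linarith) u u' hu hu' hxu hxu'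
  refine ⟨a, ?_⟩
  have hletter : ∀ x : Fin 2 × Bool,
      IsLimM U av (fun i => (letter (fun j => A i (a j)) x).1) (letter (fun j => σ (a j)) x).1 := by
    rintro ⟨j, b⟩
    cases b
    · have := hσ (a j)⁻¹
      simpa [letter] using this
    · exact hσ (a j)
  filter_upwards [Cert.transfer hletter ha] with i hi
  have h1 := hi.injective
  have h2 : (FreeGroup.lift fun j => A i (a j)) =
      (MulAut.conj (P i)⁻¹).toMonoidHom.comp (FreeGroup.lift fun j => M i (a j)) := by
    ext j : 1
    simp only [MonoidHom.comp_apply, FreeGroup.lift_apply_of]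
    rfl
  rw [h2] at h1
  exact fun x y hxy => h1 (by rw [MonoidHom.comp_apply, hxy, MonoidHom.comp_apply])

end UTA

end

section
open Matrix Pointwise
open Filter Topology
namespace UTA

set_option linter.style.haveILetI false

theorem nat_le_pow {H : ℝ} (hH : 2 ≤ H) (n : ℕ) : (n : ℝ) ≤ H ^ n := by
  have h1 : (n : ℝ) ≤ 2 ^ n := by exact_mod_cast (Nat.lt_two_pow_self (n := n)).le
  exact h1.trans (pow_le_pow_left₀ (by norm_num) hH n)

theorem trace_map_ring {R R' : Type*} [CommRing R] [CommRing R'] {m : ℕ} (f : R →+* R')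
    (A : Matrix (Fin m) (Fin m) R) : (A.map f).trace = f A.trace := by
  simp [Matrix.trace]

theorem gram_lower {R : Type*} [CommRing R] (P : Places R) (m C : ℕ) : ∃ C' : ℕ, ∀ Ψ ∈ P.P,
    ∀ X : Fin m × Fin m → Matrix (Fin m) (Fin m) R,
    letI := P.nf
    (∀ w, ∀ ψ ∈ Ψ w, ψ (flat X).det ≠ 0) →
    ∀ H : ℝ, 2 ≤ H → (∀ p q, ∀ w, ∀ ψ ∈ Ψ w, ‖ψ (X p * X q).trace‖ ≤ H ^ C) →
    ∀ w, ∀ ψ ∈ Ψ w, 1 ≤ ‖ψ (gram X).det‖ * H ^ C' := by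
  letI := P.nf
  set d := Fintype.card (Fin m × Fin m) with hd
  refine ⟨(d.factorial + C * d) * P.E, ?_⟩
  intro Ψ hΨ X hX H hH htr w ψ hψ
  have h1 : ∀ w, ∀ ψ ∈ Ψ w, ψ (gram X).det ≠ 0 := by
    intro w ψ hψ
    rw [← gram_map, gram_ne, flat_map]
    exact hX w ψ hψ
  have hH1 : 1 ≤ H := by linarith
  have h2 : ∀ w, ∀ ψ ∈ Ψ w, ‖ψ (gram X).det‖ ≤ H ^ (d.factorial + C * d) := by
    intro w ψ hψ
    rw [← gram_map]
    have := det_bound (NormedField.toAbsoluteValue (P.C w)) (gram fun p => (X p).map ψ) (B := H ^ C)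
      (by
        intro p q
        have := htr p q w ψ hψ
        rw [← trace_map_ring, Matrix.map_mul] at this
        exact this)
    refine this.trans ?_
    rw [pow_add, ← pow_mul]
    gcongr
    exact nat_le_pow hH _
  have h3 := P.q1 Ψ hΨ _ h1 (H ^ (d.factorial + C * d)) (one_le_pow₀ hH1) h2 w ψ hψ
  rwa [← pow_mul] at h3

set_option maxHeartbeats 1000000 in
theorem pow_aux {H : ℝ} (hH : 2 ≤ H) (d b l : ℕ) :
    ((d : ℝ) * (d * H ^ b * H ^ b)) ^ (l + 1) * H ^ b ≤ H ^ ((d + (d + b + b)) * (l + 1) + b) := by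
  have hH0 : 0 < H := by linarith
  have : H ^ ((d + (d + b + b)) * (l + 1) + b) = (H ^ d * (H ^ d * H ^ b * H ^ b)) ^ (l + 1) * H ^ b := by
    rw [pow_add H, pow_mul H, pow_add H d, pow_add H (d + b), pow_add H d]
  rw [this]
  gcongr <;> exact nat_le_pow hH _

theorem growth_i {G R : Type*} [Group G] [CommRing R] (P : Places R) {m : ℕ} (ρ : G →* GL (Fin m) R)
    (l : ℕ) : ∃ C : ℕ, ∀ Ψ ∈ P.P, ∀ S : SymGen G, ∀ l0 L, 2 * l0 + 1 ≤ L →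
    ∀ x : Fin m × Fin m → G, (∀ p, x p ∈ S.S ^ l0) →
    letI := P.nf
    (∀ w, ∀ ψ ∈ Ψ w, ψ (flat fun p => (ρ (x p)).1).det ≠ 0) →
    ∀ H : ℝ, 2 ≤ H → (∀ w, ∀ ψ ∈ Ψ w, ∀ g ∈ S.S ^ L, ‖ψ (ρ g).1.trace‖ ≤ m * H ^ 2) →
    ∀ w, ∀ ψ ∈ Ψ w, ∀ g ∈ S.S ^ l, ‖ψ (ρ g).1.trace‖ ≤ H ^ C := by
  letI := P.nf
  set d := Fintype.card (Fin m × Fin m) with hd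
  set t := m + 2 with ht
  obtain ⟨C', hC'⟩ := gram_lower P m t
  set b := C' + (d.factorial + t * d) + t with hb
  refine ⟨(d + (d + b + b)) * (l + 1) + b, ?_⟩
  intro Ψ hΨ S l0 L hL x hx hne H hH htr w ψ hψ g hg
  have hH1 : 1 ≤ H := by linarith
  have hH0 : 0 < H := by linarith
  have htr' : ∀ w, ∀ ψ ∈ Ψ w, ∀ g ∈ S.S ^ L, ‖ψ (ρ g).1.trace‖ ≤ H ^ t := by
    intro w ψ hψ g hg
    refine (htr w ψ hψ g hg).trans ?_
    rw [ht, pow_add]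
    gcongr
    exact nat_le_pow hH _
  have hxx : ∀ s ∈ S.S, ∀ p q, s * x p * x q ∈ S.S ^ L := by
    intro s hs p q
    apply S.mono hL
    have : S.S ^ (2 * l0 + 1) = S.S * S.S ^ l0 * S.S ^ l0 := by
      rw [mul_assoc, ← pow_add, ← pow_succ']; congr 1; ring
    rw [this]
    exact Set.mul_mem_mul (Set.mul_mem_mul hs (hx p)) (hx q)
  have hlow := hC' Ψ hΨ (fun p => (ρ (x p)).1) hne H hH (by
    intro p q w ψ hψ
    have := htr' w ψ hψ _ (hxx 1 S.one p q)
    simpa using this) w ψ hψ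
  have hφ : ∀ g, (((GeneralLinearGroup.map (n := Fin m) ψ).comp ρ) g).1 = (ρ g).1.map ψ := fun g => rfl
  let φ : G →* Matrix (Fin m) (Fin m) (P.C w) :=
    (Units.coeHom _).comp ((GeneralLinearGroup.map (n := Fin m) ψ).comp ρ)
  have hφ' : ∀ g, φ g = (ρ g).1.map ψ := fun g => rfl
  have hφtr : ∀ g, (φ g).trace = ψ (ρ g).1.trace := fun g => by rw [hφ', trace_map_ring]
  set v := NormedField.toAbsoluteValue (P.C w) with hv
  have hvn : ∀ y, v y = ‖y‖ := fun y => rfl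
  rw [← gram_map] at hlow
  have hgd : (gram fun p => φ (x p)).det ≠ 0 := by
    intro h0
    have : (gram fun p => (ρ (x p)).1.map ψ).det = 0 := h0
    rw [this] at hlow
    simp at hlow
    linarith
  have hgdinv : ‖(gram fun p => φ (x p)).det‖⁻¹ ≤ H ^ C' := by
    rw [inv_le_iff_one_le_mul₀ (norm_pos_iff.2 hgd)]
    rw [mul_comm]
    exact hlow
  have hres := growth v (X := fun p => φ (x p)) (Matrix.mul_nonsing_inv _ (isUnit_iff_ne_zero.2 hgd)) φ S.S
    (H ^ b) (one_le_pow₀ hH1) ?_ ?_ ?_ l g hg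
  · have h1 := hres.2
    rw [hφtr, hvn] at h1
    exact h1.trans (pow_aux hH d b l)
  · intro p q
    rw [Matrix.inv_def, Matrix.smul_apply, smul_eq_mul, v.map_mul, Ring.inverse_eq_inv', map_inv₀]
    have h1 := adj_bound v (gram fun p => φ (x p)) (B := H ^ t) (one_le_pow₀ hH1) (by
      intro p q
      have := htr' w ψ hψ _ (hxx 1 S.one p q)
      rw [← hφtr] at this
      simpa [gram] using! this) p q
    calc _ ≤ H ^ C' * (d.factorial * (H ^ t) ^ d) :=
          mul_le_mul hgdinv h1 (v.nonneg _) (by positivity)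
      _ ≤ H ^ C' * (H ^ d.factorial * (H ^ t) ^ d) := by
          gcongr
          exact nat_le_pow hH _
      _ = H ^ (C' + (d.factorial + t * d)) := by rw [← pow_mul, ← pow_add, ← pow_add]
      _ ≤ H ^ b := pow_le_pow_right₀ hH1 (by omega)
  · intro s hs p q
    have := htr' w ψ hψ _ (hxx s hs p q)
    rw [← hφtr, map_mul, map_mul] at this
    exact this.trans (pow_le_pow_right₀ hH1 (by omega))
  · intro p
    have := htr' w ψ hψ _ (S.mono (show l0 ≤ L by omega) (hx p))
    rw [← hφtr] at this
    exact this.trans (pow_le_pow_right₀ hH1 (by omega))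

end UTA

end

section
open Matrix Pointwise
open Filter Topology
namespace UTA

attribute [instance] Places.nf Places.ac Places.fW Places.neW

theorem fin_case {F : Type*} [Field F] {m : ℕ} (hm : 2 ≤ m) {Γ : Type*} [Group Γ]
    (U : Ultrafilter ℕ) (M : ℕ → Γ →* GL (Fin m) F) (Y : Set F) (hY : Y.Finite)
    (htr : ∀ h : Γ, ∀ᶠ i in (U : Filter ℕ), (M i h).1.trace ∈ Y)
    (hgr : ∀ Γ0 : Subgroup Γ, Γ0.FiniteIndex → ∃ g : Fin m × Fin m → Γ, (∀ p, g p ∈ Γ0) ∧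
      ∀ᶠ i in (U : Filter ℕ), (flat fun p => (M i (g p)).1).det ≠ 0) : False := by
  obtain ⟨g, -, hg⟩ := hgr ⊤ inferInstance
  have hc : ∀ h p, ∃ y : Y, ∀ᶠ i in (U : Filter ℕ), (M i (h * g p)).1.trace = y := by
    intro h p
    have h1 := htr (h * g p)
    haveI := hY.to_subtype
    have h2 : ∀ᶠ i in (U : Filter ℕ), ∃ y : Y, (M i (h * g p)).1.trace = y :=
      h1.mono fun i hi => ⟨⟨_, hi⟩, rfl⟩
    rwa [Ultrafilter.eventually_exists_iff] at h2
  choose c hc using hc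
  let Γ0 : Subgroup Γ :=
    { carrier := {h | ∀ᶠ i in (U : Filter ℕ), M i h = 1}
      mul_mem' := by
        intro a b ha hb
        filter_upwards [ha, hb] with i h1 h2
        rw [map_mul, h1, h2, one_mul]
      one_mem' := Eventually.of_forall fun i => map_one _
      inv_mem' := by
        intro a ha
        filter_upwards [ha] with i h1
        rw [map_inv, h1, inv_one] }
  have hmem : ∀ h, h ∈ Γ0 ↔ ∀ᶠ i in (U : Filter ℕ), M i h = 1 := fun _ => Iff.rfl
  have hcc : ∀ h h', c h = c h' → h⁻¹ * h' ∈ Γ0 := by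
    intro h h' e
    rw [hmem]
    have h1 : ∀ᶠ i in (U : Filter ℕ), ∀ p, (M i (h * g p)).1.trace = c h p :=
      eventually_all.2 fun p => hc h p
    have h2 : ∀ᶠ i in (U : Filter ℕ), ∀ p, (M i (h' * g p)).1.trace = c h' p :=
      eventually_all.2 fun p => hc h' p
    filter_upwards [h1, h2, hg] with i h1 h2 h3
    have h4 := (gram_ne _).2 h3
    have hV := Matrix.mul_nonsing_inv _ (isUnit_iff_ne_zero.2 h4)
    have e1 := expand hV (M i h).1
    have e2 := expand hV (M i h').1
    have e3 : (M i h).1 = (M i h').1 := by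
      rw [e1, e2]
      refine Finset.sum_congr rfl fun p _ => ?_
      congr 1
      refine Finset.sum_congr rfl fun q _ => ?_
      congr 1
      have a1 := h1 q
      have a2 := h2 q
      rw [map_mul, Units.val_mul] at a1 a2
      rw [a1, a2, e]
    rw [map_mul, map_inv, ← Units.ext e3, inv_mul_cancel]
  have hfi : Γ0.FiniteIndex := by
    haveI := hY.to_subtype
    haveI : Finite (Γ ⧸ Γ0) := by
      refine Finite.of_injective (fun q : Γ ⧸ Γ0 => c q.out) ?_
      intro q q' h
      have := hcc _ _ h
      rw [← QuotientGroup.eq] at this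
      simpa using this
    exact Subgroup.finiteIndex_of_finite_quotient
  obtain ⟨g', hg', hd⟩ := hgr Γ0 hfi
  have h1 : ∀ᶠ i in (U : Filter ℕ), ∀ p, M i (g' p) = 1 := eventually_all.2 fun p => hg' p
  obtain ⟨i, h1, h2⟩ := (h1.and hd).exists
  apply h2
  refine Matrix.det_zero_of_row_eq (i := (⟨0, by omega⟩, ⟨0, by omega⟩))
    (j := (⟨0, by omega⟩, ⟨1, by omega⟩)) (by simp) ?_
  funext q
  simp [flat, h1]

theorem exists_big {G R : Type*} [Group G] [CommRing R] (P : Places R) {m : ℕ} (hm : 2 ≤ m)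
    (ρ : G →* GL (Fin m) R) (S : ℕ → SymGen G) (U : Ultrafilter ℕ)
    (Ψ : ℕ → ∀ w, Set (R →+* P.C w)) (hΨ : ∀ i, Ψ i ∈ P.P)
    (hne : ∀ x : Fin m × Fin m → Gstar S,
      (∀ᶠ i in (U : Filter ℕ), (flat fun p => (ρ ((x p).1 i)).1).det ≠ 0) →
      ∀ᶠ i in (U : Filter ℕ), ∀ w, ∀ ψ ∈ Ψ i w,
        ψ (flat fun p => (ρ ((x p).1 i)).1).det ≠ 0)
    (hSI : ∀ Γ0 : Subgroup (Gstar S), Γ0.FiniteIndex → ∃ g : Fin m × Fin m → Gstar S,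
      (∀ p, g p ∈ Γ0) ∧ ∀ᶠ i in (U : Filter ℕ), (flat fun p => (ρ ((g p).1 i)).1).det ≠ 0) :
    ∃ L, ∀ᶠ i in (U : Filter ℕ), ∃ w, ∃ ψ ∈ Ψ i w,
      ∃ g ∈ (S i).S ^ L, ∃ x ∈ ((ρ g).1.map ψ).charpoly.roots, 2 < ‖x‖ := by
  by_contra hcon
  push Not at hcon
  have hcon' : ∀ L, ∀ᶠ i in (U : Filter ℕ), ∀ w, ∀ ψ ∈ Ψ i w, ∀ g ∈ (S i).S ^ L,
      ∀ x ∈ ((ρ g).1.map ψ).charpoly.roots, ‖x‖ ≤ 2 := by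
    intro L
    have := hcon L
    exact this
  obtain ⟨Y, hYf, hY⟩ := P.q2 (m * 2)
  let w := Classical.arbitrary P.W
  choose ψ hψ using fun i => P.ne (Ψ i) (hΨ i) w
  refine fin_case hm U (fun i => (GeneralLinearGroup.map (n := Fin m) (ψ i)).comp (evG S ρ i)) (Y w) (hYf w) ?_ ?_
  · rintro ⟨h, L, hL⟩
    filter_upwards [hcon' L] with i hi
    have h1 : ∀ w, ∀ ψ ∈ Ψ i w, ‖ψ (ρ (h i)).1.trace‖ ≤ m * 2 := by
      intro w ψ hψ
      rw [← trace_map_ring]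
      exact trace_le (NormedField.toAbsoluteValue (P.C w)) _ (by norm_num) (hi w ψ hψ (h i) (hL i))
    have h2 := hY (Ψ i) (hΨ i) _ h1 w (ψ i) (hψ i)
    rw [← trace_map_ring] at h2
    exact h2
  · intro Γ0 hΓ0
    obtain ⟨g, hg, hd⟩ := hSI Γ0 hΓ0
    refine ⟨g, hg, ?_⟩
    filter_upwards [hne g hd] with i hi
    have := hi w (ψ i) (hψ i)
    rw [← flat_map] at this
    exact this

end UTA

end

section
open Matrix Pointwise
open Filter Topology
namespace UTA

theorem scale_av {F : Type*} [NormedField F] {H : ℝ} (hH : 2 ≤ H) : ∃ av : AbsoluteValue F ℝ,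
    (∀ x, ∀ C : ℕ, ‖x‖ ≤ H ^ C → av x ≤ 2 ^ C) ∧
    (∀ x, ∀ C : ℕ, 1 ≤ ‖x‖ * H ^ C → 1 ≤ av x * 2 ^ C) ∧ ∀ x, ‖x‖ = H → av x = 2 := by
  have hH0 : 0 < H := by linarith
  have hl : 1 ≤ Real.logb 2 H := by
    rw [Real.le_logb_iff_rpow_le (by norm_num) hH0]
    simpa using hH
  set θ := (Real.logb 2 H)⁻¹ with hθ
  have hθ0 : 0 < θ := inv_pos.2 (by linarith)
  have hθ1 : θ ≤ 1 := inv_le_one_of_one_le₀ hl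
  have hHθ : H ^ θ = 2 := by
    have : H = 2 ^ Real.logb 2 H := (Real.rpow_logb (by norm_num) (by norm_num) hH0).symm
    conv_lhs => rw [this]
    rw [← Real.rpow_mul (by norm_num), hθ, mul_inv_cancel₀ (by linarith), Real.rpow_one]
  have hHC : ∀ C : ℕ, (H ^ C) ^ θ = 2 ^ C := by
    intro C
    rw [← Real.rpow_natCast, ← Real.rpow_mul hH0.le, mul_comm, Real.rpow_mul hH0.le, hHθ,
      Real.rpow_natCast]
  let av : AbsoluteValue F ℝ :=
    { toFun := fun x => ‖x‖ ^ θ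
      map_mul' := fun x y => by rw [norm_mul, Real.mul_rpow (norm_nonneg _) (norm_nonneg _)]
      nonneg' := fun x => Real.rpow_nonneg (norm_nonneg _) _
      eq_zero' := fun x => by
        rw [Real.rpow_eq_zero (norm_nonneg _) hθ0.ne', norm_eq_zero]
      add_le' := fun x y => by
        refine (Real.rpow_le_rpow (norm_nonneg _) (norm_add_le x y) hθ0.le).trans ?_
        exact Real.rpow_add_le_add_rpow (norm_nonneg _) (norm_nonneg _) hθ0.le hθ1 }
  have hav : ∀ x, av x = ‖x‖ ^ θ := fun _ => rfl
  refine ⟨av, ?_, ?_, ?_⟩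
  · intro x C h
    rw [hav, ← hHC]
    exact Real.rpow_le_rpow (norm_nonneg _) h hθ0.le
  · intro x C h
    rw [hav, ← hHC, ← Real.mul_rpow (norm_nonneg _) (by positivity)]
    exact Real.one_le_rpow h hθ0.le
  · intro x h
    rw [hav, h, hHθ]

theorem pick {A : Set ℝ} (hA : BddAbove A) (h2 : ∃ a ∈ A, 2 < a) :
    ∃ H ∈ A, 2 < H ∧ ∀ a ∈ A, a ≤ H ^ 2 := by
  obtain ⟨a, ha, ha2⟩ := h2
  have hs : 2 < sSup A := ha2.trans_le (le_csSup hA ha)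
  have hlt : max 2 (Real.sqrt (sSup A)) < sSup A := by
    refine max_lt hs ?_
    rw [Real.sqrt_lt' (by linarith)]
    nlinarith
  obtain ⟨H, hHA, hH⟩ := exists_lt_of_lt_csSup ⟨a, ha⟩ hlt
  rw [max_lt_iff] at hH
  refine ⟨H, hHA, hH.1, fun b hb => (le_csSup hA hb).trans ?_⟩
  have := hH.2
  rw [Real.sqrt_lt' (by linarith)] at this
  exact this.le

theorem ent_bdd {G R : Type*} [Group G] [CommRing R] (P : Places R) {m : ℕ}
    (ρ : G →* GL (Fin m) R) (Ψ : ∀ w, Set (R →+* P.C w)) (hΨ : Ψ ∈ P.P) (T : Set G) (hT : T.Finite) :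
    ∃ B : ℝ, ∀ w, ∀ ψ ∈ Ψ w, ∀ g ∈ T, ∀ a b, ‖ψ ((ρ g).1 a b)‖ ≤ B := by
  choose B hB using P.q3 Ψ hΨ
  have hf : ((fun t : G × Fin m × Fin m => B ((ρ t.1).1 t.2.1 t.2.2)) ''
      (T ×ˢ (Set.univ : Set (Fin m × Fin m)))).Finite := (hT.prod Set.finite_univ).image _
  obtain ⟨C, hC⟩ := hf.bddAbove
  refine ⟨C, fun w ψ hψ g hg a b => (hB _ w ψ hψ).trans (hC ?_)⟩
  exact ⟨(g, a, b), ⟨hg, trivial⟩, rfl⟩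

theorem SymGen.finpow {G : Type*} [Group G] (S : SymGen G) (l : ℕ) : (S.S ^ l).Finite := by
  induction l with
  | zero => simp
  | succ l ih => rw [pow_succ]; exact ih.mul S.fin

theorem unif_l {G : Type*} [Group G] (S : ℕ → SymGen G) {ι : Type*} [Fintype ι] (g : ι → Gstar S) :
    ∃ l, ∀ p i, (g p).1 i ∈ (S i).S ^ l := by
  choose l hl using fun p => (g p).2
  exact ⟨Finset.univ.sup l, fun p i => (S i).mono (Finset.le_sup (Finset.mem_univ p)) (hl p i)⟩

set_option maxHeartbeats 1000000 in
theorem main_uf {G R : Type*} [Group G] [CommRing R] (P : Places R) {m : ℕ} (hm : 2 ≤ m)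
    (ρ : G →* GL (Fin m) R) (hdet : ∀ g, (ρ g).1.det = 1) (S : ℕ → SymGen G) (U : Ultrafilter ℕ)
    (hU : (U : Filter ℕ) ≤ atTop)
    (hSI : ∀ Γ0 : Subgroup (Gstar S), Γ0.FiniteIndex → ∃ g : Fin m × Fin m → Gstar S,
      (∀ p, g p ∈ Γ0) ∧ ∀ᶠ i in (U : Filter ℕ), (flat fun p => (ρ ((g p).1 i)).1).det ≠ 0) :
    ∃ a : Fin 2 → Gstar S, ∀ᶠ i in (U : Filter ℕ),
      Function.Injective (FreeGroup.lift fun j => (a j).1 i) := by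
  -- choose the sets of places
  have hX : ∀ i, ∃ Ψ ∈ P.P, ∀ x : Fin m × Fin m → G, (∀ p, x p ∈ (S i).S ^ i) →
      (flat fun p => (ρ (x p)).1).det ≠ 0 → ∀ w, ∀ ψ ∈ Ψ w, ψ (flat fun p => (ρ (x p)).1).det ≠ 0 := by
    intro i
    have hf : {x : Fin m × Fin m → G | ∀ p, x p ∈ (S i).S ^ i}.Finite :=
      Set.Finite.pi' fun _ => (S i).finpow _
    obtain ⟨Ψ, hΨ, h⟩ := P.q0 (((fun x : Fin m × Fin m → G => (flat fun p => (ρ (x p)).1).det) ''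
      {x : Fin m × Fin m → G | ∀ p, x p ∈ (S i).S ^ i}) ∩ {y | y ≠ 0})
      ((hf.image _).subset Set.inter_subset_left) (fun x hx => hx.2)
    exact ⟨Ψ, hΨ, fun x hx hx0 => h _ ⟨⟨x, hx, rfl⟩, hx0⟩⟩
  choose Ψ hΨ hΨne using hX
  have hne : ∀ x : Fin m × Fin m → Gstar S,
      (∀ᶠ i in (U : Filter ℕ), (flat fun p => (ρ ((x p).1 i)).1).det ≠ 0) →
      ∀ᶠ i in (U : Filter ℕ), ∀ w, ∀ ψ ∈ Ψ i w, ψ (flat fun p => (ρ ((x p).1 i)).1).det ≠ 0 := by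
    intro x hx
    obtain ⟨l, hl⟩ := unif_l S x
    filter_upwards [hx, hU (eventually_ge_atTop l)] with i h1 h2
    exact hΨne i (fun p => (x p).1 i) (fun p => (S i).mono h2 (hl p i)) h1
  obtain ⟨L1, hL1⟩ := exists_big P hm ρ S U Ψ hΨ hne hSI
  obtain ⟨g0, -, hg0⟩ := hSI ⊤ inferInstance
  obtain ⟨l0, hl0⟩ := unif_l S g0
  have hg0' := hne g0 hg0
  set L := max L1 (2 * l0 + 1) with hL
  -- pick the dominating eigenvalue
  have hdom : ∀ᶠ i in (U : Filter ℕ), ∃ w, ∃ ψ ∈ Ψ i w, ∃ g ∈ (S i).S ^ L,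
      ∃ x ∈ ((ρ g).1.map ψ).charpoly.roots, 2 < ‖x‖ ∧
      ∀ w', ∀ ψ' ∈ Ψ i w', ∀ g' ∈ (S i).S ^ L, ∀ x' ∈ ((ρ g').1.map ψ').charpoly.roots,
        ‖x'‖ ≤ ‖x‖ ^ 2 := by
    filter_upwards [hL1] with i hi
    obtain ⟨B, hB⟩ := ent_bdd P ρ (Ψ i) (hΨ i) ((S i).S ^ L) ((S i).finpow _)
    obtain ⟨w, ψ, hψ, g, hg, x, hx, hx2⟩ := hi
    obtain ⟨H, ⟨w, ψ, hψ, g, hg, x, hx, rfl⟩, hH2, hH⟩ := pick (A := {r | ∃ w, ∃ ψ ∈ Ψ i w, ∃ g ∈ (S i).S ^ L,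
      ∃ x ∈ ((ρ g).1.map ψ).charpoly.roots, ‖x‖ = r})
      ⟨m * B, by
        rintro r ⟨w, ψ, hψ, g, hg, x, hx, rfl⟩
        exact root_le (NormedField.toAbsoluteValue (P.C w)) _ (fun a b => hB w ψ hψ g hg a b) hx⟩
      ⟨_, ⟨w, ψ, hψ, g, (S i).mono (le_max_left _ _) hg, x, hx, rfl⟩, hx2⟩
    exact ⟨w, ψ, hψ, g, hg, x, hx, hH2, fun w' ψ' hψ' g' hg' x' hx' =>
      hH _ ⟨w', ψ', hψ', g', hg', x', hx', rfl⟩⟩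
  rw [Ultrafilter.eventually_exists_iff] at hdom
  obtain ⟨w, hdom⟩ := hdom
  have hch : ∀ i, ∃ ψ ∈ Ψ i w, ∃ g ∈ (S i).S ^ L, ∃ x : P.C w,
      (∃ ψ ∈ Ψ i w, ∃ g ∈ (S i).S ^ L,
      ∃ x ∈ ((ρ g).1.map ψ).charpoly.roots, 2 < ‖x‖ ∧
      ∀ w', ∀ ψ' ∈ Ψ i w', ∀ g' ∈ (S i).S ^ L, ∀ x' ∈ ((ρ g').1.map ψ').charpoly.roots,
        ‖x'‖ ≤ ‖x‖ ^ 2) → x ∈ ((ρ g).1.map ψ).charpoly.roots ∧ 2 < ‖x‖ ∧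
      ∀ w', ∀ ψ' ∈ Ψ i w', ∀ g' ∈ (S i).S ^ L, ∀ x' ∈ ((ρ g').1.map ψ').charpoly.roots,
        ‖x'‖ ≤ ‖x‖ ^ 2 := by
    intro i
    by_cases h : ∃ ψ ∈ Ψ i w, ∃ g ∈ (S i).S ^ L,
      ∃ x ∈ ((ρ g).1.map ψ).charpoly.roots, 2 < ‖x‖ ∧
      ∀ w', ∀ ψ' ∈ Ψ i w', ∀ g' ∈ (S i).S ^ L, ∀ x' ∈ ((ρ g').1.map ψ').charpoly.roots,
        ‖x'‖ ≤ ‖x‖ ^ 2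
    · obtain ⟨ψ, hψ, g, hg, x, hx⟩ := h
      exact ⟨ψ, hψ, g, hg, x, fun _ => hx⟩
    · obtain ⟨ψ, hψ⟩ := P.ne (Ψ i) (hΨ i) w
      exact ⟨ψ, hψ, 1, (S i).mono (Nat.zero_le _) (by simp), 0, fun h' => absurd h' h⟩
  choose ψ hψ γ hγ lam hlam using hch
  have hlam' := hdom.mono fun i hi => hlam i hi
  have hav : ∀ i, ∃ av : AbsoluteValue (P.C w) ℝ, 2 < ‖lam i‖ →
      (∀ x, ∀ C : ℕ, ‖x‖ ≤ ‖lam i‖ ^ C → av x ≤ 2 ^ C) ∧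
      (∀ x, ∀ C : ℕ, 1 ≤ ‖x‖ * ‖lam i‖ ^ C → 1 ≤ av x * 2 ^ C) ∧ ∀ x, ‖x‖ = ‖lam i‖ → av x = 2 := by
    intro i
    by_cases h : 2 < ‖lam i‖
    · obtain ⟨av, hav⟩ := scale_av (F := P.C w) h.le
      exact ⟨av, fun _ => hav⟩
    · exact ⟨NormedField.toAbsoluteValue _, fun h' => absurd h' h⟩
  choose av hav using hav
  have hgrow : ∀ l, ∃ C : ℕ, ∀ᶠ i in (U : Filter ℕ), ∀ w, ∀ ψ ∈ Ψ i w, ∀ g ∈ (S i).S ^ l,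
      ‖ψ (ρ g).1.trace‖ ≤ ‖lam i‖ ^ C := by
    intro l
    obtain ⟨C, hC⟩ := growth_i P ρ l
    refine ⟨C, ?_⟩
    filter_upwards [hlam', hg0'] with i h1 h2
    refine hC (Ψ i) (hΨ i) (S i) l0 L (le_max_right _ _) (fun p => (g0 p).1 i) (fun p => hl0 p i) h2
      ‖lam i‖ h1.2.1.le ?_
    intro w' ψ' hψ' g' hg'
    rw [← trace_map_ring]
    exact trace_le (NormedField.toAbsoluteValue (P.C w')) _ (by positivity) (h1.2.2 w' ψ' hψ' g' hg')
  have hfin : ∃ a : Fin 2 → Gstar S, ∀ᶠ i in (U : Filter ℕ), Function.Injective (FreeGroup.lift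
      (fun j => ((GeneralLinearGroup.map (n := Fin m) (ψ i)).comp (evG S ρ i)) (a j))) := ?_
  · obtain ⟨a, ha⟩ := hfin
    refine ⟨a, ha.mono fun i hi => ?_⟩
    have : (FreeGroup.lift (fun j => ((GeneralLinearGroup.map (n := Fin m) (ψ i)).comp (evG S ρ i)) (a j))) =
      ((GeneralLinearGroup.map (n := Fin m) (ψ i)).comp ρ).comp (FreeGroup.lift fun j => (a j).1 i) := by
      ext1 j
      simp [evG_apply]
    rw [this] at hi
    rw [MonoidHom.coe_comp] at hi
    exact Function.Injective.of_comp hi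
  refine limit_free (F := P.C w) (m := m) (by omega) (Γ := Gstar S) U av
    (fun i => (GeneralLinearGroup.map (n := Fin m) (ψ i)).comp (evG S ρ i)) ?_ ?_
    ⟨γ, L, hγ⟩ ?_ lam ?_ ?_
  · rintro ⟨h, l, hl⟩
    obtain ⟨C, hC⟩ := hgrow l
    refine ⟨2 ^ C, ?_⟩
    filter_upwards [hC, hlam'] with i h1 h2
    have h3 := h1 w (ψ i) (hψ i) (h i) (hl i)
    rw [← trace_map_ring] at h3
    exact (hav i h2.2.1).1 _ _ h3
  · intro Γ0 hΓ0
    obtain ⟨g, hg, hd⟩ := hSI Γ0 hΓ0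
    refine ⟨g, hg, ?_⟩
    obtain ⟨l, hl⟩ := unif_l S g
    obtain ⟨C, hC⟩ := hgrow (l + l)
    obtain ⟨C', hC'⟩ := gram_lower P m C
    refine ⟨(2 ^ C')⁻¹, by positivity, ?_⟩
    filter_upwards [hC, hlam', hne g hd] with i h1 h2 h3
    have h4 := hC' (Ψ i) (hΨ i) (fun p => (ρ ((g p).1 i)).1) h3 ‖lam i‖ h2.2.1.le (by
      intro p q w' ψ' hψ'
      have := h1 w' ψ' hψ' ((g p).1 i * (g q).1 i) (by
        rw [pow_add]; exact Set.mul_mem_mul (hl p i) (hl q i))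
      rw [map_mul, Units.val_mul] at this
      exact this) w (ψ i) (hψ i)
    rw [← gram_map] at h4
    have h5 := (hav i h2.2.1).2.1 _ _ h4
    rw [inv_le_iff_one_le_mul₀ (by positivity)]
    exact h5
  · intro i
    have : ((ρ (γ i)).1.map (ψ i)).det = 1 := by
      have := RingHom.map_det (ψ i) (ρ (γ i)).1
      rw [hdet, map_one] at this
      exact this.symm
    exact this
  · exact hlam'.mono fun i hi => hi.1
  · exact hlam'.mono fun i hi => (hav i hi.2.1).2.2 _ rfl

end UTA

end

section
open Matrix Pointwise
open Filter Topology
namespace UTA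

theorem lift_ring {G : Type*} [Group G] (hG : Group.FG G) {K : Type u} [Field K] {m : ℕ}
    (ρ : G →* GL (Fin m) K) : ∃ (R : Type u) (_ : CommRing R) (ι : R →+* K) (_ : Places R)
      (ρR : G →* GL (Fin m) R), Function.Injective ι ∧ ∀ g, (ρR g).1.map ι = (ρ g).1 := by
  classical
  obtain ⟨T, hT⟩ := hG.out
  obtain ⟨R, _, ι, hι, hY, ⟨P⟩⟩ := places_exist K
    (((T ×ˢ (Finset.univ : Finset (Fin m × Fin m))).image fun t => (ρ t.1).1 t.2.1 t.2.2) ∪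
     ((T ×ˢ (Finset.univ : Finset (Fin m × Fin m))).image fun t => (ρ t.1⁻¹).1 t.2.1 t.2.2))
  have h1 : ∀ g, (∀ a b, (ρ g).1 a b ∈ ι.range) ∧ ∀ a b, (ρ g⁻¹).1 a b ∈ ι.range := by
    intro g
    have hg : g ∈ Subgroup.closure (T : Set G) := by rw [hT]; trivial
    induction hg using Subgroup.closure_induction with
    | mem x hx =>
      constructor
      · intro a b
        refine hY _ (Finset.mem_union_left _ (Finset.mem_image.2 ⟨(x, a, b), ?_, rfl⟩))
        simpa using hx
      · intro a b
        refine hY _ (Finset.mem_union_right _ (Finset.mem_image.2 ⟨(x, a, b), ?_, rfl⟩))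
        simpa using hx
    | one =>
      have : ∀ a b, (1 : Matrix (Fin m) (Fin m) K) a b ∈ ι.range := by
        intro a b
        rw [Matrix.one_apply]
        split_ifs
        · exact one_mem _
        · exact zero_mem _
      constructor <;> intro a b <;> simpa using this a b
    | mul x y _ _ ihx ihy =>
      constructor
      · intro a b
        rw [map_mul, Units.val_mul, Matrix.mul_apply]
        exact sum_mem fun c _ => mul_mem (ihx.1 _ _) (ihy.1 _ _)
      · intro a b
        rw [_root_.mul_inv_rev, map_mul, Units.val_mul, Matrix.mul_apply]
        exact sum_mem fun c _ => mul_mem (ihy.2 _ _) (ihx.2 _ _)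
    | inv x _ ih => exact ⟨ih.2, by simpa using ih.1⟩
  have h2 : ∀ g, ∃ A : Matrix (Fin m) (Fin m) R, A.map ι = (ρ g).1 := by
    intro g
    choose A hA using (h1 g).1
    exact ⟨Matrix.of A, by ext a b; exact hA a b⟩
  choose A hA using h2
  have hinj : Function.Injective (fun B : Matrix (Fin m) (Fin m) R => B.map ι) := Matrix.map_injective hι
  let f : G →* Matrix (Fin m) (Fin m) R :=
    { toFun := A
      map_one' := hinj (by
        change (A 1).map ι = (1 : Matrix _ _ R).map ι
        rw [hA, Matrix.map_one _ (map_zero _) (map_one _)]; simp)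
      map_mul' := fun x y => hinj (by
        change (A (x * y)).map ι = (A x * A y).map ι
        rw [hA, Matrix.map_mul, hA, hA]; simp) }
  exact ⟨R, _, ι, P, f.toHomUnits, hι, fun g => hA g⟩

theorem thm_sl {G : Type*} [Group G] (hG : Group.FG G) {K : Type*} [Field K] [IsAlgClosed K]
    {m : ℕ} (hm : 2 ≤ m) (ρ : G →* GL (Fin m) K) (hdet : ∀ g, (ρ g).1.det = 1) (hρ : StrIrr ρ) :
    ∃ N, ∀ S : SymGen G, ∃ a : Fin 2 → G, (∀ j, a j ∈ S.S ^ N) ∧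
      Function.Injective (FreeGroup.lift a) := by
  by_contra hcon
  push Not at hcon
  choose S hS using hcon
  obtain ⟨R, _, ι, P, ρR, hι, hρR⟩ := lift_ring hG ρ
  have hdetR : ∀ g, (ρR g).1.det = 1 := by
    intro g
    apply hι
    rw [RingHom.map_det, map_one, ← hdet g, ← hρR g]
    rfl
  obtain ⟨a, ha⟩ := main_uf P hm ρR hdetR S (hyperfilter ℕ) Nat.hyperfilter_le_atTop (by
    intro Γ0 hΓ0
    obtain ⟨g, hg, hd⟩ := SIstar (by omega) ρ hρ S (hyperfilter ℕ) Γ0 hΓ0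
    refine ⟨g, hg, hd.mono fun i hi h0 => hi ?_⟩
    have := flat_map ι (fun p => (ρR ((g p).1 i)).1)
    rw [h0, map_zero] at this
    rw [← this]
    simp only [hρR]
    rfl)
  obtain ⟨l, hl⟩ := unif_l S a
  obtain ⟨i, h1, h2⟩ := (ha.and (Nat.hyperfilter_le_atTop (eventually_ge_atTop l))).exists
  exact hS i (fun j => (a j).1 i) (fun j => (S i).mono h2 (hl j i)) h1

end UTA

end

section
open Matrix Pointwise
open Filter Topology
namespace UTA

theorem exists_symgen {G : Type*} [Group G] (hG : Group.FG G) : Nonempty (SymGen G) := by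
  obtain ⟨T, hT⟩ := hG.out
  refine ⟨⟨(T : Set G) ∪ (T : Set G)⁻¹ ∪ {1}, ?_, ?_, ?_, ?_⟩⟩
  · exact (T.finite_toSet.union T.finite_toSet.inv).union (Set.finite_singleton _)
  · simp
  · rintro s ((hs | hs) | hs)
    · exact Or.inl (Or.inr (by simpa using hs))
    · exact Or.inl (Or.inl hs)
    · exact Or.inr (by simp at hs; simp [hs])
  · rw [eq_top_iff, ← hT]
    exact Subgroup.closure_mono fun x hx => Or.inl (Or.inl hx)

theorem fg_symgen {G : Type*} [Group G] (S : SymGen G) : Group.FG G :=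
  ⟨⟨S.fin.toFinset, by rw [Set.Finite.coe_toFinset]; exact S.gen⟩⟩

section tw
variable {G : Type*} [Group G] {K : Type*} [Field K] {m : ℕ}

def dlt (ρ : G →* GL (Fin m) K) : G × Kˣ →* Kˣ :=
  ((powMonoidHom m).comp (MonoidHom.snd G Kˣ)) *
    ((GeneralLinearGroup.det).comp (ρ.comp (MonoidHom.fst G Kˣ)))

theorem dlt_apply (ρ : G →* GL (Fin m) K) (p : G × Kˣ) :
    dlt ρ p = p.2 ^ m * GeneralLinearGroup.det (ρ p.1) := rfl

def rtw (ρ : G →* GL (Fin m) K) : (dlt ρ).ker →* GL (Fin m) K where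
  toFun p := Units.map (Matrix.scalar (Fin m) : K →+* Matrix (Fin m) (Fin m) K).toMonoidHom p.1.2 * ρ p.1.1
  map_one' := by simp
  map_mul' p q := by
    have hc : ∀ (c : Kˣ) (A : GL (Fin m) K), Units.map (Matrix.scalar (Fin m) : K →+* Matrix (Fin m) (Fin m) K).toMonoidHom c * A =
        A * Units.map (Matrix.scalar (Fin m) : K →+* Matrix (Fin m) (Fin m) K).toMonoidHom c := by
      intro c A
      apply Units.ext
      exact (Matrix.scalar_commute (c : K) (fun r => mul_comm _ _) A.1).eq
    simp only [Subgroup.coe_mul, Prod.snd_mul, Prod.fst_mul, map_mul]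
    rw [mul_assoc, mul_assoc, ← mul_assoc (ρ p.1.1), ← hc q.1.2 (ρ p.1.1), mul_assoc]

theorem rtw_val (ρ : G →* GL (Fin m) K) (p : (dlt ρ).ker) : (rtw ρ p).1 = (p.1.2 : K) • (ρ p.1.1).1 := by
  change Matrix.scalar (Fin m) (p.1.2 : K) * (ρ p.1.1).1 = _
  rw [Matrix.scalar_apply, Matrix.smul_eq_diagonal_mul]

theorem rtw_det (ρ : G →* GL (Fin m) K) (p : (dlt ρ).ker) : (rtw ρ p).1.det = 1 := by
  rw [rtw_val, Matrix.det_smul]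
  have := p.2
  rw [MonoidHom.mem_ker, dlt_apply] at this
  have := congrArg Units.val this
  simpa using this

def ptw (ρ : G →* GL (Fin m) K) : (dlt ρ).ker →* G := (MonoidHom.fst G Kˣ).comp (Subgroup.subtype _)

theorem ptw_apply (ρ : G →* GL (Fin m) K) (p : (dlt ρ).ker) : ptw ρ p = p.1.1 := rfl

variable [IsAlgClosed K]

theorem ptw_surj (hm : 0 < m) (ρ : G →* GL (Fin m) K) : Function.Surjective (ptw ρ) := by
  intro g
  obtain ⟨z, hz⟩ := IsAlgClosed.exists_pow_nat_eq ((GeneralLinearGroup.det (ρ g))⁻¹ : Kˣ).1 hm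
  have hz0 : z ≠ 0 := by
    rintro rfl
    rw [zero_pow hm.ne'] at hz
    exact Units.ne_zero _ hz.symm
  refine ⟨⟨(g, Units.mk0 z hz0), ?_⟩, rfl⟩
  rw [MonoidHom.mem_ker, dlt_apply]
  have : (Units.mk0 z hz0) ^ m = (GeneralLinearGroup.det (ρ g))⁻¹ := Units.ext (by simpa using hz)
  rw [this, inv_mul_cancel]

theorem strIrr_tw (hm : 0 < m) (ρ : G →* GL (Fin m) K) (hρ : StrIrr ρ) : StrIrr (rtw ρ) := by
  intro H hH V hV
  refine hρ (H.map (ptw ρ)) ⟨fun h0 => hH.index_ne_zero ?_⟩ V ?_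
  · exact Nat.eq_zero_of_zero_dvd (h0 ▸ Subgroup.index_map_dvd H (ptw_surj hm ρ))
  · rintro _ ⟨p, hp, rfl⟩ v hv
    have h1 := hV p hp v hv
    rw [rtw_val, Matrix.smul_mulVec] at h1
    have h2 := V.smul_mem ((p.1.2⁻¹ : Kˣ) : K) h1
    rwa [smul_smul, Units.inv_mul, one_smul] at h2

def symTw (hm : 0 < m) (ρ : G →* GL (Fin m) K) (S : SymGen G) : SymGen (dlt ρ).ker where
  S := ptw ρ ⁻¹' S.S
  fin := by
    refine Set.Finite.preimage' S.fin fun g _ => ?_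
    classical
    refine Set.Finite.of_injOn (f := fun p : (dlt ρ).ker => (p.1.2 : K))
      (t := ((Polynomial.nthRoots m ((GeneralLinearGroup.det (ρ g))⁻¹ : Kˣ).1).toFinset : Set K)) ?_ ?_
      (Finset.finite_toSet _)
    · intro p hp
      have hp' : p.1.1 = g := hp
      have := p.2
      rw [MonoidHom.mem_ker, dlt_apply, hp'] at this
      simp only [Finset.mem_coe, Multiset.mem_toFinset, Polynomial.mem_nthRoots hm]
      rw [← Units.val_pow_eq_pow_val, eq_inv_of_mul_eq_one_left this]
    · intro p hp q hq h
      have hp' : p.1.1 = g := hp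
      have hq' : q.1.1 = g := hq
      exact Subtype.ext (Prod.ext (hp'.trans hq'.symm) (Units.ext h))
  one := by simpa using S.one
  inv := fun s hs => by
    have := S.inv _ hs
    simpa using this
  gen := by
    rw [eq_top_iff]
    have key : ∀ g, ∀ p : (dlt ρ).ker, ptw ρ p = g → p ∈ Subgroup.closure (ptw ρ ⁻¹' S.S) := by
      intro g
      induction g using S.induct with
      | h1 =>
        intro p hp
        exact Subgroup.subset_closure (by simpa [hp] using S.one)
      | hm s hs g ih =>
        intro p hp
        obtain ⟨q, hq⟩ := ptw_surj hm ρ s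
        have h1 : q ∈ Subgroup.closure (ptw ρ ⁻¹' S.S) := Subgroup.subset_closure (by simpa [hq] using hs)
        have h2 := ih (q⁻¹ * p) (by rw [map_mul, map_inv, hp, hq]; group)
        simpa using mul_mem h1 h2
    exact fun p _ => key _ p rfl

theorem thm_M {G : Type*} [Group G] (hG : Group.FG G) {K : Type*} [Field K] [IsAlgClosed K]
    {m : ℕ} (hm : 2 ≤ m) (ρ : G →* GL (Fin m) K) (hρ : StrIrr ρ) :
    ∃ N, ∀ S : SymGen G, ∃ a : Fin 2 → G, (∀ j, a j ∈ S.S ^ N) ∧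
      Function.Injective (FreeGroup.lift a) := by
  have hm0 : 0 < m := by omega
  obtain ⟨S0⟩ := exists_symgen hG
  obtain ⟨N, hN⟩ := thm_sl (fg_symgen (symTw hm0 ρ S0)) hm (rtw ρ) (rtw_det ρ) (strIrr_tw hm0 ρ hρ)
  refine ⟨N, fun S => ?_⟩
  obtain ⟨a, ha, hinj⟩ := hN (symTw hm0 ρ S)
  refine ⟨fun j => ptw ρ (a j), fun j => ?_, ?_⟩
  · have h1 : ptw ρ (a j) ∈ ptw ρ '' ((symTw hm0 ρ S).S ^ N) := ⟨_, ha j, rfl⟩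
    rw [Set.image_pow] at h1
    exact Set.pow_subset_pow_left (Set.image_subset_iff.2 fun x hx => hx) h1
  · have he : (FreeGroup.lift fun j => ptw ρ (a j)) = (ptw ρ).comp (FreeGroup.lift a) := by
      ext1 j
      simp
    rw [he, injective_iff_map_eq_one]
    intro w hw
    rw [MonoidHom.comp_apply] at hw
    have h1 : (FreeGroup.lift a w) ^ m = 1 := by
      set p := FreeGroup.lift a w with hp
      have h2 : p.1.1 = 1 := hw
      have h3 := p.2
      rw [MonoidHom.mem_ker, dlt_apply, h2, map_one, map_one, mul_one] at h3
      apply Subtype.ext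
      apply Prod.ext
      · simp [h2]
      · simpa using h3
    rw [← map_pow] at h1
    have h2 : w ^ m = 1 := (injective_iff_map_eq_one _).1 hinj _ h1
    exact (pow_eq_one_iff_left hm0.ne').1 h2

end tw

end UTA

end

section
open Matrix Pointwise
open Filter Topology
namespace UTA

section der
variable {Γ : Type*} [Group Γ]

def der (A : Subgroup Γ) : ℕ → Subgroup Γ
  | 0 => A
  | j + 1 => ⁅der A j, der A j⁆

theorem der_anti (A : Subgroup Γ) {j j' : ℕ} (h : j ≤ j') : der A j' ≤ der A j := by
  induction h with
  | refl => exact le_rfl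
  | step _ ih => exact (Subgroup.commutator_le_self _).trans ih

theorem der_mono {A B : Subgroup Γ} (h : A ≤ B) (j : ℕ) : der A j ≤ der B j := by
  induction j with
  | zero => exact h
  | succ j ih => exact Subgroup.commutator_mono ih ih

theorem der_map {Δ : Type*} [Group Δ] (f : Δ →* Γ) (A : Subgroup Δ) (j : ℕ) :
    (der A j).map f = der (A.map f) j := by
  induction j with
  | zero => rfl
  | succ j ih => change Subgroup.map f ⁅_, _⁆ = ⁅_, _⁆; rw [Subgroup.map_commutator, ih]

theorem derivedSeries_der (Δ : Type*) [Group Δ] (j : ℕ) : derivedSeries Δ j = der ⊤ j := by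
  induction j with
  | zero => rfl
  | succ j ih => rw [derivedSeries_succ, ih]; rfl

theorem solvable_of_der {A : Subgroup Γ} {j : ℕ} (h : der A j = ⊥) : IsSolvable A := by
  refine ⟨⟨j, ?_⟩⟩
  rw [derivedSeries_der]
  apply Subgroup.map_injective A.subtype_injective
  rw [der_map, ← MonoidHom.range_eq_map, Subgroup.range_subtype, h, Subgroup.map_bot]

def QS {X : Type*} [Monoid X] (ρ : Γ →* X) : Prop :=
  ∃ H : Subgroup Γ, H.FiniteIndex ∧ ∃ j, der H j ≤ ρ.ker

theorem QS_combine {X X1 X2 : Type*} [Monoid X] [Monoid X1] [Monoid X2] (ρ : Γ →* X) (ρ1 : Γ →* X1)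
    (ρ2 : Γ →* X2) (h1 : QS ρ1) (h2 : QS ρ2)
    (hc : ∀ g h, ρ1 g = 1 → ρ2 g = 1 → ρ1 h = 1 → ρ2 h = 1 → ρ (g * h) = ρ (h * g)) : QS ρ := by
  obtain ⟨H1, hH1, j1, hj1⟩ := h1
  obtain ⟨H2, hH2, j2, hj2⟩ := h2
  refine ⟨H1 ⊓ H2, inferInstance, max j1 j2 + 1, ?_⟩
  have k1 : der (H1 ⊓ H2) (max j1 j2) ≤ ρ1.ker :=
    (der_anti _ (le_max_left _ _)).trans ((der_mono inf_le_left _).trans hj1)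
  have k2 : der (H1 ⊓ H2) (max j1 j2) ≤ ρ2.ker :=
    (der_anti _ (le_max_right _ _)).trans ((der_mono inf_le_right _).trans hj2)
  change ⁅_, _⁆ ≤ _
  rw [Subgroup.commutator_le]
  intro g hg h hh
  have e := hc g h (k1 hg) (k2 hg) (k1 hh) (k2 hh)
  rw [MonoidHom.mem_ker, commutatorElement_def, mul_assoc, map_mul, e, ← map_mul]
  simp [mul_assoc]

theorem fi_map {Δ : Type*} [Group Δ] (f : Δ →* Γ) (hf : Function.Injective f) [f.range.FiniteIndex]
    (H : Subgroup Δ) [hH : H.FiniteIndex] : (H.map f).FiniteIndex := by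
  refine ⟨?_⟩
  rw [Subgroup.index_map_of_injective H hf]
  exact mul_ne_zero hH.index_ne_zero Subgroup.FiniteIndex.index_ne_zero

theorem QS_sub {X : Type*} [Monoid X] (ρ : Γ →* X) (H : Subgroup Γ) [H.FiniteIndex]
    (h : QS (ρ.comp H.subtype)) : QS ρ := by
  obtain ⟨A, hA, j, hj⟩ := h
  haveI : H.subtype.range.FiniteIndex := by rwa [Subgroup.range_subtype]
  refine ⟨A.map H.subtype, fi_map _ H.subtype_injective A, j, ?_⟩
  rw [← der_map]
  rintro _ ⟨x, hx, rfl⟩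
  exact hj hx

end der

def Alt2 (K : Type*) [Field K] (Γ : Type u) [Group Γ] : Prop :=
  ∃ (Δ : Type u) (_ : Group Δ) (f : Δ →* Γ), Function.Injective f ∧ f.range.FiniteIndex ∧
    ∃ m, 2 ≤ m ∧ ∃ σ : Δ →* GL (Fin m) K, StrIrr σ

theorem Alt2_sub {K : Type*} [Field K] {Γ : Type u} [Group Γ] (H : Subgroup Γ) [H.FiniteIndex]
    (h : Alt2 K H) : Alt2 K Γ := by
  obtain ⟨Δ, _, f, hf, hfi, r⟩ := h
  refine ⟨Δ, _, H.subtype.comp f, H.subtype_injective.comp hf, ?_, r⟩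
  haveI : H.subtype.range.FiniteIndex := by rwa [Subgroup.range_subtype]
  have := fi_map H.subtype H.subtype_injective f.range
  rwa [MonoidHom.map_range] at this

theorem partI {K : Type*} [Field K] (n : ℕ) : ∀ (Γ : Type u) [Group Γ] (V : Type v) [AddCommGroup V]
    [Module K V] [FiniteDimensional K V] (ρ : Γ →* Module.End K V), Module.finrank K V ≤ n →
    QS ρ ∨ Alt2 K Γ := by
  induction n with
  | zero =>
    intro Γ _ V _ _ _ ρ hn
    left
    refine ⟨⊤, inferInstance, 0, fun g _ => ?_⟩
    have : Subsingleton V := Module.finrank_zero_iff.1 (Nat.le_zero.1 hn)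
    exact LinearMap.ext fun v => Subsingleton.elim _ _
  | succ n ih =>
    intro Γ _ V _ _ _ ρ hn
    by_cases h1 : Module.finrank K V ≤ 1
    · left
      refine ⟨⊤, inferInstance, 1, ?_⟩
      change ⁅_, _⁆ ≤ _
      obtain ⟨v, hv⟩ := finrank_le_one_iff.1 h1
      rw [Subgroup.commutator_le]
      intro g _ h _
      have e : ρ (g * h) = ρ (h * g) := by
        ext w
        obtain ⟨c, rfl⟩ := hv w
        obtain ⟨a, ha⟩ := hv (ρ g v)
        obtain ⟨b, hb⟩ := hv (ρ h v)
        simp only [map_mul, Module.End.mul_apply, map_smul, ← ha, ← hb]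
        rw [smul_comm a b]
      rw [MonoidHom.mem_ker, commutatorElement_def, mul_assoc, map_mul, e, ← map_mul]
      simp [mul_assoc]
    push Not at h1
    by_cases hirr : ∀ H : Subgroup Γ, H.FiniteIndex → ∀ W : Submodule K V,
      (∀ h ∈ H, ∀ v ∈ W, ρ h v ∈ W) → W = ⊥ ∨ W = ⊤
    · right
      let b := Module.finBasis K V
      let φ : Γ →* Matrix (Fin (Module.finrank K V)) (Fin (Module.finrank K V)) K :=
        ((LinearMap.toMatrixAlgEquiv b : _ ≃ₐ[K] _) : Module.End K V →* _).comp ρ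
      have hφ : ∀ g v, φ g *ᵥ (b.equivFun v) = b.equivFun (ρ g v) := by
        intro g v
        exact LinearMap.toMatrix_mulVec_repr b b (ρ g) v
      refine ⟨Γ, _, MonoidHom.id Γ, Function.injective_id, ?_, _, h1, φ.toHomUnits, ?_⟩
      · rw [MonoidHom.range_eq_top.2 Function.surjective_id]; infer_instance
      · intro H hH W hW
        have h2 := hirr H hH (W.comap b.equivFun.toLinearMap) (by
          intro h hh v hv
          have := hW h hh _ hv
          change φ h *ᵥ (b.equivFun v) ∈ W at this
          rw [hφ] at this
          exact this)
        rcases h2 with h2 | h2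
        · left
          rw [eq_bot_iff]
          intro x hx
          have : b.equivFun.symm x ∈ W.comap b.equivFun.toLinearMap := by
            rw [Submodule.mem_comap]
            change b.equivFun (b.equivFun.symm x) ∈ W
            rwa [LinearEquiv.apply_symm_apply]
          rw [h2, Submodule.mem_bot] at this
          rwa [LinearEquiv.map_eq_zero_iff] at this
        · right
          rw [eq_top_iff]
          intro x _
          have : b.equivFun.symm x ∈ W.comap b.equivFun.toLinearMap := by
            rw [h2]; trivial
          rw [Submodule.mem_comap] at this
          change b.equivFun (b.equivFun.symm x) ∈ W at this
          rwa [LinearEquiv.apply_symm_apply] at this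
    · push Not at hirr
      obtain ⟨H, hH, W, hW, hW0, hW1⟩ := hirr
      have hH' : ∀ h : H, ∀ v ∈ W, ρ h v ∈ W := fun h v hv => hW h h.2 v hv
      let ρ1 : H →* Module.End K W :=
        { toFun := fun h => (ρ h).restrict (hH' h)
          map_one' := by ext v; simp
          map_mul' := fun x y => by ext v; simp }
      let ρ2 : H →* Module.End K (V ⧸ W) :=
        { toFun := fun h => W.mapQ W (ρ h) (hH' h)
          map_one' := by ext v; simp
          map_mul' := fun x y => by ext v; simp }
      have hf1 : Module.finrank K W < Module.finrank K V := Submodule.finrank_lt hW1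
      have hf2 : Module.finrank K (V ⧸ W) < Module.finrank K V := by
        have := Submodule.finrank_quotient_add_finrank W
        have : 0 < Module.finrank K W := by
          rw [Nat.pos_iff_ne_zero]
          intro h0
          exact hW0 (Submodule.finrank_eq_zero.1 h0)
        omega
      rcases ih H W ρ1 (by omega) with q1 | q1
      swap
      · exact Or.inr (Alt2_sub H q1)
      rcases ih H (V ⧸ W) ρ2 (by omega) with q2 | q2
      swap
      · exact Or.inr (Alt2_sub H q2)
      left
      apply QS_sub ρ H
      refine QS_combine _ ρ1 ρ2 q1 q2 ?_
      intro g h g1 g2 h1 h2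
      have key1 : ∀ k : H, ρ1 k = 1 → ∀ v ∈ W, ρ k v = v := by
        intro k hk v hv
        have := congrArg Subtype.val (LinearMap.congr_fun hk ⟨v, hv⟩)
        simpa [ρ1] using this
      have key2 : ∀ k : H, ρ2 k = 1 → ∀ v, ρ k v - v ∈ W := by
        intro k hk v
        have := LinearMap.congr_fun hk (Submodule.Quotient.mk v)
        rw [← Submodule.Quotient.eq]
        simpa [ρ2] using! this
      ext v
      simp only [MonoidHom.comp_apply, Subgroup.coe_subtype, map_mul,
        Module.End.mul_apply]
      have a1 := key1 g g1 _ (key2 h h2 v)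
      have a2 := key1 h h1 _ (key2 g g2 v)
      rw [map_sub] at a1 a2
      have b1 : ρ g (ρ h v) = ρ h v - v + ρ g v := by rw [← a1]; abel
      have b2 : ρ h (ρ g v) = ρ g v - v + ρ h v := by rw [← a2]; abel
      rw [b1, b2]; abel

end UTA

end

section
open Matrix Pointwise
open Filter Topology
namespace UTA

theorem coset_cover {Γ : Type*} [Group Γ] (H : Subgroup Γ) [H.FiniteIndex] (S : SymGen Γ) (g : Γ) :
    ∃ r ∈ S.S ^ H.index, r⁻¹ * g ∈ H := by
  let C : ℕ → Set (Γ ⧸ H) := fun k => (QuotientGroup.mk : Γ → Γ ⧸ H) '' (S.S ^ k)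
  have hmono : ∀ k, C k ⊆ C (k + 1) := fun k => Set.image_mono (S.mono (Nat.le_succ k))
  have hst : ∀ k, C k = C (k + 1) → C k = Set.univ := by
    intro k hk
    have key : ∀ g : Γ, (QuotientGroup.mk g : Γ ⧸ H) ∈ C k := by
      intro g
      induction g using S.induct with
      | h1 => exact ⟨1, S.mono (Nat.zero_le k) (by simp), rfl⟩
      | hm s hs g ih =>
        obtain ⟨r, hr, hrg⟩ := ih
        rw [hk]
        refine ⟨s * r, by rw [pow_succ']; exact Set.mul_mem_mul hs hr, ?_⟩
        rw [QuotientGroup.eq] at hrg ⊢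
        simpa [mul_assoc] using hrg
    rw [Set.eq_univ_iff_forall]
    intro q
    obtain ⟨g, rfl⟩ := QuotientGroup.mk_surjective q
    exact key g
  have hcard : ∀ k, k + 1 ≤ (C k).ncard ∨ C k = Set.univ := by
    intro k
    induction k with
    | zero => left; simp [C]
    | succ k ih =>
      by_cases h : C k = C (k + 1)
      · right; rw [← h]; exact hst k h
      · rcases ih with ih | ih
        · left
          have := Set.ncard_lt_ncard ((hmono k).ssubset_of_ne h) (Set.toFinite _)
          omega
        · right
          exact Set.eq_univ_of_univ_subset (ih ▸ hmono k)
  have hall : C H.index = Set.univ := by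
    rcases hcard H.index with h | h
    · have h2 : (C H.index).ncard ≤ H.index := by
        have := Set.ncard_le_card (C H.index)
        rwa [← Subgroup.index_eq_card] at this
      omega
    · exact h
  have : (QuotientGroup.mk g : Γ ⧸ H) ∈ C H.index := by rw [hall]; trivial
  obtain ⟨r, hr, hrg⟩ := this
  exact ⟨r, hr, QuotientGroup.eq.1 hrg⟩

def schreier {Γ Δ : Type*} [Group Γ] [Group Δ] (f : Δ →* Γ) (hf : Function.Injective f)
    (hfi : f.range.FiniteIndex) (S : SymGen Γ) : SymGen Δ where
  S := f ⁻¹' (S.S ^ (2 * f.range.index + 1))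
  fin := (S.finpow _).preimage hf.injOn
  one := by
    rw [Set.mem_preimage, map_one]
    exact S.mono (Nat.zero_le _) (by simp)
  inv := fun s hs => by
    rw [Set.mem_preimage, map_inv]
    exact S.inv_pow hs
  gen := by
    set d := f.range.index with hd
    set T := f ⁻¹' (S.S ^ (2 * d + 1)) with hT
    have key : ∀ g : Γ, ∃ r ∈ S.S ^ d, ∃ t ∈ Subgroup.closure T, g = r * f t := by
      intro g
      induction g using S.induct with
      | h1 => exact ⟨1, S.mono (Nat.zero_le _) (by simp), 1, one_mem _, by simp⟩
      | hm s hs g ih =>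
        obtain ⟨r, hr, t, ht, rfl⟩ := ih
        obtain ⟨r', hr', ⟨t', ht'⟩⟩ := coset_cover f.range S (s * r)
        refine ⟨r', hr', t' * t, mul_mem (Subgroup.subset_closure ?_) ht, ?_⟩
        · rw [hT, Set.mem_preimage, ht']
          have : S.S ^ (2 * d + 1) = S.S ^ d * (S.S * S.S ^ d) := by
            rw [← pow_succ', ← pow_add]; congr 1; ring
          rw [this]
          exact Set.mul_mem_mul (S.inv_pow hr') (Set.mul_mem_mul hs hr)
        · rw [map_mul, ht']; group
    rw [eq_top_iff]
    intro x _
    obtain ⟨r, hr, t, ht, h⟩ := key (f x)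
    have h1 : x * t⁻¹ ∈ Subgroup.closure T := by
      apply Subgroup.subset_closure
      rw [hT, Set.mem_preimage, map_mul, map_inv, h, mul_inv_cancel_right]
      exact S.mono (by omega) hr
    simpa using mul_mem h1 ht

theorem Alt2_free {K : Type*} [Field K] [IsAlgClosed K] {Γ : Type u} [Group Γ] (hΓ : Group.FG Γ)
    (h : Alt2 K Γ) : ∃ N, ∀ S : SymGen Γ, ∃ a : Fin 2 → Γ, (∀ j, a j ∈ S.S ^ N) ∧
      Function.Injective (FreeGroup.lift a) := by
  obtain ⟨Δ, _, f, hf, hfi, m, hm, σ, hσ⟩ := h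
  obtain ⟨S0⟩ := exists_symgen hΓ
  obtain ⟨N, hN⟩ := thm_M (fg_symgen (schreier f hf hfi S0)) hm σ hσ
  refine ⟨(2 * f.range.index + 1) * N, fun S => ?_⟩
  obtain ⟨a, ha, hinj⟩ := hN (schreier f hf hfi S)
  refine ⟨fun j => f (a j), fun j => ?_, ?_⟩
  · have h1 : f (a j) ∈ f '' ((schreier f hf hfi S).S ^ N) := ⟨_, ha j, rfl⟩
    rw [Set.image_pow] at h1
    rw [pow_mul]
    exact Set.pow_subset_pow_left (Set.image_subset_iff.2 fun x hx => hx) h1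
  · have he : (FreeGroup.lift fun j => f (a j)) = f.comp (FreeGroup.lift a) := by
      ext1 j
      simp
    rw [he, MonoidHom.coe_comp]
    exact hf.comp hinj

theorem final {K : Type u} [Field K] {n : ℕ} (Γ : Subgroup (GL (Fin n) K)) (hfg : Group.FG Γ)
    (hns : ¬ ∃ H : Subgroup Γ, H.FiniteIndex ∧ IsSolvable ↥H) :
    ∃ N, ∀ S : SymGen Γ, ∃ a : Fin 2 → Γ, (∀ j, a j ∈ S.S ^ N) ∧
      Function.Injective (FreeGroup.lift a) := by
  let F := AlgebraicClosure K
  let e : Matrix (Fin n) (Fin n) F ≃ₐ[F] Module.End F (Fin n → F) := Matrix.toLinAlgEquiv'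
  let ρ : Γ →* Module.End F (Fin n → F) :=
    (e : Matrix (Fin n) (Fin n) F →* Module.End F (Fin n → F)).comp ((Units.coeHom _).comp
      ((GeneralLinearGroup.map (n := Fin n) (algebraMap K F)).comp Γ.subtype))
  have hρ : Function.Injective ρ := by
    intro x y h
    have h1 : (x.1.1).map (algebraMap K F) = (y.1.1).map (algebraMap K F) := e.injective h
    exact Subtype.ext (Units.ext (Matrix.map_injective (algebraMap K F).injective h1))
  rcases partI (K := F) _ Γ (Fin n → F) ρ le_rfl with h | h
  · exfalso
    obtain ⟨H, hH, j, hj⟩ := h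
    refine hns ⟨H, hH, solvable_of_der (j := j) ?_⟩
    rw [eq_bot_iff]
    intro x hx
    exact hρ ((hj hx).trans (map_one ρ).symm)
  · exact Alt2_free hfg h

end UTA

end

/-- **Uniform Tits alternative.** If `Γ ≤ GL_n(K)` is finitely generated and not virtually
solvable, then there is `N` such that for every finite symmetric generating set `S` of `Γ`
containing `1`, the ball `S ^ N` contains two elements generating a free group of rank 2. -/
theorem uniform_tits_alternative {K : Type*} [Field K] {n : ℕ}
    (Γ : Subgroup (GL (Fin n) K)) (hfg : Group.FG Γ)
    (hns : ¬ ∃ H : Subgroup Γ, H.FiniteIndex ∧ IsSolvable ↥H) :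
    ∃ N : ℕ, ∀ S : Finset Γ, (1 : Γ) ∈ S → (∀ s ∈ S, s⁻¹ ∈ S) →
      Subgroup.closure (S : Set Γ) = ⊤ →
      ∃ a ∈ (S : Set Γ) ^ N, ∃ b ∈ (S : Set Γ) ^ N,
        Function.Injective (FreeGroup.lift ![a, b] : FreeGroup (Fin 2) →* Γ) := by
  obtain ⟨N, hN⟩ := UTA.final Γ hfg hns
  refine ⟨N, fun S h1 hinv hgen => ?_⟩
  obtain ⟨a, ha, hinj⟩ := hN ⟨S, S.finite_toSet, h1, hinv, hgen⟩
  refine ⟨a 0, ha 0, a 1, ha 1, ?_⟩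
  have : ![a 0, a 1] = a := by
    funext j
    fin_cases j <;> rfl
  rw [this]
  exact hinj
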